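/- Let r, s, k be natural numbers with k > r ≥ 1, and let κ be an integer satisfying 1 ≤ κ ≤ (k−r+2)/2. Suppose that 1 ≤ s ≤ k(k+1)/2 − (k(k+1)−r(r−1))/(4κ). Then for each ε > 0 one has I_{s,k,r}(X) ≪ X^{s+(r−1)(1−1/(2κ))+ε}. -/

import Mathlib

open Finset

/-- `vinogradovSliceCount s k r X` is the number of integral solutions of the system
`x_1^j + ⋯ + x_s^j = y_1^j + ⋯ + y_s^j` for `1 ≤ j ≤ k`, `j ≠ r`, with `1 ≤ x_i, y_i ≤ X`. -/
noncomputable def vinogradovSliceCount (s k r : ℕ) (X : ℝ) : ℕ :=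
  {p : (Fin s → ℤ) × (Fin s → ℤ) |
      (∀ i, 1 ≤ p.1 i ∧ (p.1 i : ℝ) ≤ X) ∧
      (∀ i, 1 ≤ p.2 i ∧ (p.2 i : ℝ) ≤ X) ∧
      ∀ j ∈ Finset.Icc 1 k, j ≠ r →
        ∑ i, (p.1 i) ^ j = ∑ i, (p.2 i) ^ j}.ncard

section PartA
theorem holder_gen {α ι : Type*} (s : Finset α) (t : Finset ι) (w : ι → ℝ) (u : ι → α → ℝ)
    (hw : ∀ i ∈ t, 0 ≤ w i) (hw1 : ∑ i ∈ t, w i = 1) (hu : ∀ i ∈ t, ∀ x ∈ s, 0 ≤ u i x) :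
    ∑ x ∈ s, ∏ i ∈ t, (u i x) ^ (w i) ≤ ∏ i ∈ t, (∑ x ∈ s, u i x) ^ (w i) := by
  by_cases h0 : ∃ i ∈ t, w i ≠ 0 ∧ ∑ x ∈ s, u i x = 0
  · obtain ⟨i, hi, hwi, hUi⟩ := h0
    have : ∀ x ∈ s, u i x = 0 := (Finset.sum_eq_zero_iff_of_nonneg (hu i hi)).1 hUi
    rw [Finset.sum_eq_zero]
    · exact Finset.prod_nonneg fun j hj => Real.rpow_nonneg (Finset.sum_nonneg (hu j hj)) _
    · intro x hx
      apply Finset.prod_eq_zero hi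
      rw [this x hx, Real.zero_rpow hwi]
  · push Not at h0
    set U : ι → ℝ := fun i => ∑ x ∈ s, u i x with hU
    have hUn : ∀ i ∈ t, 0 ≤ U i := fun i hi => Finset.sum_nonneg (hu i hi)
    have key : ∀ x ∈ s, ∏ i ∈ t, (u i x) ^ (w i) ≤
        (∏ i ∈ t, (U i) ^ (w i)) * ∑ i ∈ t, w i * (u i x / U i) := by
      intro x hx
      have h1 : ∏ i ∈ t, (u i x) ^ (w i) =
          (∏ i ∈ t, (U i) ^ (w i)) * ∏ i ∈ t, (u i x / U i) ^ (w i) := by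
        rw [← Finset.prod_mul_distrib]
        apply Finset.prod_congr rfl
        intro i hi
        by_cases hwi : w i = 0
        · simp [hwi]
        · have := h0 i hi hwi
          rw [← Real.mul_rpow (hUn i hi) (div_nonneg (hu i hi x hx) (hUn i hi)),
            mul_div_cancel₀ _ this]
      rw [h1]
      apply mul_le_mul_of_nonneg_left
      · exact Real.geom_mean_le_arith_mean_weighted t w _ hw hw1
          (fun i hi => div_nonneg (hu i hi x hx) (hUn i hi))
      · exact Finset.prod_nonneg fun j hj => Real.rpow_nonneg (hUn j hj) _
    refine (Finset.sum_le_sum key).trans ?_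
    rw [← Finset.mul_sum, Finset.sum_comm]
    have : ∑ i ∈ t, ∑ x ∈ s, w i * (u i x / U i) ≤ 1 := by
      rw [← hw1]
      apply Finset.sum_le_sum
      intro i hi
      rw [← Finset.mul_sum, ← Finset.sum_div]
      exact mul_le_of_le_one_right (hw i hi) (div_self_le_one _)
    exact mul_le_of_le_one_right
      (Finset.prod_nonneg fun j hj => Real.rpow_nonneg (hUn j hj) _) this

theorem holder_two {α : Type*} (s : Finset α) (θ : ℝ) (h0 : 0 ≤ θ) (h1 : θ ≤ 1) (u v : α → ℝ)
    (hu : ∀ x ∈ s, 0 ≤ u x) (hv : ∀ x ∈ s, 0 ≤ v x) :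
    ∑ x ∈ s, (u x) ^ (1 - θ) * (v x) ^ θ ≤ (∑ x ∈ s, u x) ^ (1 - θ) * (∑ x ∈ s, v x) ^ θ := by
  have := holder_gen s (Finset.univ : Finset (Fin 2)) ![1 - θ, θ] ![u, v]
    (by intro i _; fin_cases i <;> simp <;> linarith)
    (by simp [Fin.sum_univ_two])
    (by intro i _; fin_cases i <;> simpa)
  simpa [Fin.prod_univ_two] using this

theorem mink_aux {α β : Type*} (s : Finset α) (t : Finset β) (p : ℝ) (hp : 1 ≤ p)
    (f : β → α → ℝ) (hf : ∀ J ∈ t, ∀ x ∈ s, 0 ≤ f J x) :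
    (∑ x ∈ s, (∑ J ∈ t, f J x) ^ p) ^ (1 / p) ≤ ∑ J ∈ t, (∑ x ∈ s, (f J x) ^ p) ^ (1 / p) := by
  classical
  have hp0 : p ≠ 0 := by linarith
  induction t using Finset.induction_on with
  | empty => simp [Real.zero_rpow hp0, Real.zero_rpow (inv_ne_zero hp0)]
  | insert J t hJ ih =>
    simp only [Finset.sum_insert hJ]
    refine (Real.Lp_add_le_of_nonneg s hp (hf J (Finset.mem_insert_self _ _)) ?_).trans ?_
    · intro x hx
      exact Finset.sum_nonneg fun K hK => hf K (Finset.mem_insert_of_mem hK) x hx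
    · gcongr
      exact ih fun K hK => hf K (Finset.mem_insert_of_mem hK)

theorem mink {α β : Type*} (s : Finset α) (t : Finset β) (m : ℕ) (hm : 1 ≤ m)
    (w : α → ℝ) (hw : ∀ x ∈ s, 0 ≤ w x)
    (T : β → α → ℝ) (hT : ∀ J ∈ t, ∀ x ∈ s, 0 ≤ T J x) :
    ∑ x ∈ s, w x * (∑ J ∈ t, T J x) ^ m ≤
      (∑ J ∈ t, (∑ x ∈ s, w x * (T J x) ^ m) ^ (1 / (m : ℝ))) ^ m := by
  have hm0 : (m : ℝ) ≠ 0 := by positivity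
  have hm1 : (1 : ℝ) ≤ m := by exact_mod_cast hm
  have h := mink_aux s t (m : ℝ) hm1 (fun J x => (w x) ^ (1 / (m : ℝ)) * T J x)
    (fun J hJ x hx => mul_nonneg (Real.rpow_nonneg (hw x hx) _) (hT J hJ x hx))
  have e : ∀ x ∈ s, ∀ y : ℝ, ((w x) ^ (1 / (m : ℝ)) * y) ^ m = w x * y ^ m := by
    intro x hx y
    rw [mul_pow, ← Real.rpow_natCast, ← Real.rpow_mul (hw x hx), one_div_mul_cancel hm0,
      Real.rpow_one]
  have e1 : ∑ x ∈ s, (∑ J ∈ t, (w x) ^ (1 / (m : ℝ)) * T J x) ^ (m : ℝ) =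
      ∑ x ∈ s, w x * (∑ J ∈ t, T J x) ^ m := by
    apply Finset.sum_congr rfl
    intro x hx
    rw [← Finset.mul_sum, Real.rpow_natCast, e x hx]
  have e2 : ∑ J ∈ t, (∑ x ∈ s, ((w x) ^ (1 / (m : ℝ)) * T J x) ^ (m : ℝ)) ^ (1 / (m : ℝ)) =
      ∑ J ∈ t, (∑ x ∈ s, w x * (T J x) ^ m) ^ (1 / (m : ℝ)) := by
    apply Finset.sum_congr rfl
    intro J hJ
    congr 1
    apply Finset.sum_congr rfl
    intro x hx
    rw [Real.rpow_natCast, e x hx]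
  rw [e1, e2] at h
  have hn : 0 ≤ ∑ x ∈ s, w x * (∑ J ∈ t, T J x) ^ m :=
    Finset.sum_nonneg fun x hx => mul_nonneg (hw x hx)
      (pow_nonneg (Finset.sum_nonneg fun J hJ => hT J hJ x hx) _)
  calc ∑ x ∈ s, w x * (∑ J ∈ t, T J x) ^ m
      = ((∑ x ∈ s, w x * (∑ J ∈ t, T J x) ^ m) ^ (1 / (m : ℝ))) ^ m := by
        rw [← Real.rpow_natCast, ← Real.rpow_mul hn, one_div_mul_cancel hm0, Real.rpow_one]
    _ ≤ _ := pow_le_pow_left₀ (Real.rpow_nonneg hn _) h m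

/-! ### Partition into residue classes -/

/-- the residue classes of `s` modulo `q` (according to `ξ`) -/
def parts (q : ℕ) (ξ : ℤ → ℤ) (s : Finset ℤ) : Finset (Finset ℤ) :=
  s.image (fun i => s.filter (fun i' => (q : ℤ) ∣ ξ i' - ξ i))

theorem parts_congr {q q' : ℕ} {ξ ξ' : ℤ → ℤ} {s : Finset ℤ}
    (h : ∀ i ∈ s, ∀ i' ∈ s, ((q : ℤ) ∣ ξ i' - ξ i ↔ (q' : ℤ) ∣ ξ' i' - ξ' i)) :
    parts q ξ s = parts q' ξ' s := by
  unfold parts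
  apply Finset.image_congr
  intro i hi
  apply Finset.filter_congr
  intro i' hi'
  exact h i hi i' hi'

theorem mem_parts {q : ℕ} {ξ : ℤ → ℤ} {s : Finset ℤ} {i : ℤ} (hi : i ∈ s) :
    s.filter (fun i' => (q : ℤ) ∣ ξ i' - ξ i) ∈ parts q ξ s := by
  unfold parts
  rw [Finset.mem_image]
  exact ⟨i, hi, rfl⟩

theorem parts_subset {q : ℕ} {ξ : ℤ → ℤ} {s J : Finset ℤ} (hJ : J ∈ parts q ξ s) : J ⊆ s := by
  unfold parts at hJ
  rw [Finset.mem_image] at hJ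
  obtain ⟨i, _, rfl⟩ := hJ
  exact Finset.filter_subset _ _

theorem parts_rep {q : ℕ} {ξ : ℤ → ℤ} {s J : Finset ℤ} (hJ : J ∈ parts q ξ s) :
    ∃ i ∈ s, i ∈ J ∧ J = s.filter (fun i' => (q : ℤ) ∣ ξ i' - ξ i) := by
  unfold parts at hJ
  rw [Finset.mem_image] at hJ
  obtain ⟨i, hi, rfl⟩ := hJ
  exact ⟨i, hi, by simp [hi], rfl⟩

theorem parts_eq_of_mem {q : ℕ} {ξ : ℤ → ℤ} {s J : Finset ℤ} (hJ : J ∈ parts q ξ s) {i : ℤ}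
    (hi : i ∈ J) : J = s.filter (fun i' => (q : ℤ) ∣ ξ i' - ξ i) := by
  obtain ⟨j, hj, hjJ, rfl⟩ := parts_rep hJ
  rw [Finset.mem_filter] at hi
  apply Finset.filter_congr
  intro x _
  constructor
  · intro h; have := dvd_sub h hi.2; simpa using this
  · intro h; have := dvd_add h hi.2; simpa using this

theorem parts_disjoint {q : ℕ} {ξ : ℤ → ℤ} {s J K : Finset ℤ} (hJ : J ∈ parts q ξ s)
    (hK : K ∈ parts q ξ s) (h : J ≠ K) : Disjoint J K := by
  rw [Finset.disjoint_left]
  intro i hi hi'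
  exact h ((parts_eq_of_mem hJ hi).trans (parts_eq_of_mem hK hi').symm)

theorem parts_biUnion (q : ℕ) (ξ : ℤ → ℤ) (s : Finset ℤ) : (parts q ξ s).biUnion id = s := by
  ext i
  simp only [Finset.mem_biUnion, id]
  constructor
  · rintro ⟨J, hJ, hi⟩; exact parts_subset hJ hi
  · intro hi
    exact ⟨_, mem_parts hi, by simp [hi]⟩

theorem parts_sum {A : Type*} [AddCommMonoid A] (q : ℕ) (ξ : ℤ → ℤ) (s : Finset ℤ) (g : ℤ → A) :
    ∑ J ∈ parts q ξ s, ∑ i ∈ J, g i = ∑ i ∈ s, g i := by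
  conv_rhs => rw [← parts_biUnion q ξ s]
  rw [Finset.sum_biUnion]
  · rfl
  · intro J hJ K hK h
    exact parts_disjoint hJ hK h

theorem parts_nested {q q' : ℕ} (hq : q ∣ q') (ξ : ℤ → ℤ) (s : Finset ℤ) (Φ : Finset ℤ → ℝ) :
    ∑ K ∈ parts q ξ s, ∑ J ∈ parts q' ξ K, Φ J = ∑ J ∈ parts q' ξ s, Φ J := by
  have hq' : (q : ℤ) ∣ (q' : ℤ) := by exact_mod_cast hq
  have key : ∀ K ∈ parts q ξ s, ∀ i ∈ K, K.filter (fun i' => (q' : ℤ) ∣ ξ i' - ξ i) =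
      s.filter (fun i' => (q' : ℤ) ∣ ξ i' - ξ i) := by
    intro K hK i hi
    rw [parts_eq_of_mem hK hi, Finset.filter_filter]
    apply Finset.filter_congr
    intro x _
    exact ⟨fun h => h.2, fun h => ⟨hq'.trans h, h⟩⟩
  have e : parts q' ξ s = (parts q ξ s).biUnion (fun K => parts q' ξ K) := by
    ext J
    simp only [Finset.mem_biUnion]
    constructor
    · intro hJ
      obtain ⟨i, hi, hiJ, rfl⟩ := parts_rep hJ
      have hK : s.filter (fun i' => (q : ℤ) ∣ ξ i' - ξ i) ∈ parts q ξ s :=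
        mem_parts hi
      refine ⟨_, hK, ?_⟩
      have hiK : i ∈ s.filter (fun i' => (q : ℤ) ∣ ξ i' - ξ i) := by simp [hi]
      rw [← key _ hK i hiK]
      exact mem_parts hiK
    · rintro ⟨K, hK, hJ⟩
      obtain ⟨i, hi, hiJ, rfl⟩ := parts_rep hJ
      rw [key K hK i hi]
      exact mem_parts (parts_subset hK hi)
  rw [e, Finset.sum_biUnion]
  intro K hK L hL h
  rw [Function.onFun, Finset.disjoint_left]
  intro J hJ hJ'
  obtain ⟨i, hi, hiJ, _⟩ := parts_rep hJ
  exact (Finset.disjoint_left.1 (parts_disjoint hK hL h)) hi (parts_subset hJ' hiJ)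

theorem parts_mod {q : ℕ} {ξ : ℤ → ℤ} {s J : Finset ℤ} (hJ : J ∈ parts q ξ s) :
    ∃ t : ℤ, (∃ i ∈ s, t = ξ i) ∧ ∀ i ∈ J, (q : ℤ) ∣ ξ i - t := by
  obtain ⟨i, hi, _, rfl⟩ := parts_rep hJ
  exact ⟨ξ i, ⟨i, hi, rfl⟩, fun i' hi' => (Finset.mem_filter.1 hi').2⟩

theorem parts_card (q : ℕ) (hq : 0 < q) (ξ : ℤ → ℤ) (s : Finset ℤ) : (parts q ξ s).card ≤ q := by
  have : NeZero q := ⟨hq.ne'⟩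
  have : (parts q ξ s).card ≤ (Finset.univ : Finset (ZMod q)).card := by
    have e : parts q ξ s ⊆ (Finset.univ : Finset (ZMod q)).image
        (fun c => s.filter (fun i' => ((ξ i' : ZMod q)) = c)) := by
      intro J hJ
      obtain ⟨i, hi, _, rfl⟩ := parts_rep hJ
      rw [Finset.mem_image]
      refine ⟨(ξ i : ZMod q), Finset.mem_univ _, ?_⟩
      apply Finset.filter_congr
      intro x _
      rw [eq_comm, ZMod.intCast_eq_intCast_iff_dvd_sub]
    exact (Finset.card_le_card e).trans Finset.card_image_le
  simpa [ZMod.card] using this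

/-- if `s` lies in a single class modulo `q` then `parts` is trivial. -/
theorem parts_single {q : ℕ} {ξ : ℤ → ℤ} {s : Finset ℤ} (hs : s.Nonempty)
    (h : ∀ i ∈ s, ∀ i' ∈ s, (q : ℤ) ∣ ξ i' - ξ i) : parts q ξ s = {s} := by
  ext J
  rw [Finset.mem_singleton]
  constructor
  · intro hJ
    obtain ⟨i, hi, _, rfl⟩ := parts_rep hJ
    exact Finset.filter_true_of_mem fun x hx => h i hi x hx
  · rintro rfl
    obtain ⟨i, hi⟩ := hs
    have : J = J.filter (fun i' => (q : ℤ) ∣ ξ i' - ξ i) :=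
      (Finset.filter_true_of_mem fun x hx => h i hi x hx).symm
    have h2 := mem_parts (q := q) (ξ := ξ) hi
    rwa [← this] at h2

end PartA

section PartB
open Polynomial
/-- polynomial curves congruent to the moment curve modulo `π` -/
def Cls {R : Type*} [CommRing R] (π : R) {k : ℕ} (γ : Fin k → R[X]) : Prop :=
  ∀ j, ∃ g : R[X], γ j = X ^ (j.1 + 1) + C π * g

/-- matrix of Taylor coefficients -/
noncomputable def Amat {R : Type*} [CommRing R] {l : ℕ} (δ : Fin l → R[X]) (t : R) :
    Matrix (Fin l) (Fin l) R := Matrix.of fun j i => (taylor t (δ j)).coeff (i.1 + 1)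

theorem normalize_curve {R : Type*} [CommRing R] (π : R) {l : ℕ} (δ : Fin l → R[X]) (t : R) (a : ℕ)
    (ha : 1 ≤ a) (hA : IsUnit (Amat δ t).det) :
    ∃ γ : Fin l → R[X], Cls π γ ∧ ∀ ζ j, (δ j).eval (t + π ^ a * ζ) = (δ j).eval t +
      ∑ i : Fin l, Amat δ t j i * π ^ (a * (i.1 + 1)) * (γ i).eval ζ := by
  obtain ⟨D, hD⟩ : ∃ D : ℕ, ∀ j, (taylor t (δ j)).natDegree < D := by
    refine ⟨(Finset.univ.sup fun j => (taylor t (δ j)).natDegree) + 1, fun j => ?_⟩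
    exact Nat.lt_succ_of_le (Finset.le_sup (f := fun j => (taylor t (δ j)).natDegree)
      (Finset.mem_univ j))
  set c : Fin l → ℕ → R := fun j m => (taylor t (δ j)).coeff m with hc
  set B := (Amat δ t)⁻¹ with hB
  have hAB : Amat δ t * B = 1 := Matrix.mul_nonsing_inv _ hA
  refine ⟨fun i => X ^ (i.1 + 1) + ∑ n ∈ range D,
    C (π ^ (a * (l + n - i.1)) * ∑ j, B i j * c j (l + 1 + n)) * X ^ (l + 1 + n), ?_, ?_⟩
  · intro i
    refine ⟨∑ n ∈ range D,
      C (π ^ (a * (l + n - i.1) - 1) * ∑ j, B i j * c j (l + 1 + n)) * X ^ (l + 1 + n), ?_⟩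
    simp only
    rw [Finset.mul_sum]
    congr 1
    apply Finset.sum_congr rfl
    intro n _
    rw [← mul_assoc, ← C_mul, ← mul_assoc, ← pow_succ', Nat.sub_add_cancel]
    have := i.2
    exact Nat.mul_pos ha (by omega)
  · intro ζ j
    have h1 : (δ j).eval (t + π ^ a * ζ) = ∑ m ∈ range (l + 1 + D), c j m * (π ^ a * ζ) ^ m := by
      rw [← eval_eq_sum_range' (p := taylor t (δ j)) (by have := hD j; omega), taylor_eval, add_comm]
    have h0 : c j 0 = (δ j).eval t := by simp [hc]
    rw [h1, Finset.sum_range_add, Finset.sum_range_succ', h0]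
    have h2 : ∀ i : Fin l, Amat δ t j i * π ^ (a * (i.1 + 1)) * eval ζ (X ^ (i.1 + 1) + ∑ n ∈ range D,
        C (π ^ (a * (l + n - i.1)) * ∑ j, B i j * c j (l + 1 + n)) * X ^ (l + 1 + n)) =
        c j (i.1 + 1) * (π ^ a * ζ) ^ (i.1 + 1) + ∑ n ∈ range D, (Amat δ t j i * ∑ j, B i j * c j (l + 1 + n)) *
          (π ^ a * ζ) ^ (l + 1 + n) := by
      intro i
      rw [eval_add, mul_add, eval_finsetSum, Finset.mul_sum]
      congr 1
      · simp [Amat, hc]; ring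
      · apply Finset.sum_congr rfl
        intro n _
        simp only [eval_mul, eval_C, eval_pow, eval_X]
        have e : a * (l + 1 + n) = a * (i.1 + 1) + a * (l + n - i.1) := by
          have := i.2
          rw [← mul_add]; congr 1; omega
        rw [mul_pow, ← pow_mul, e, pow_add]
        ring
    simp only [h2]
    rw [Finset.sum_add_distrib, Finset.sum_comm]
    have h3 : ∀ n ∈ range D, ∑ i, (Amat δ t j i * ∑ j, B i j * c j (l + 1 + n)) *
          (π ^ a * ζ) ^ (l + 1 + n) = c j (l + 1 + n) * (π ^ a * ζ) ^ (l + 1 + n) := by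
      intro n _
      rw [← Finset.sum_mul]
      congr 1
      have : (Amat δ t).mulVec (B.mulVec (fun j => c j (l + 1 + n))) j = c j (l + 1 + n) := by
        rw [Matrix.mulVec_mulVec, hAB, Matrix.one_mulVec]
      simpa [Matrix.mulVec, dotProduct] using this
    rw [Finset.sum_congr rfl h3, ← Fin.sum_univ_eq_sum_range (fun i => c j (i + 1) * (π ^ a * ζ) ^ (i + 1))]
    ring

theorem det_binom {p : ℕ} [Fact p.Prime] (e l : ℕ) (hp : e + l < p) (u : ZMod p)
    (hu : u ≠ 0 ∨ e = 0) :
    (Matrix.of fun j i : Fin l => (((X + C u) ^ (e + j.1 + 1) : (ZMod p)[X])).coeff (i.1 + 1)).det ≠ 0 := by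
  intro h
  obtain ⟨v, hv0, hv⟩ := Matrix.exists_vecMul_eq_zero_iff.2 h
  apply hv0
  set Y : (ZMod p)[X] := ∑ j : Fin l, C (v j) * (X + C u) ^ (e + j.1 + 1) with hY
  set Z : (ZMod p)[X] := ∑ j : Fin l, C (v j * ((e + j.1 + 1 : ℕ) : ZMod p)) * (X + C u) ^ j.1 with hZ
  have hd : derivative Y = (X + C u) ^ e * Z := by
    rw [hY, hZ, derivative_sum, Finset.mul_sum]
    apply Finset.sum_congr rfl
    intro j _
    rw [derivative_C_mul, derivative_pow]
    simp
    ring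
  have hXY : X ^ l ∣ derivative Y := by
    rw [X_pow_dvd_iff]
    intro d hd
    rw [coeff_derivative]
    have := congrFun hv ⟨d, hd⟩
    simp only [Matrix.vecMul, dotProduct, Matrix.of_apply, Pi.zero_apply] at this
    rw [hY, finsetSum_coeff]
    simp only [coeff_C_mul]
    rw [this, zero_mul]
  have hXZ : X ^ l ∣ Z := by
    rw [hd] at hXY
    rcases hu with hu | hu
    · apply IsCoprime.dvd_of_dvd_mul_left _ hXY
      apply IsCoprime.pow
      refine ⟨- C u⁻¹, C u⁻¹, ?_⟩
      have : C u⁻¹ * C u = (1 : (ZMod p)[X]) := by rw [← C_mul, inv_mul_cancel₀ hu, C_1]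
      linear_combination this
    · simpa [hu] using hXY
  have hZ0 : Z = 0 := by
    by_contra hne
    have h1 := natDegree_le_of_dvd hXZ hne
    rw [natDegree_X_pow] at h1
    have h2 : Z.degree < l := by
      rw [hZ]
      refine lt_of_le_of_lt (degree_sum_le _ _) ?_
      rw [Finset.sup_lt_iff (by simp)]
      intro j _
      refine lt_of_le_of_lt (degree_mul_le _ _) ?_
      rw [degree_pow, degree_X_add_C]
      refine lt_of_le_of_lt (add_le_add_left degree_C_le _) ?_
      simp
    have h3 := (natDegree_lt_iff_degree_lt hne).2 h2
    omega
  have hc : Z.comp (X - C u) = ∑ j : Fin l, C (v j * ((e + j.1 + 1 : ℕ) : ZMod p)) * X ^ j.1 := by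
    rw [hZ, Polynomial.sum_comp]
    apply Finset.sum_congr rfl
    intro j _
    simp
  rw [hZ0, zero_comp] at hc
  funext j
  have h4 := congrArg (fun q => coeff q j.1) hc
  simp only [coeff_zero, finsetSum_coeff, coeff_C_mul, coeff_X_pow] at h4
  rw [Finset.sum_eq_single j] at h4
  · simp only [if_true, mul_one] at h4
    have h5 := (mul_eq_zero.1 h4.symm).resolve_right ?_
    · exact h5
    · intro hdv
      rw [ZMod.natCast_eq_zero_iff] at hdv
      have := Nat.le_of_dvd (by omega) hdv
      have := j.2
      omega
  · intro i _ hij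
    rw [if_neg]
    · simp
    · intro h; exact hij (Fin.ext h.symm)
  · simp

section frame
variable {R : Type*} [CommRing R] {p : ℕ} [Fact p.Prime] (π : R) (φ : R →+* ZMod p)

theorem taylor_map_coeff (t : R) (f : R[X]) (n : ℕ) :
    φ ((taylor t f).coeff n) = (taylor (φ t) (f.map φ)).coeff n := by
  rw [← coeff_map]
  congr 1
  simp [taylor_apply, Polynomial.map_comp]

theorem Cls.map_eq {π : R} {φ : R →+* ZMod p} (hπ : φ π = 0) {k : ℕ} {γ : Fin k → R[X]}
    (hγ : Cls π γ) (j : Fin k) :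
    (γ j).map φ = X ^ (j.1 + 1) := by
  obtain ⟨g, hg⟩ := hγ j
  rw [hg]
  simp [hπ]

theorem Amat_map {k : ℕ} (hπ : φ π = 0) (γ : Fin k → R[X]) (hγ : Cls π γ) (c : R) :
    φ.mapMatrix (Amat γ c) = Matrix.of fun j i : Fin k =>
      (((X + C (φ c)) ^ (j.1 + 1) : (ZMod p)[X])).coeff (i.1 + 1) := by
  ext j i
  simp only [RingHom.mapMatrix_apply, Matrix.map_apply, Amat, Matrix.of_apply]
  rw [taylor_map_coeff, hγ.map_eq hπ]
  simp [taylor_apply]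

theorem frame_rescale {k : ℕ} (hk : k < p) (hπ : φ π = 0) (hloc : ∀ x, φ x ≠ 0 → IsUnit x)
    (γ : Fin k → R[X]) (hγ : Cls π γ) (c : R) : IsUnit (Amat γ c).det := by
  apply hloc
  rw [RingHom.map_det, Amat_map π φ hπ γ hγ]
  have := det_binom 0 k (by omega) (φ c) (Or.inr rfl)
  simpa using this

/-- index of the last `l` coordinates -/
def lastIdx {k l : ℕ} (h : l ≤ k) (j : Fin l) : Fin k := ⟨k - l + j.1, by omega⟩

/-- last `l` rows of the inverse frame -/
noncomputable def Wmat {k l : ℕ} (h : l ≤ k) (γ : Fin k → R[X]) (c : R) : Matrix (Fin l) (Fin k) R :=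
  (Amat γ c)⁻¹.submatrix (lastIdx h) id

theorem frame_proj {k l : ℕ} (hk : k < p) (hl : l ≤ k) (hπ : φ π = 0)
    (hloc : ∀ x, φ x ≠ 0 → IsUnit x)
    (γ : Fin k → R[X]) (hγ : Cls π γ) (c t : R) (hct : φ t ≠ φ c) :
    IsUnit (Amat (fun j => ∑ i, C (Wmat hl γ c j i) * γ i) t).det := by
  apply hloc
  rw [RingHom.map_det]
  have hdet := frame_rescale π φ hk hπ hloc γ hγ c
  have hBA : (Amat γ c)⁻¹ * Amat γ c = 1 := Matrix.nonsing_inv_mul _ hdet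
  have e : φ.mapMatrix (Amat (fun j => ∑ i, C (Wmat hl γ c j i) * γ i) t) =
      Matrix.of fun j i : Fin l => (((X + C (φ t - φ c)) ^ (k - l + j.1 + 1) : (ZMod p)[X])).coeff (i.1 + 1) := by
    ext j i
    simp only [RingHom.mapMatrix_apply, Matrix.map_apply, Amat, Matrix.of_apply]
    rw [taylor_map_coeff, Polynomial.map_sum]
    simp only [Polynomial.map_mul, map_C, hγ.map_eq hπ]
    -- expansion
    have hexp : ∀ n : Fin k, (taylor (φ t) (X ^ (n.1 + 1) : (ZMod p)[X])).coeff (i.1 + 1) =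
        ∑ m : Fin k, φ (Amat γ c n m) * (((X + C (φ t - φ c)) ^ (m.1 + 1) : (ZMod p)[X])).coeff (i.1 + 1) := by
      intro n
      have h1 : (taylor (φ t) (X ^ (n.1 + 1) : (ZMod p)[X])) =
          ((X + C (φ c)) ^ (n.1 + 1) : (ZMod p)[X]).comp (X + C (φ t - φ c)) := by
        simp only [taylor_apply, pow_comp, X_comp, add_comp, C_comp, C_sub]
        congr 1
        ring
      have hdeg : ((X + C (φ c)) ^ (n.1 + 1) : (ZMod p)[X]).natDegree < k + 1 := by
        rw [natDegree_pow, natDegree_X_add_C]; have := n.2; omega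
      have h2 : ∀ m : Fin k, φ (Amat γ c n m) = ((X + C (φ c)) ^ (n.1 + 1) : (ZMod p)[X]).coeff (m.1 + 1) := by
        intro m
        have := congrFun (congrFun (Amat_map π φ hπ γ hγ c) n) m
        simpa using this
      rw [h1, comp, eval₂_eq_sum_range' _ hdeg, Finset.sum_range_succ', coeff_add, finsetSum_coeff]
      simp only [coeff_C_mul, pow_zero, mul_one, coeff_C_succ, add_zero, h2]
      rw [Fin.sum_univ_eq_sum_range (fun m => ((X + C (φ c)) ^ (n.1 + 1) : (ZMod p)[X]).coeff (m + 1) *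
        (((X + C (φ t - φ c)) ^ (m + 1) : (ZMod p)[X])).coeff (i.1 + 1))]
    rw [map_sum, finsetSum_coeff]
    simp only [taylor_mul, taylor_C, coeff_C_mul, hexp]
    simp only [Finset.mul_sum]
    rw [Finset.sum_comm]
    have h3 : ∀ m : Fin k, ∑ n, φ (Wmat hl γ c j n) * φ (Amat γ c n m) =
        if lastIdx hl j = m then 1 else 0 := by
      intro m
      have := congrFun (congrFun hBA (lastIdx hl j)) m
      rw [Matrix.mul_apply, Matrix.one_apply] at this
      have h4 := congrArg φ this
      rw [map_sum] at h4
      simp only [map_mul] at h4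
      simp only [Wmat, Matrix.submatrix_apply, id]
      rw [h4]
      split_ifs <;> simp
    simp only [← mul_assoc, ← Finset.sum_mul, h3]
    simp only [ite_mul, one_mul, zero_mul, Finset.sum_ite_eq, Finset.mem_univ, if_true]
    rfl
  rw [e]
  exact det_binom (k - l) l (by omega) _ (Or.inl (sub_ne_zero.2 hct))

end frame

end PartB

section PartC
open Polynomial
/-- triangular numbers -/
def tri (l : ℕ) : ℕ := l * (l + 1) / 2

theorem two_tri (l : ℕ) : 2 * tri l = l * (l + 1) :=
  Nat.mul_div_cancel' (Nat.even_mul_succ_self l).two_dvd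

theorem tri_pos {l : ℕ} (h : 1 ≤ l) : 1 ≤ tri l := by
  have := two_tri l
  nlinarith

section FF
variable {p M : ℕ} [Fact p.Prime]

/-- exponential sums along a curve -/
noncomputable def FF {k : ℕ} (P : ZMod (p ^ M)) (γ : Fin k → (ZMod (p ^ M))[X]) (ξ : ℤ → ℤ) (a : ℤ → ℂ)
    (s : Finset ℤ) (x : Fin k → ZMod (p ^ M)) : ℂ :=
  ∑ i ∈ s, a i * ZMod.stdAddChar (P * ∑ j, x j * (γ j).eval ((ξ i : ℤ) : ZMod (p ^ M)))

theorem norm_std (x : ZMod (p ^ M)) : ‖(ZMod.stdAddChar x : ℂ)‖ = 1 := by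
  exact AddChar.norm_apply _ _

theorem FF_parts {k : ℕ} (P : ZMod (p ^ M)) (γ : Fin k → (ZMod (p ^ M))[X]) (ξ : ℤ → ℤ) (a : ℤ → ℂ)
    (s : Finset ℤ) (x : Fin k → ZMod (p ^ M)) (q : ℕ) :
    ∑ J ∈ parts q ξ s, FF P γ ξ a J x = FF P γ ξ a s x := by
  unfold FF
  exact parts_sum q ξ s _

/-- normalised mean value -/
noncomputable def Nrm {k : ℕ} (P : ZMod (p ^ M)) (γ : Fin k → (ZMod (p ^ M))[X]) (ξ : ℤ → ℤ) (a : ℤ → ℂ)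
    (m : ℕ) (s : Finset ℤ) : ℝ :=
  (∑ x : Fin k → ZMod (p ^ M), ‖FF P γ ξ a s x‖ ^ (2 * m)) ^ (1 / (m : ℝ))

/-- square function -/
noncomputable def S2 {k : ℕ} (P : ZMod (p ^ M)) (γ : Fin k → (ZMod (p ^ M))[X]) (ξ : ℤ → ℤ) (a : ℤ → ℂ)
    (m q : ℕ) (s : Finset ℤ) : ℝ :=
  ∑ J ∈ parts q ξ s, Nrm P γ ξ a m J

theorem Nrm_nonneg {k : ℕ} (P : ZMod (p ^ M)) (γ : Fin k → (ZMod (p ^ M))[X]) (ξ : ℤ → ℤ) (a : ℤ → ℂ)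
    (m : ℕ) (s : Finset ℤ) : 0 ≤ Nrm P γ ξ a m s :=
  Real.rpow_nonneg (Finset.sum_nonneg fun _ _ => by positivity) _

theorem S2_nonneg {k : ℕ} (P : ZMod (p ^ M)) (γ : Fin k → (ZMod (p ^ M))[X]) (ξ : ℤ → ℤ) (a : ℤ → ℂ)
    (m q : ℕ) (s : Finset ℤ) : 0 ≤ S2 P γ ξ a m q s :=
  Finset.sum_nonneg fun _ _ => Nrm_nonneg _ _ _ _ _ _

theorem root_pow {m : ℕ} (hm : 1 ≤ m) {y : ℝ} (hy : 0 ≤ y) : (y ^ (1 / (m : ℝ))) ^ m = y := by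
  have hm0 : (m : ℝ) ≠ 0 := by positivity
  rw [← Real.rpow_natCast, ← Real.rpow_mul hy, one_div_mul_cancel hm0, Real.rpow_one]

end FF

/-- decoupling inequality for the curve class -/
def Dec (p M k N : ℕ) [Fact p.Prime] (C : ℝ) : Prop :=
  0 ≤ C ∧ ∀ γ : Fin k → (ZMod (p ^ M))[X], Cls ((p : ℕ) : ZMod (p ^ M)) γ → ∀ (ξ : ℤ → ℤ) (a : ℤ → ℂ)
    (s : Finset ℤ),
    ∑ x, ‖FF ((p : ZMod (p ^ M)) ^ (M - k * N)) γ ξ a s x‖ ^ (2 * tri k) ≤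
      C * (S2 ((p : ZMod (p ^ M)) ^ (M - k * N)) γ ξ a (tri k) (p ^ N) s) ^ (tri k)

theorem transfer {p M k l N n' a : ℕ} [Fact p.Prime] {C₀ : ℝ} (hD : Dec p M l n' C₀)
    (γ : Fin k → (ZMod (p ^ M))[X]) (W : Matrix (Fin l) (Fin k) (ZMod (p ^ M))) (t₀ : ℤ)
    (hdet : IsUnit (Amat (fun j => ∑ i, C (W j i) * γ i) (t₀ : ZMod (p ^ M))).det)
    (ha : 1 ≤ a) (hl : 1 ≤ l) (h1 : l * (n' + a) ≤ k * N) (h2 : k * N ≤ M)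
    (ξ : ℤ → ℤ) (b : ℤ → ℂ) (s : Finset ℤ) (hs : ∀ i ∈ s, ((p : ℤ) ^ a) ∣ ξ i - t₀)
    (w : (Fin k → ZMod (p ^ M)) → ℝ) (hw0 : ∀ x, 0 ≤ w x)
    (hw : ∀ (x : Fin k → ZMod (p ^ M)) (v : Fin l → ZMod (p ^ M)),
      w (x + fun i => ∑ j, W j i * ((p : ZMod (p ^ M)) ^ (k * N - l * (n' + a)) * v j)) = w x) :
    ∑ x, w x * ‖FF ((p : ZMod (p ^ M)) ^ (M - k * N)) γ ξ b s x‖ ^ (2 * tri l) ≤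
      C₀ * (∑ K ∈ parts (p ^ (n' + a)) ξ s,
        (∑ x, w x * ‖FF ((p : ZMod (p ^ M)) ^ (M - k * N)) γ ξ b K x‖ ^ (2 * tri l)) ^
          (1 / (tri l : ℝ))) ^ (tri l) := by
  have hp0 : (p : ℤ) ≠ 0 := by exact_mod_cast (Fact.out : p.Prime).ne_zero
  have hm := tri_pos hl
  set m := tri l with hmdef
  set δ : Fin l → (ZMod (p ^ M))[X] := fun j => ∑ i, C (W j i) * γ i with hδ
  obtain ⟨γ', hγ', hexp⟩ := normalize_curve (p : ZMod (p ^ M)) δ (t₀ : ZMod (p ^ M)) a ha hdet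
  set A := Amat δ (t₀ : ZMod (p ^ M)) with hA
  set B := A⁻¹ with hB
  have hBA : B * A = 1 := Matrix.nonsing_inv_mul _ hdet
  set π : ZMod (p ^ M) := (p : ZMod (p ^ M)) with hπ
  set P := π ^ (M - k * N) with hP
  set ζ : ℤ → ℤ := fun i => (ξ i - t₀) / (p : ℤ) ^ a with hζ
  have hξ : ∀ i ∈ s, ξ i = t₀ + (p : ℤ) ^ a * ζ i := by
    intro i hi
    rw [hζ]
    simp only
    rw [Int.mul_ediv_cancel' (hs i hi)]; ring
  set v : (Fin l → ZMod (p ^ M)) → Fin l → ZMod (p ^ M) := fun u j =>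
    ∑ i, B i j * (π ^ ((l - 1 - i.1) * a) * u i) with hv
  set ρ : (Fin l → ZMod (p ^ M)) → Fin k → ZMod (p ^ M) := fun u i =>
    ∑ j, W j i * (π ^ (k * N - l * (n' + a)) * v u j) with hρ
  have hwρ : ∀ x u, w (x + ρ u) = w x := fun x u => hw x (v u)
  -- phase identity
  have phase : ∀ u, ∃ c, ∀ i ∈ s, P * ∑ j, ρ u j * (γ j).eval ((ξ i : ℤ) : ZMod (p ^ M)) =
      c + π ^ (M - l * n') * ∑ j, u j * (γ' j).eval ((ζ i : ℤ) : ZMod (p ^ M)) := by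
    intro u
    refine ⟨P * ∑ j, π ^ (k * N - l * (n' + a)) * v u j * (δ j).eval (t₀ : ZMod (p ^ M)), ?_⟩
    intro i hi
    have e1 : ∑ j, ρ u j * (γ j).eval ((ξ i : ℤ) : ZMod (p ^ M)) =
        ∑ j, π ^ (k * N - l * (n' + a)) * v u j * (δ j).eval ((ξ i : ℤ) : ZMod (p ^ M)) := by
      simp only [hρ, hδ, eval_finsetSum, eval_mul, eval_C, Finset.mul_sum, Finset.sum_mul]
      rw [Finset.sum_comm]
      refine Finset.sum_congr rfl fun j _ => Finset.sum_congr rfl fun i _ => by ring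
    have e2 : ∀ j, (δ j).eval ((ξ i : ℤ) : ZMod (p ^ M)) = (δ j).eval (t₀ : ZMod (p ^ M)) +
      ∑ i' : Fin l, A j i' * π ^ (a * (i'.1 + 1)) * (γ' i').eval ((ζ i : ℤ) : ZMod (p ^ M)) := by
      intro j
      rw [← hexp, hξ i hi]
      push_cast
      rfl
    rw [e1, Finset.sum_congr rfl (fun j _ => by rw [e2 j, mul_add (π ^ (k * N - l * (n' + a)) * v u j)]),
      Finset.sum_add_distrib, mul_add P]
    congr 1
    have e3 : ∀ i', ∑ j, v u j * A j i' = π ^ ((l - 1 - i'.1) * a) * u i' := by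
      intro i'
      simp only [hv, Finset.sum_mul]
      rw [Finset.sum_comm]
      have : ∀ i'' : Fin l, ∑ j, B i'' j * (π ^ ((l - 1 - i''.1) * a) * u i'') * A j i' =
          (π ^ ((l - 1 - i''.1) * a) * u i'') * (B * A) i'' i' := by
        intro i''
        rw [Matrix.mul_apply, Finset.mul_sum]
        exact Finset.sum_congr rfl fun j _ => by ring
      simp only [this, hBA, Matrix.one_apply]
      simp
    have e4 : ∑ j, π ^ (k * N - l * (n' + a)) * v u j *
        ∑ i' : Fin l, A j i' * π ^ (a * (i'.1 + 1)) * (γ' i').eval ((ζ i : ℤ) : ZMod (p ^ M)) =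
        ∑ i' : Fin l, π ^ (k * N - l * (n' + a)) * (∑ j, v u j * A j i') * π ^ (a * (i'.1 + 1)) *
          (γ' i').eval ((ζ i : ℤ) : ZMod (p ^ M)) := by
      simp only [Finset.mul_sum, Finset.sum_mul]
      rw [Finset.sum_comm]
      refine Finset.sum_congr rfl fun j _ => Finset.sum_congr rfl fun i _ => by ring
    rw [e4, Finset.mul_sum, Finset.mul_sum]
    refine Finset.sum_congr rfl fun i' _ => ?_
    rw [e3, hP]
    have e5 : M - l * n' = (M - k * N) + (k * N - l * (n' + a)) + (l - 1 - i'.1) * a + a * (i'.1 + 1) := by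
      have h3 : (l - 1 - i'.1) * a + a * (i'.1 + 1) = l * a := by
        rw [mul_comm a, ← add_mul]; congr 1; have := i'.2; omega
      have h4 : l * (n' + a) = l * n' + l * a := mul_add _ _ _
      omega
    rw [e5, pow_add, pow_add, pow_add]
    ring
  choose c hc using phase
  set b' : (Fin k → ZMod (p ^ M)) → ℤ → ℂ := fun x i => b i *
    ZMod.stdAddChar (P * ∑ j, x j * (γ j).eval ((ξ i : ℤ) : ZMod (p ^ M))) with hb'
  have shift : ∀ s' ⊆ s, ∀ x u, ‖FF P γ ξ b s' (x + ρ u)‖ =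
      ‖FF (π ^ (M - l * n')) γ' ζ (b' x) s' u‖ := by
    intro s' hs' x u
    have : FF P γ ξ b s' (x + ρ u) = ZMod.stdAddChar (c u) * FF (π ^ (M - l * n')) γ' ζ (b' x) s' u := by
      unfold FF
      rw [Finset.mul_sum]
      refine Finset.sum_congr rfl fun i hi => ?_
      simp only [Pi.add_apply, add_mul, Finset.sum_add_distrib, mul_add]
      rw [hc u i (hs' hi), AddChar.map_add_eq_mul, AddChar.map_add_eq_mul]
      simp only [hb']
      ring
    rw [this, norm_mul, norm_std, one_mul]
  set U : ℝ := (Fintype.card (Fin l → ZMod (p ^ M)) : ℝ) with hU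
  have hUpos : 0 < U := by rw [hU]; exact_mod_cast Fintype.card_pos
  have avg : ∀ s' ⊆ s, ∑ x, w x * ∑ u, ‖FF (π ^ (M - l * n')) γ' ζ (b' x) s' u‖ ^ (2 * m) =
      U * ∑ x, w x * ‖FF P γ ξ b s' x‖ ^ (2 * m) := by
    intro s' hs'
    simp only [Finset.mul_sum]
    rw [Finset.sum_comm]
    have : ∀ u ∈ (Finset.univ : Finset (Fin l → ZMod (p ^ M))),
        ∑ x, w x * ‖FF (π ^ (M - l * n')) γ' ζ (b' x) s' u‖ ^ (2 * m) =
        ∑ x, w x * ‖FF P γ ξ b s' x‖ ^ (2 * m) := by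
      intro u _
      rw [← Equiv.sum_comp (Equiv.addRight (ρ u)) (fun x => w x * ‖FF P γ ξ b s' x‖ ^ (2 * m))]
      refine Finset.sum_congr rfl fun x _ => ?_
      rw [Equiv.coe_addRight, hwρ, shift s' hs']
    rw [Finset.sum_congr rfl this, Finset.sum_const, nsmul_eq_mul, ← Finset.mul_sum]
    rfl
  have hparts : parts (p ^ (n' + a)) ξ s = parts (p ^ n') ζ s := by
    apply parts_congr
    intro i hi i' hi'
    rw [hξ i hi, hξ i' hi']
    have : t₀ + (p : ℤ) ^ a * ζ i' - (t₀ + (p : ℤ) ^ a * ζ i) = (p : ℤ) ^ a * (ζ i' - ζ i) := by ring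
    rw [this]
    push_cast
    rw [pow_add, mul_comm ((p : ℤ) ^ n')]
    exact mul_dvd_mul_iff_left (pow_ne_zero _ hp0)
  have key := avg s (Finset.Subset.refl s)
  have hstep : U * ∑ x, w x * ‖FF P γ ξ b s x‖ ^ (2 * m) ≤
      C₀ * ∑ x, w x * (∑ K ∈ parts (p ^ n') ζ s, Nrm (π ^ (M - l * n')) γ' ζ (b' x) m K) ^ m := by
    rw [← key, Finset.mul_sum]
    refine Finset.sum_le_sum fun x _ => ?_
    have := hD.2 γ' hγ' ζ (b' x) s
    calc _ ≤ w x * _ := mul_le_mul_of_nonneg_left this (hw0 x)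
      _ = _ := by unfold S2; ring
  have hmk := mink Finset.univ (parts (p ^ n') ζ s) m hm w (fun x _ => hw0 x)
    (fun K x => Nrm (π ^ (M - l * n')) γ' ζ (b' x) m K) (fun K _ x _ => Nrm_nonneg _ _ _ _ _ _)
  have hK : ∀ K ∈ parts (p ^ n') ζ s,
      (∑ x, w x * (Nrm (π ^ (M - l * n')) γ' ζ (b' x) m K) ^ m) ^ (1 / (m : ℝ)) =
      U ^ (1 / (m : ℝ)) * (∑ x, w x * ‖FF P γ ξ b K x‖ ^ (2 * m)) ^ (1 / (m : ℝ)) := by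
    intro K hK
    rw [← Real.mul_rpow hUpos.le (Finset.sum_nonneg fun x _ => mul_nonneg (hw0 x) (by positivity)),
      ← avg K (parts_subset hK)]
    congr 1
    refine Finset.sum_congr rfl fun x _ => ?_
    unfold Nrm
    rw [root_pow hm (Finset.sum_nonneg fun _ _ => by positivity)]
  rw [Finset.sum_congr rfl hK, ← Finset.mul_sum, mul_pow, root_pow hm hUpos.le] at hmk
  have h6 := hstep.trans (mul_le_mul_of_nonneg_left hmk hD.1)
  rw [hparts]
  apply le_of_mul_le_mul_left _ hUpos
  calc _ ≤ _ := h6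
    _ = _ := by ring

end PartC

section PartD
open Polynomial
section basic
variable {p M : ℕ} [Fact p.Prime]

/-- reduction modulo `p` -/
noncomputable def redp (p M : ℕ) (hM : 1 ≤ M) : ZMod (p ^ M) →+* ZMod p :=
  ZMod.castHom (dvd_pow_self p (by omega)) (ZMod p)

theorem redp_pi (hM : 1 ≤ M) : redp p M hM ((p : ℕ) : ZMod (p ^ M)) = 0 := by
  rw [map_natCast]; simp

theorem redp_loc (hM : 1 ≤ M) (x : ZMod (p ^ M)) (hx : redp p M hM x ≠ 0) : IsUnit x := by
  have e : ((x.val : ℕ) : ZMod (p ^ M)) = x := ZMod.natCast_zmod_val x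
  rw [← e] at hx ⊢
  rw [map_natCast, Ne, ZMod.natCast_eq_zero_iff] at hx
  rw [ZMod.isUnit_iff_coprime]
  exact (Nat.Coprime.pow_left M (((Fact.out : p.Prime).coprime_iff_not_dvd).2 hx)).symm

theorem redp_ne (hM : 1 ≤ M) {t t' : ℤ} (h : ¬ (p : ℤ) ∣ t - t') :
    redp p M hM (t : ZMod (p ^ M)) ≠ redp p M hM (t' : ZMod (p ^ M)) := by
  rw [map_intCast, map_intCast]
  intro h'
  apply h
  rw [eq_comm, ZMod.intCast_eq_intCast_iff_dvd_sub] at h'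
  exact h'

theorem sum_pow_le' {ι : Type*} (t : Finset ι) (f : ι → ℝ) (hf : ∀ i ∈ t, 0 ≤ f i) (m : ℕ) (hm : 1 ≤ m) :
    ∑ i ∈ t, f i ^ m ≤ (∑ i ∈ t, f i) ^ m := by
  obtain ⟨n, rfl⟩ : ∃ n, m = n + 1 := ⟨m - 1, by omega⟩
  rw [pow_succ', Finset.sum_mul]
  refine Finset.sum_le_sum fun i hi => ?_
  rw [pow_succ']
  exact mul_le_mul_of_nonneg_left (pow_le_pow_left₀ (hf i hi) (Finset.single_le_sum hf hi) _) (hf i hi)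

theorem pow_sum_le' {ι : Type*} (t : Finset ι) (f : ι → ℝ) (hf : ∀ i ∈ t, 0 ≤ f i) (m Q : ℕ) (hm : 1 ≤ m)
    (hQ : t.card ≤ Q) :
    (∑ i ∈ t, f i) ^ m ≤ (Q : ℝ) ^ m * ∑ i ∈ t, f i ^ m := by
  rcases t.eq_empty_or_nonempty with rfl | hne
  · rw [Finset.sum_empty, zero_pow (by omega)]; simp
  obtain ⟨j, hj, hmax⟩ := Finset.exists_max_image t f hne
  have h1 : ∑ i ∈ t, f i ≤ Q * f j := by
    calc ∑ i ∈ t, f i ≤ ∑ i ∈ t, f j := Finset.sum_le_sum hmax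
      _ = t.card * f j := by simp
      _ ≤ Q * f j := by
        apply mul_le_mul_of_nonneg_right _ (hf j hj)
        exact_mod_cast hQ
  calc (∑ i ∈ t, f i) ^ m ≤ (Q * f j) ^ m := pow_le_pow_left₀ (Finset.sum_nonneg hf) h1 _
    _ = (Q : ℝ) ^ m * f j ^ m := mul_pow _ _ _
    _ ≤ _ := by
      apply mul_le_mul_of_nonneg_left _ (by positivity)
      exact Finset.single_le_sum (f := fun i => f i ^ m) (fun i hi => pow_nonneg (hf i hi) _) hj

theorem S2_part_le {k : ℕ} (P : ZMod (p ^ M)) (γ : Fin k → (ZMod (p ^ M))[X]) (ξ : ℤ → ℤ) (a : ℤ → ℂ)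
    (m : ℕ) {q q' : ℕ} (hq : q ∣ q') {s J : Finset ℤ} (hJ : J ∈ parts q ξ s) :
    S2 P γ ξ a m q' J ≤ S2 P γ ξ a m q' s := by
  have := parts_nested hq ξ s (Nrm P γ ξ a m)
  conv_rhs => unfold S2
  rw [← this]
  exact Finset.single_le_sum (f := fun J => S2 P γ ξ a m q' J) (fun K _ => S2_nonneg _ _ _ _ _ _ _) hJ

theorem S2_sum {k : ℕ} (P : ZMod (p ^ M)) (γ : Fin k → (ZMod (p ^ M))[X]) (ξ : ℤ → ℤ) (a : ℤ → ℂ)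
    (m : ℕ) {q q' : ℕ} (hq : q ∣ q') (s : Finset ℤ) :
    ∑ J ∈ parts q ξ s, S2 P γ ξ a m q' J = S2 P γ ξ a m q' s :=
  parts_nested hq ξ s (Nrm P γ ξ a m)

theorem FF_norm_pow_le {k : ℕ} (P : ZMod (p ^ M)) (γ : Fin k → (ZMod (p ^ M))[X]) (ξ : ℤ → ℤ) (a : ℤ → ℂ)
    (s : Finset ℤ) (x : Fin k → ZMod (p ^ M)) (q : ℕ) (hq : 0 < q) (m : ℕ) (hm : 1 ≤ m) :
    ‖FF P γ ξ a s x‖ ^ m ≤ (q : ℝ) ^ m * ∑ J ∈ parts q ξ s, ‖FF P γ ξ a J x‖ ^ m := by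
  rw [← FF_parts P γ ξ a s x q]
  refine (pow_le_pow_left₀ (norm_nonneg _) (norm_sum_le _ _) m).trans ?_
  exact pow_sum_le' _ _ (fun _ _ => norm_nonneg _) m q hm (parts_card q hq ξ s)

theorem combine {A θ : ℝ} (hA : 0 ≤ A) (h0 : 0 ≤ θ) (h1 : θ ≤ 1) {x y z : ℕ}
    (h : (1 - θ) * x + θ * y = z) : (A ^ x) ^ (1 - θ) * (A ^ y) ^ θ = A ^ z := by
  rw [← Real.rpow_natCast, ← Real.rpow_natCast, ← Real.rpow_natCast, ← Real.rpow_mul hA, ← Real.rpow_mul hA,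
    ← Real.rpow_add_of_nonneg hA (by apply mul_nonneg; positivity; linarith) (by positivity), ← h]
  congr 1; ring

theorem combine2 {A B θ : ℝ} (hA : 0 ≤ A) (hB : 0 ≤ B) (h0 : 0 ≤ θ) (h1 : θ ≤ 1) {x y z x' y' z' : ℕ}
    (h : (1 - θ) * x + θ * y = z) (h' : (1 - θ) * x' + θ * y' = z') :
    (A ^ x * B ^ x') ^ (1 - θ) * (A ^ y * B ^ y') ^ θ = A ^ z * B ^ z' := by
  rw [← combine hA h0 h1 h, ← combine hB h0 h1 h', Real.mul_rpow (by positivity) (by positivity),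
    Real.mul_rpow (by positivity) (by positivity)]
  ring

end basic

theorem Dec.mono {p M k N : ℕ} [Fact p.Prime] {C C' : ℝ} (h : Dec p M k N C) (hC : C ≤ C') : Dec p M k N C' := by
  refine ⟨h.1.trans hC, fun γ hγ ξ a s => (h.2 γ hγ ξ a s).trans ?_⟩
  exact mul_le_mul_of_nonneg_right hC (pow_nonneg (S2_nonneg _ _ _ _ _ _ _) _)

theorem Dec_zero (p M k : ℕ) [Fact p.Prime] (hk : 1 ≤ k) : Dec p M k 0 1 := by
  refine ⟨zero_le_one, fun γ _ ξ a s => ?_⟩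
  have hm := tri_pos hk
  rcases s.eq_empty_or_nonempty with rfl | hs
  · have : ∀ x, FF ((p : ZMod (p ^ M)) ^ (M - k * 0)) γ ξ a ∅ x = 0 := fun x => by simp [FF]
    simp only [this, norm_zero]
    rw [zero_pow (by omega)]
    simp only [Finset.sum_const_zero, one_mul]
    exact pow_nonneg (S2_nonneg _ _ _ _ _ _ _) _
  · unfold S2
    rw [parts_single hs (by simp), Finset.sum_singleton]
    unfold Nrm
    rw [root_pow hm (Finset.sum_nonneg fun _ _ => by positivity), one_mul]

theorem rescale {p M k N a : ℕ} [Fact p.Prime] {C₀ : ℝ} (hk : 1 ≤ k) (hkp : k < p) (ha : 1 ≤ a) (haN : a ≤ N)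
    (hM : k * N ≤ M) (hD : Dec p M k (N - a) C₀) (γ : Fin k → (ZMod (p ^ M))[X])
    (hγ : Cls ((p : ℕ) : ZMod (p ^ M)) γ) (ξ : ℤ → ℤ) (b : ℤ → ℂ) (s : Finset ℤ) (t : ℤ)
    (hs : ∀ i ∈ s, ((p : ℤ) ^ a) ∣ ξ i - t) :
    ∑ x, ‖FF ((p : ZMod (p ^ M)) ^ (M - k * N)) γ ξ b s x‖ ^ (2 * tri k) ≤
      C₀ * (S2 ((p : ZMod (p ^ M)) ^ (M - k * N)) γ ξ b (tri k) (p ^ N) s) ^ (tri k) := by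
  have hM1 : 1 ≤ M := by nlinarith
  have e1 : (fun j => ∑ i, C ((1 : Matrix (Fin k) (Fin k) (ZMod (p ^ M))) j i) * γ i) = γ := by
    funext j
    simp [Matrix.one_apply]
  have e2 : N - a + a = N := by omega
  have := transfer (N := N) hD γ 1 t (by
    rw [e1]
    exact frame_rescale _ (redp p M hM1) hkp (redp_pi hM1) (redp_loc hM1) γ hγ _) ha hk (by rw [e2]) hM
    ξ b s hs (fun _ => 1) (fun _ => zero_le_one) (fun _ _ => rfl)
  simp only [one_mul, e2] at this
  exact this

/-- bilinear estimate -/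
def Bil (p M k N l a b : ℕ) [Fact p.Prime] (C : ℝ) : Prop :=
  0 ≤ C ∧ ∀ γ : Fin k → (ZMod (p ^ M))[X], Cls ((p : ℕ) : ZMod (p ^ M)) γ → ∀ (ξ : ℤ → ℤ) (c : ℤ → ℂ)
    (s s' : Finset ℤ) (t t' : ℤ), (∀ i ∈ s, ((p : ℤ) ^ a) ∣ ξ i - t) → (∀ i ∈ s', ((p : ℤ) ^ b) ∣ ξ i - t') →
    ¬ (p : ℤ) ∣ t - t' →
    ∑ x, ‖FF ((p : ZMod (p ^ M)) ^ (M - k * N)) γ ξ c s x‖ ^ (2 * tri l) *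
      ‖FF ((p : ZMod (p ^ M)) ^ (M - k * N)) γ ξ c s' x‖ ^ (2 * (tri k - tri l)) ≤
      C * ((S2 ((p : ZMod (p ^ M)) ^ (M - k * N)) γ ξ c (tri k) (p ^ N) s) ^ (tri l) *
      (S2 ((p : ZMod (p ^ M)) ^ (M - k * N)) γ ξ c (tri k) (p ^ N) s') ^ (tri k - tri l))

theorem Bil.mono {p M k N l a b : ℕ} [Fact p.Prime] {C C' : ℝ} (h : Bil p M k N l a b C) (hC : C ≤ C') :
    Bil p M k N l a b C' := by
  refine ⟨h.1.trans hC, fun γ hγ ξ c s s' t t' h1 h2 h3 => (h.2 γ hγ ξ c s s' t t' h1 h2 h3).trans ?_⟩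
  exact mul_le_mul_of_nonneg_right hC (mul_nonneg (pow_nonneg (S2_nonneg _ _ _ _ _ _ _) _)
    (pow_nonneg (S2_nonneg _ _ _ _ _ _ _) _))

theorem tri_mono {l k : ℕ} (h : l ≤ k) : tri l ≤ tri k := by
  have h1 := two_tri l
  have h2 := two_tri k
  nlinarith

theorem tri_strict {l k : ℕ} (h : l < k) : tri l < tri k := by
  have h1 := two_tri l
  have h2 := two_tri k
  nlinarith

theorem Bil_zero {p M k N a b : ℕ} [Fact p.Prime] {C : ℝ} (hk : 1 ≤ k) (hkp : k < p) (hb : 1 ≤ b) (hbN : b ≤ N)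
    (hM : k * N ≤ M) (hD : Dec p M k (N - b) C) : Bil p M k N 0 a b C := by
  refine ⟨hD.1, fun γ hγ ξ c s s' t t' h1 h2 h3 => ?_⟩
  have := rescale hk hkp hb hbN hM hD γ hγ ξ c s' t' h2
  simpa [tri] using this

theorem Bil_trivial {p M k N l a b : ℕ} [Fact p.Prime] {C : ℝ} (hk : 1 ≤ k) (hl : l ≤ k) (hkp : k < p)
    (ha : 1 ≤ a) (haN : a ≤ N) (hb : 1 ≤ b) (hbN : b ≤ N)
    (hM : k * N ≤ M) (hDa : Dec p M k (N - a) C) (hDb : Dec p M k (N - b) C) : Bil p M k N l a b C := by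
  refine ⟨hDb.1, fun γ hγ ξ c s s' t t' h1 h2 h3 => ?_⟩
  have ea := rescale hk hkp ha haN hM hDa γ hγ ξ c s t h1
  have eb := rescale hk hkp hb hbN hM hDb γ hγ ξ c s' t' h2
  set P := (p : ZMod (p ^ M)) ^ (M - k * N)
  have hm := tri_pos hk
  have hml := tri_mono hl
  set θ : ℝ := ((tri k - tri l : ℕ) : ℝ) / (tri k : ℝ) with hθ
  have hK : (0 : ℝ) < tri k := by exact_mod_cast hm
  have hθ0 : 0 ≤ θ := by positivity
  have hθ1 : θ ≤ 1 := by
    rw [hθ, div_le_one hK]; exact_mod_cast Nat.sub_le _ _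
  have hc : ((tri k - tri l : ℕ) : ℝ) = (tri k : ℝ) - tri l := by push_cast [hml]; ring
  have i1 : (1 - θ) * (tri k : ℝ) = tri l := by rw [hθ, hc]; field_simp; ring
  have i2 : θ * (tri k : ℝ) = ((tri k - tri l : ℕ) : ℝ) := by rw [hθ]; field_simp
  have hh := holder_two Finset.univ θ hθ0 hθ1 (fun x => ‖FF P γ ξ c s x‖ ^ (2 * tri k))
    (fun x => ‖FF P γ ξ c s' x‖ ^ (2 * tri k)) (fun _ _ => by positivity) (fun _ _ => by positivity)
  have e1 : ∀ (A B : ℝ), 0 ≤ A → 0 ≤ B → (A ^ (2 * tri k)) ^ (1 - θ) * (B ^ (2 * tri k)) ^ θ =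
      A ^ (2 * tri l) * B ^ (2 * (tri k - tri l)) := by
    intro A B hA hB
    have := combine2 (x := 2 * tri k) (y := 0) (z := 2 * tri l) (x' := 0) (y' := 2 * tri k)
      (z' := 2 * (tri k - tri l)) hA hB hθ0 hθ1
      (by push_cast; rw [← i1]; ring) (by push_cast [-Nat.cast_sub]; rw [← i2]; ring)
    simpa using this
  simp only [e1 _ _ (norm_nonneg _) (norm_nonneg _)] at hh
  refine hh.trans ?_
  have nn := fun s => S2_nonneg P γ ξ c (tri k) (p ^ N) s
  calc _ ≤ (C * (S2 P γ ξ c (tri k) (p ^ N) s) ^ (tri k)) ^ (1 - θ) *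
        (C * (S2 P γ ξ c (tri k) (p ^ N) s') ^ (tri k)) ^ θ := by
        apply mul_le_mul
        · exact Real.rpow_le_rpow (Finset.sum_nonneg fun _ _ => by positivity) ea (by linarith)
        · exact Real.rpow_le_rpow (Finset.sum_nonneg fun _ _ => by positivity) eb (by linarith)
        · exact Real.rpow_nonneg (Finset.sum_nonneg fun _ _ => by positivity) _
        · exact Real.rpow_nonneg (mul_nonneg hDa.1 (pow_nonneg (nn s) _)) _
    _ = _ := by
      rw [Real.mul_rpow hDa.1 (pow_nonneg (nn s) _), Real.mul_rpow hDa.1 (pow_nonneg (nn s') _)]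
      have h4 := combine2 (x := tri k) (y := 0) (z := tri l) (x' := 0) (y' := tri k)
        (z' := tri k - tri l) (nn s) (nn s') hθ0 hθ1
        (by push_cast; rw [← i1]; ring) (by push_cast [-Nat.cast_sub]; rw [← i2]; ring)
      have h5 := combine (x := 1) (y := 1) (z := 1) (θ := θ) hDa.1 hθ0 hθ1 (by push_cast; ring)
      simp only [pow_zero, mul_one, one_mul, pow_one] at h4 h5
      rw [← h4]
      conv_rhs => rw [← h5]
      ring

theorem Bil_holder {p M k N l n b : ℕ} [Fact p.Prime] {C₁ C₂ : ℝ} (hl : 1 ≤ l) (hlk : l < k)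
    (hB1 : Bil p M k N (l - 1) n b C₁) (hB2 : Bil p M k N (k - l) b n C₂) :
    Bil p M k N l n b (C₁ ^ (1 - 1 / ((k : ℝ) - l + 1)) * C₂ ^ (1 / ((k : ℝ) - l + 1))) := by
  refine ⟨mul_nonneg (Real.rpow_nonneg hB1.1 _) (Real.rpow_nonneg hB2.1 _),
    fun γ hγ ξ c s s' t t' h1 h2 h3 => ?_⟩
  have ea := hB1.2 γ hγ ξ c s s' t t' h1 h2 h3
  have eb := hB2.2 γ hγ ξ c s' s t' t h2 h1 (by rwa [← Int.neg_sub, dvd_neg] at h3)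
  set P := (p : ZMod (p ^ M)) ^ (M - k * N)
  have hden : (0 : ℝ) < (k : ℝ) - l + 1 := by
    have : (l : ℝ) < k := by exact_mod_cast hlk
    linarith
  set θ : ℝ := 1 / ((k : ℝ) - l + 1) with hθ
  have hθ0 : 0 ≤ θ := by positivity
  have hθ1 : θ ≤ 1 := by
    rw [hθ, div_le_one hden]
    have : (l : ℝ) < k := by exact_mod_cast hlk
    linarith
  have t1 : (2 : ℝ) * tri k = k * (k + 1) := by exact_mod_cast two_tri k
  have t2 : (2 : ℝ) * tri l = l * (l + 1) := by exact_mod_cast two_tri l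
  have t3 : (2 : ℝ) * tri (l - 1) = (l - 1) * l := by
    have := two_tri (l - 1)
    rw [Nat.sub_add_cancel hl] at this
    have h : (2 : ℝ) * tri (l - 1) = ((l - 1 : ℕ) : ℝ) * l := by exact_mod_cast this
    rw [h]; push_cast [hl]; ring
  have t4 : (2 : ℝ) * tri (k - l) = (k - l) * (k - l + 1) := by
    have := two_tri (k - l)
    have h : (2 : ℝ) * tri (k - l) = ((k - l : ℕ) : ℝ) * (((k - l : ℕ) : ℝ) + 1) := by exact_mod_cast this
    rw [h]; push_cast [hlk.le]; ring
  have c1 : ((tri k - tri l : ℕ) : ℝ) = tri k - tri l := by push_cast [tri_mono hlk.le]; ring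
  have c2 : ((tri k - tri (l - 1) : ℕ) : ℝ) = tri k - tri (l - 1) := by
    push_cast [tri_mono (show l - 1 ≤ k by omega)]; ring
  have c3 : ((tri k - tri (k - l) : ℕ) : ℝ) = tri k - tri (k - l) := by
    push_cast [tri_mono (show k - l ≤ k by omega)]; ring
  have g1 : (1 - θ) * (tri (l - 1) : ℝ) + θ * ((tri k - tri (k - l) : ℕ) : ℝ) = tri l := by
    rw [c3, hθ]
    field_simp
    linear_combination (1 / 2 : ℝ) * t1 - (1 / 2 : ℝ) * (k - l + 1) * t2 + (1 / 2 : ℝ) * (k - l) * t3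
      - (1 / 2 : ℝ) * t4
  have g2 : (1 - θ) * ((tri k - tri (l - 1) : ℕ) : ℝ) + θ * (tri (k - l) : ℝ) = ((tri k - tri l : ℕ) : ℝ) := by
    rw [c3] at g1
    rw [c2, c1, ← g1]; ring
  have hh := holder_two Finset.univ θ hθ0 hθ1
    (fun x => ‖FF P γ ξ c s x‖ ^ (2 * tri (l - 1)) * ‖FF P γ ξ c s' x‖ ^ (2 * (tri k - tri (l - 1))))
    (fun x => ‖FF P γ ξ c s' x‖ ^ (2 * tri (k - l)) * ‖FF P γ ξ c s x‖ ^ (2 * (tri k - tri (k - l))))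
    (fun _ _ => by positivity) (fun _ _ => by positivity)
  have e1 : ∀ (A B : ℝ), 0 ≤ A → 0 ≤ B → (A ^ (2 * tri (l - 1)) * B ^ (2 * (tri k - tri (l - 1)))) ^ (1 - θ) *
      (B ^ (2 * tri (k - l)) * A ^ (2 * (tri k - tri (k - l)))) ^ θ =
      A ^ (2 * tri l) * B ^ (2 * (tri k - tri l)) := by
    intro A B hA hB
    have := combine2 (x := 2 * tri (l - 1)) (y := 2 * (tri k - tri (k - l))) (z := 2 * tri l)
      (x' := 2 * (tri k - tri (l - 1))) (y' := 2 * tri (k - l))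
      (z' := 2 * (tri k - tri l)) hA hB hθ0 hθ1
      (by push_cast [-Nat.cast_sub]; rw [← g1]; ring) (by push_cast [-Nat.cast_sub]; rw [← g2]; ring)
    rw [← this]
    congr 2
    ring
  simp only [e1 _ _ (norm_nonneg _) (norm_nonneg _)] at hh
  refine hh.trans ?_
  have nn := fun s => S2_nonneg P γ ξ c (tri k) (p ^ N) s
  set A := S2 P γ ξ c (tri k) (p ^ N) s
  set B := S2 P γ ξ c (tri k) (p ^ N) s'
  have hA : 0 ≤ A := nn s
  have hB : 0 ≤ B := nn s'
  have pA : ∀ x y : ℕ, 0 ≤ A ^ x * B ^ y := fun x y => mul_nonneg (pow_nonneg hA _) (pow_nonneg hB _)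
  have pB : ∀ x y : ℕ, 0 ≤ B ^ x * A ^ y := fun x y => mul_nonneg (pow_nonneg hB _) (pow_nonneg hA _)
  calc _ ≤ (C₁ * (A ^ (tri (l - 1)) * B ^ (tri k - tri (l - 1)))) ^ (1 - θ) *
        (C₂ * (B ^ (tri (k - l)) * A ^ (tri k - tri (k - l)))) ^ θ := by
        apply mul_le_mul
        · exact Real.rpow_le_rpow (Finset.sum_nonneg fun _ _ => by positivity) ea (by linarith)
        · exact Real.rpow_le_rpow (Finset.sum_nonneg fun _ _ => by positivity) eb (by linarith)
        · exact Real.rpow_nonneg (Finset.sum_nonneg fun _ _ => by positivity) _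
        · exact Real.rpow_nonneg (mul_nonneg hB1.1 (pA _ _)) _
    _ = _ := by
      rw [Real.mul_rpow hB1.1 (pA _ _), Real.mul_rpow hB2.1 (pB _ _)]
      have h4 := combine2 (x := tri (l - 1)) (y := tri k - tri (k - l)) (z := tri l)
        (x' := tri k - tri (l - 1)) (y' := tri (k - l))
        (z' := tri k - tri l) hA hB hθ0 hθ1 g1 g2
      rw [← h4, mul_comm (B ^ (tri (k - l)))]
      ring

end PartD

section PartE
open Polynomial
theorem Bil_descend {p M k N l n a b : ℕ} [Fact p.Prime] {C₁ C₂ : ℝ} (hl : 1 ≤ l) (hlk : l < k) (hkp : k < p)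
    (ha : 1 ≤ a) (hb : 1 ≤ b) (han : a ≤ n) (hnN : n ≤ N) (hln : l * n ≤ (k - l + 1) * b)
    (hM : k * N ≤ M) (hD : Dec p M l (n - a) C₁) (hB : Bil p M k N l n b C₂) :
    Bil p M k N l a b (C₁ * C₂) := by
  refine ⟨mul_nonneg hD.1 hB.1, fun γ hγ ξ c s s' t t' h1 h2 h3 => ?_⟩
  have hM1 : 1 ≤ M := by nlinarith
  have e2 : n - a + a = n := by omega
  set π : ZMod (p ^ M) := (p : ZMod (p ^ M)) with hπ
  set P := π ^ (M - k * N) with hP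
  have hπM : ∀ j, M ≤ j → π ^ j = 0 := by
    intro j hj
    have h : π ^ M = 0 := by
      rw [hπ]
      have := ZMod.natCast_self (p ^ M)
      push_cast at this
      exact this
    rw [← Nat.sub_add_cancel hj, pow_add, h, mul_zero]
  have hml := tri_pos hl
  have hdet' := frame_rescale π (redp p M hM1) hkp (redp_pi hM1) (redp_loc hM1) γ hγ (t' : ZMod (p ^ M))
  obtain ⟨γ', hγ', hexp⟩ := normalize_curve π γ (t' : ZMod (p ^ M)) b hb hdet'
  have hdet := frame_proj π (redp p M hM1) hkp hlk.le (redp_pi hM1) (redp_loc hM1) γ hγ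
    (t' : ZMod (p ^ M)) (t : ZMod (p ^ M)) (redp_ne hM1 h3)
  set A := Amat γ (t' : ZMod (p ^ M)) with hA
  set W := Wmat hlk.le γ (t' : ZMod (p ^ M)) with hW
  have hBA : A⁻¹ * A = 1 := Matrix.nonsing_inv_mul _ hdet'
  have hWA : ∀ j i', ∑ i, W j i * A i i' = if lastIdx hlk.le j = i' then 1 else 0 := by
    intro j i'
    have := congrFun (congrFun hBA (lastIdx hlk.le j)) i'
    rw [Matrix.mul_apply, Matrix.one_apply] at this
    rw [← this]
    rfl
  have hinv : ∀ (x : Fin k → ZMod (p ^ M)) (v : Fin l → ZMod (p ^ M)),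
      ‖FF P γ ξ c s' (x + fun i => ∑ j, W j i * (π ^ (k * N - l * (n - a + a)) * v j))‖ =
      ‖FF P γ ξ c s' x‖ := by
    intro x v
    rw [e2]
    set y : Fin k → ZMod (p ^ M) := fun i => ∑ j, W j i * (π ^ (k * N - l * n) * v j) with hy
    have hph : ∀ i ∈ s', P * ∑ j, y j * (γ j).eval ((ξ i : ℤ) : ZMod (p ^ M)) =
        P * ∑ j, y j * (γ j).eval (t' : ZMod (p ^ M)) := by
      intro i hi
      obtain ⟨z, hz⟩ := h2 i hi
      have hξ : ((ξ i : ℤ) : ZMod (p ^ M)) = (t' : ZMod (p ^ M)) + π ^ b * (z : ZMod (p ^ M)) := by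
        have : ξ i = t' + (p : ℤ) ^ b * z := by linarith
        rw [this]; push_cast; rfl
      rw [hξ]
      simp only [hexp, mul_add, Finset.sum_add_distrib]
      rw [add_eq_left]
      have q1 : ∀ i', ∑ j, y j * A j i' = ∑ m, (π ^ (k * N - l * n) * v m) *
          (if lastIdx hlk.le m = i' then 1 else 0) := by
        intro i'
        simp only [hy, Finset.sum_mul]
        rw [Finset.sum_comm]
        refine Finset.sum_congr rfl fun m _ => ?_
        rw [← hWA, Finset.mul_sum]
        exact Finset.sum_congr rfl fun j _ => by ring
      have q2 : ∑ j, y j * ∑ i' : Fin k, A j i' * π ^ (b * i'.1 + b * 1) * (γ' i').eval ((z : ℤ) : ZMod (p ^ M)) =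
          ∑ i' : Fin k, (∑ j, y j * A j i') * (π ^ (b * i'.1 + b * 1) * (γ' i').eval ((z : ℤ) : ZMod (p ^ M))) := by
        simp only [Finset.mul_sum, Finset.sum_mul]
        rw [Finset.sum_comm]
        refine Finset.sum_congr rfl fun j _ => Finset.sum_congr rfl fun i _ => by ring
      rw [q2, Finset.mul_sum]
      refine Finset.sum_eq_zero fun i' _ => ?_
      rw [q1, Finset.sum_mul, Finset.mul_sum]
      refine Finset.sum_eq_zero fun m _ => ?_
      split_ifs with h
      · have hi' : i'.1 = k - l + m.1 := by rw [← h]; rfl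
        have : P * (π ^ (k * N - l * n) * v m * 1 * (π ^ (b * i'.1 + b * 1) * (γ' i').eval ((z : ℤ) : ZMod (p ^ M)))) =
            π ^ ((M - k * N) + (k * N - l * n) + (b * i'.1 + b * 1)) * (v m * (γ' i').eval ((z : ℤ) : ZMod (p ^ M))) := by
          rw [hP, pow_add, pow_add]; ring
        rw [this, hπM, zero_mul]
        have h5 : l * n ≤ k * N := Nat.mul_le_mul hlk.le hnN
        have h6 : (k - l + 1) * b ≤ b * i'.1 + b * 1 := by
          rw [← mul_add, mul_comm]; apply Nat.mul_le_mul_left; omega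
        omega
      · simp
    have : FF P γ ξ c s' (x + y) = ZMod.stdAddChar (P * ∑ j, y j * (γ j).eval (t' : ZMod (p ^ M))) *
        FF P γ ξ c s' x := by
      unfold FF
      rw [Finset.mul_sum]
      refine Finset.sum_congr rfl fun i hi => ?_
      simp only [Pi.add_apply, add_mul, Finset.sum_add_distrib, mul_add P]
      rw [hph i hi, AddChar.map_add_eq_mul]
      ring
    rw [this, norm_mul, norm_std, one_mul]
  have hT := transfer (N := N) hD γ W t hdet ha hl
    (by rw [e2]; exact Nat.mul_le_mul hlk.le hnN) hM ξ c s h1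
    (fun x => ‖FF P γ ξ c s' x‖ ^ (2 * (tri k - tri l))) (fun x => by positivity)
    (fun x v => congrArg (fun z : ℝ => z ^ (2 * (tri k - tri l))) (hinv x v))
  rw [e2] at hT
  have nn := fun s => S2_nonneg P γ ξ c (tri k) (p ^ N) s
  set B := (S2 P γ ξ c (tri k) (p ^ N) s') ^ (tri k - tri l) with hBdef
  have hB0 : 0 ≤ B := pow_nonneg (nn _) _
  have hK : ∀ K ∈ parts (p ^ n) ξ s, (∑ x, ‖FF P γ ξ c s' x‖ ^ (2 * (tri k - tri l)) *
      ‖FF P γ ξ c K x‖ ^ (2 * tri l)) ^ (1 / (tri l : ℝ)) ≤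
      (C₂ * B) ^ (1 / (tri l : ℝ)) * S2 P γ ξ c (tri k) (p ^ N) K := by
    intro K hK
    obtain ⟨tK, ⟨i, hi, rfl⟩, htK⟩ := parts_mod hK
    have h4 : ¬ (p : ℤ) ∣ ξ i - t' := by
      intro h
      apply h3
      have h5 : (p : ℤ) ∣ ξ i - t := (dvd_pow_self _ (by omega)).trans (h1 i hi)
      have := dvd_sub h h5
      simpa using this
    have h5 := hB.2 γ hγ ξ c K s' (ξ i) t' (by intro j hj; have := htK j hj; push_cast at this; exact this) h2 h4
    have h6 : (∑ x, ‖FF P γ ξ c s' x‖ ^ (2 * (tri k - tri l)) *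
      ‖FF P γ ξ c K x‖ ^ (2 * tri l)) ≤ (C₂ * B) * (S2 P γ ξ c (tri k) (p ^ N) K) ^ (tri l) := by
      calc _ = _ := Finset.sum_congr rfl fun x _ => mul_comm _ _
        _ ≤ _ := h5
        _ = _ := by ring
    refine (Real.rpow_le_rpow (Finset.sum_nonneg fun _ _ => by positivity) h6 (by positivity)).trans ?_
    rw [Real.mul_rpow (mul_nonneg hB.1 hB0) (pow_nonneg (nn _) _)]
    have h7 : ((S2 P γ ξ c (tri k) (p ^ N) K) ^ (tri l)) ^ (1 / (tri l : ℝ)) = S2 P γ ξ c (tri k) (p ^ N) K := by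
      rw [one_div, Real.pow_rpow_inv_natCast (nn K) (by omega)]
    rw [h7]
  calc _ = ∑ x, ‖FF P γ ξ c s' x‖ ^ (2 * (tri k - tri l)) * ‖FF P γ ξ c s x‖ ^ (2 * tri l) :=
        Finset.sum_congr rfl fun x _ => mul_comm _ _
    _ ≤ _ := hT
    _ ≤ C₁ * (∑ K ∈ parts (p ^ n) ξ s, (C₂ * B) ^ (1 / (tri l : ℝ)) * S2 P γ ξ c (tri k) (p ^ N) K) ^ tri l := by
        apply mul_le_mul_of_nonneg_left _ hD.1
        apply pow_le_pow_left₀ (Finset.sum_nonneg fun _ _ => Real.rpow_nonneg (Finset.sum_nonneg fun _ _ => by positivity) _)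
        exact Finset.sum_le_sum hK
    _ = _ := by
        rw [← Finset.mul_sum, S2_sum _ _ _ _ _ (pow_dvd_pow p hnN), mul_pow, root_pow hml (mul_nonneg hB.1 hB0)]
        ring

theorem Bil_crude {p M k N l a b : ℕ} [Fact p.Prime] {C : ℝ} (hl : 1 ≤ l) (hlk : l < k)
    (ha : 1 ≤ a) (hb : 1 ≤ b) (haN : a ≤ N) (hbN : b ≤ N) (hB : Bil p M k N l a b C) :
    Bil p M k N l 1 1 (((p ^ a : ℕ) : ℝ) ^ (2 * tri l + 1) * ((p ^ b : ℕ) : ℝ) ^ (2 * (tri k - tri l) + 1) * C) := by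
  refine ⟨by have := hB.1; positivity, fun γ hγ ξ c s s' t t' h1 h2 h3 => ?_⟩
  set P := (p : ZMod (p ^ M)) ^ (M - k * N) with hP
  have hpp : 0 < p := (Fact.out : p.Prime).pos
  have hml := tri_pos hl
  have hmk := tri_strict hlk
  have nn := fun s => S2_nonneg P γ ξ c (tri k) (p ^ N) s
  have hpt : ∀ x, ‖FF P γ ξ c s x‖ ^ (2 * tri l) * ‖FF P γ ξ c s' x‖ ^ (2 * (tri k - tri l)) ≤
      (((p ^ a : ℕ) : ℝ) ^ (2 * tri l) * ((p ^ b : ℕ) : ℝ) ^ (2 * (tri k - tri l))) *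
      ∑ J ∈ parts (p ^ a) ξ s, ∑ J' ∈ parts (p ^ b) ξ s',
        ‖FF P γ ξ c J x‖ ^ (2 * tri l) * ‖FF P γ ξ c J' x‖ ^ (2 * (tri k - tri l)) := by
    intro x
    rw [← Finset.sum_mul_sum]
    have g1 := FF_norm_pow_le P γ ξ c s x (p ^ a) (by positivity) (2 * tri l) (by omega)
    have g2 := FF_norm_pow_le P γ ξ c s' x (p ^ b) (by positivity) (2 * (tri k - tri l)) (by omega)
    calc _ ≤ _ := mul_le_mul g1 g2 (by positivity) (by positivity)
      _ = _ := by ring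
  have hJ : ∀ J ∈ parts (p ^ a) ξ s, ∀ J' ∈ parts (p ^ b) ξ s',
      ∑ x, ‖FF P γ ξ c J x‖ ^ (2 * tri l) * ‖FF P γ ξ c J' x‖ ^ (2 * (tri k - tri l)) ≤
      C * ((S2 P γ ξ c (tri k) (p ^ N) s) ^ (tri l) * (S2 P γ ξ c (tri k) (p ^ N) s') ^ (tri k - tri l)) := by
    intro J hJ J' hJ'
    obtain ⟨_, ⟨i, hi, rfl⟩, ht⟩ := parts_mod hJ
    obtain ⟨_, ⟨i', hi', rfl⟩, ht'⟩ := parts_mod hJ'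
    have h4 : ¬ (p : ℤ) ∣ ξ i - ξ i' := by
      intro h
      apply h3
      have h5 := h1 i hi
      have h6 := h2 i' hi'
      rw [pow_one] at h5 h6
      have := dvd_add (dvd_sub h h5) h6
      have e : ξ i - ξ i' - (ξ i - t) + (ξ i' - t') = t - t' := by ring
      rwa [e] at this
    refine (hB.2 γ hγ ξ c J J' (ξ i) (ξ i') (by intro j hj; have := ht j hj; push_cast at this; exact this)
      (by intro j hj; have := ht' j hj; push_cast at this; exact this) h4).trans ?_
    apply mul_le_mul_of_nonneg_left _ hB.1
    apply mul_le_mul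
    · exact pow_le_pow_left₀ (nn _) (S2_part_le _ _ _ _ _ (pow_dvd_pow p haN) hJ) _
    · exact pow_le_pow_left₀ (nn _) (S2_part_le _ _ _ _ _ (pow_dvd_pow p hbN) hJ') _
    · exact pow_nonneg (nn _) _
    · exact pow_nonneg (nn _) _
  set Z := C * ((S2 P γ ξ c (tri k) (p ^ N) s) ^ (tri l) * (S2 P γ ξ c (tri k) (p ^ N) s') ^ (tri k - tri l)) with hZ
  have hZ0 : 0 ≤ Z := mul_nonneg hB.1 (mul_nonneg (pow_nonneg (nn _) _) (pow_nonneg (nn _) _))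
  have ca : ((parts (p ^ a) ξ s).card : ℝ) ≤ ((p ^ a : ℕ) : ℝ) := by
    exact_mod_cast parts_card (p ^ a) (by positivity) ξ s
  have cb : ((parts (p ^ b) ξ s').card : ℝ) ≤ ((p ^ b : ℕ) : ℝ) := by
    exact_mod_cast parts_card (p ^ b) (by positivity) ξ s'
  calc _ ≤ _ := Finset.sum_le_sum fun x _ => hpt x
    _ = (((p ^ a : ℕ) : ℝ) ^ (2 * tri l) * ((p ^ b : ℕ) : ℝ) ^ (2 * (tri k - tri l))) *
      ∑ J ∈ parts (p ^ a) ξ s, ∑ J' ∈ parts (p ^ b) ξ s',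
        ∑ x, ‖FF P γ ξ c J x‖ ^ (2 * tri l) * ‖FF P γ ξ c J' x‖ ^ (2 * (tri k - tri l)) := by
        rw [← Finset.mul_sum, Finset.sum_comm]
        congr 1
        exact Finset.sum_congr rfl fun J _ => Finset.sum_comm
    _ ≤ (((p ^ a : ℕ) : ℝ) ^ (2 * tri l) * ((p ^ b : ℕ) : ℝ) ^ (2 * (tri k - tri l))) *
      ∑ J ∈ parts (p ^ a) ξ s, ∑ J' ∈ parts (p ^ b) ξ s', Z := by
        apply mul_le_mul_of_nonneg_left _ (by positivity)
        exact Finset.sum_le_sum fun J h => Finset.sum_le_sum fun J' h' => hJ J h J' h'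
    _ = (((p ^ a : ℕ) : ℝ) ^ (2 * tri l) * ((p ^ b : ℕ) : ℝ) ^ (2 * (tri k - tri l))) *
      (((parts (p ^ a) ξ s).card : ℝ) * ((parts (p ^ b) ξ s').card : ℝ) * Z) := by
        simp only [Finset.sum_const, nsmul_eq_mul]; ring
    _ ≤ (((p ^ a : ℕ) : ℝ) ^ (2 * tri l) * ((p ^ b : ℕ) : ℝ) ^ (2 * (tri k - tri l))) *
      (((p ^ a : ℕ) : ℝ) * ((p ^ b : ℕ) : ℝ) * Z) := by
        gcongr
    _ = _ := by rw [hZ, pow_succ, pow_succ]; ring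

end PartE

section PartG
open Polynomial
theorem broad_narrow {ι : Type*} [DecidableEq ι] (t : Finset ι) (f : ι → ℂ) (Q m m₁ : ℕ) (hm : 1 ≤ m) (hm1 : m₁ ≤ m)
    (hQ : t.card ≤ Q) (η : ℝ) (h0 : 0 < η) (h1 : η ≤ 1) :
    ‖∑ c ∈ t, f c‖ ^ (2 * m) ≤ (1 + Q * η) ^ (2 * m) * ∑ c ∈ t, ‖f c‖ ^ (2 * m) +
      (Q / η) ^ (2 * m) * ∑ c ∈ t, ∑ c' ∈ t with c' ≠ c, ‖f c‖ ^ (2 * m₁) * ‖f c'‖ ^ (2 * (m - m₁)) := by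
  rcases t.eq_empty_or_nonempty with rfl | hne
  · rw [Finset.sum_empty, norm_zero, zero_pow (by omega)]; simp
  obtain ⟨j, hj, hmax⟩ := Finset.exists_max_image t (fun c => ‖f c‖) hne
  have hsum : ‖∑ c ∈ t, f c‖ ≤ ∑ c ∈ t, ‖f c‖ := norm_sum_le _ _
  by_cases hcase : ∃ c' ∈ t, c' ≠ j ∧ η * ‖f j‖ ≤ ‖f c'‖
  · obtain ⟨c', hc', hne', hη⟩ := hcase
    have g1 : ‖∑ c ∈ t, f c‖ ≤ Q * ‖f j‖ := by
      refine hsum.trans ?_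
      calc ∑ c ∈ t, ‖f c‖ ≤ ∑ c ∈ t, ‖f j‖ := Finset.sum_le_sum hmax
        _ = t.card * ‖f j‖ := by simp
        _ ≤ Q * ‖f j‖ := by gcongr
    have g2 : ‖f j‖ ≤ ‖f c'‖ / η := by rw [le_div_iff₀ h0]; linarith
    have g3 : ‖f j‖ ^ (2 * m) ≤ (1 / η) ^ (2 * m) * (‖f j‖ ^ (2 * m₁) * ‖f c'‖ ^ (2 * (m - m₁))) := by
      have e : 2 * m = 2 * m₁ + 2 * (m - m₁) := by omega
      have hη1 : 1 ≤ 1 / η := by rw [le_div_iff₀ h0]; linarith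
      calc ‖f j‖ ^ (2 * m) = ‖f j‖ ^ (2 * m₁) * ‖f j‖ ^ (2 * (m - m₁)) := by rw [← pow_add, ← e]
        _ ≤ ‖f j‖ ^ (2 * m₁) * (‖f c'‖ / η) ^ (2 * (m - m₁)) := by gcongr
        _ = (1 / η) ^ (2 * (m - m₁)) * (‖f j‖ ^ (2 * m₁) * ‖f c'‖ ^ (2 * (m - m₁))) := by
            rw [div_eq_mul_one_div, mul_pow]; ring
        _ ≤ _ := by
            apply mul_le_mul_of_nonneg_right _ (by positivity)
            exact pow_le_pow_right₀ hη1 (by omega)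
    have g4 : ‖f j‖ ^ (2 * m₁) * ‖f c'‖ ^ (2 * (m - m₁)) ≤
        ∑ c ∈ t, ∑ c' ∈ t with c' ≠ c, ‖f c‖ ^ (2 * m₁) * ‖f c'‖ ^ (2 * (m - m₁)) := by
      refine le_trans ?_ (Finset.single_le_sum
        (f := fun c => ∑ c' ∈ t with c' ≠ c, ‖f c‖ ^ (2 * m₁) * ‖f c'‖ ^ (2 * (m - m₁)))
        (fun c _ => Finset.sum_nonneg fun _ _ => by positivity) hj)
      exact Finset.single_le_sum (f := fun c' => ‖f j‖ ^ (2 * m₁) * ‖f c'‖ ^ (2 * (m - m₁)))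
        (fun _ _ => by positivity) (Finset.mem_filter.2 ⟨hc', hne'⟩)
    calc ‖∑ c ∈ t, f c‖ ^ (2 * m) ≤ (Q * ‖f j‖) ^ (2 * m) := by gcongr
      _ = (Q : ℝ) ^ (2 * m) * ‖f j‖ ^ (2 * m) := mul_pow _ _ _
      _ ≤ (Q : ℝ) ^ (2 * m) * ((1 / η) ^ (2 * m) * (‖f j‖ ^ (2 * m₁) * ‖f c'‖ ^ (2 * (m - m₁)))) := by gcongr
      _ = (Q / η) ^ (2 * m) * (‖f j‖ ^ (2 * m₁) * ‖f c'‖ ^ (2 * (m - m₁))) := by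
          rw [div_eq_mul_one_div (Q : ℝ), mul_pow]; ring
      _ ≤ (Q / η) ^ (2 * m) * ∑ c ∈ t, ∑ c' ∈ t with c' ≠ c, ‖f c‖ ^ (2 * m₁) * ‖f c'‖ ^ (2 * (m - m₁)) := by
          gcongr
      _ ≤ _ := le_add_of_nonneg_left (by positivity)
  · push Not at hcase
    have g1 : ‖∑ c ∈ t, f c‖ ≤ (1 + Q * η) * ‖f j‖ := by
      refine hsum.trans ?_
      rw [← Finset.add_sum_erase _ _ hj]
      have : ∑ c ∈ t.erase j, ‖f c‖ ≤ ∑ c ∈ t.erase j, η * ‖f j‖ :=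
        Finset.sum_le_sum fun c hc => (hcase c (Finset.mem_of_mem_erase hc) (Finset.ne_of_mem_erase hc)).le
      have h2 : ∑ c ∈ t.erase j, η * ‖f j‖ ≤ Q * (η * ‖f j‖) := by
        rw [Finset.sum_const, nsmul_eq_mul]
        apply mul_le_mul_of_nonneg_right _ (by positivity)
        exact_mod_cast (Finset.card_le_card (Finset.erase_subset j t)).trans hQ
      linarith
    calc ‖∑ c ∈ t, f c‖ ^ (2 * m) ≤ ((1 + Q * η) * ‖f j‖) ^ (2 * m) := by gcongr
      _ = (1 + Q * η) ^ (2 * m) * ‖f j‖ ^ (2 * m) := mul_pow _ _ _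
      _ ≤ (1 + Q * η) ^ (2 * m) * ∑ c ∈ t, ‖f c‖ ^ (2 * m) := by
          gcongr
          exact Finset.single_le_sum (f := fun c => ‖f c‖ ^ (2 * m)) (fun _ _ => by positivity) hj
      _ ≤ _ := le_add_of_nonneg_right (by positivity)

theorem Dec_reduce {p M k N l : ℕ} [Fact p.Prime] {C₁ C₂ η : ℝ} (hk : 1 ≤ k) (hkp : k < p) (hlk : l ≤ k)
    (hN : 1 ≤ N) (hM : k * N ≤ M) (h0 : 0 < η) (h1 : η ≤ 1) (hD : Dec p M k (N - 1) C₁)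
    (hB : Bil p M k N l 1 1 C₂) :
    Dec p M k N ((1 + p * η) ^ (2 * tri k) * C₁ + (p / η) ^ (2 * tri k) * p ^ 2 * C₂) := by
  refine ⟨by have := hD.1; have := hB.1; positivity, fun γ hγ ξ c s => ?_⟩
  set P := (p : ZMod (p ^ M)) ^ (M - k * N) with hP
  have hpp : 0 < p := (Fact.out : p.Prime).pos
  have hm := tri_pos hk
  have hml := tri_mono hlk
  have nn := fun s => S2_nonneg P γ ξ c (tri k) (p ^ N) s
  have hdv : p ∣ p ^ N := dvd_pow_self p (by omega)
  have hpt : ∀ x, ‖FF P γ ξ c s x‖ ^ (2 * tri k) ≤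
      (1 + p * η) ^ (2 * tri k) * ∑ J ∈ parts p ξ s, ‖FF P γ ξ c J x‖ ^ (2 * tri k) +
      (p / η) ^ (2 * tri k) * ∑ J ∈ parts p ξ s, ∑ J' ∈ parts p ξ s with J' ≠ J,
        ‖FF P γ ξ c J x‖ ^ (2 * tri l) * ‖FF P γ ξ c J' x‖ ^ (2 * (tri k - tri l)) := fun x => by
    rw [← FF_parts P γ ξ c s x p]
    exact broad_narrow (parts p ξ s) (fun J => FF P γ ξ c J x) p (tri k) (tri l) hm hml (parts_card p hpp ξ s) η h0 h1
  refine (Finset.sum_le_sum fun x _ => hpt x).trans ?_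
  rw [Finset.sum_add_distrib, ← Finset.mul_sum, ← Finset.mul_sum, add_mul]
  set S := S2 P γ ξ c (tri k) (p ^ N) s with hS
  apply add_le_add
  · rw [mul_assoc]
    apply mul_le_mul_of_nonneg_left _ (by positivity)
    rw [Finset.sum_comm]
    calc _ ≤ ∑ J ∈ parts p ξ s, C₁ * (S2 P γ ξ c (tri k) (p ^ N) J) ^ tri k := by
          refine Finset.sum_le_sum fun J hJ => ?_
          obtain ⟨_, ⟨i, hi, rfl⟩, ht⟩ := parts_mod hJ
          exact rescale hk hkp le_rfl hN hM hD γ hγ ξ c J (ξ i) (by simpa using ht)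
      _ ≤ _ := by
          rw [← Finset.mul_sum]
          apply mul_le_mul_of_nonneg_left _ hD.1
          rw [hS, ← S2_sum P γ ξ c (tri k) hdv s]
          exact sum_pow_le' _ _ (fun J _ => nn J) _ hm
  · rw [mul_assoc, mul_assoc]
    apply mul_le_mul_of_nonneg_left _ (by positivity)
    rw [Finset.sum_comm]
    have hJ : ∀ J ∈ parts p ξ s, ∀ J' ∈ parts p ξ s, J' ≠ J →
        ∑ x, ‖FF P γ ξ c J x‖ ^ (2 * tri l) * ‖FF P γ ξ c J' x‖ ^ (2 * (tri k - tri l)) ≤ C₂ * S ^ tri k := by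
      intro J hJ J' hJ' hne
      obtain ⟨i, hi, hiJ, eJ⟩ := parts_rep hJ
      obtain ⟨i', hi', hiJ', eJ'⟩ := parts_rep hJ'
      have h4 : ¬ (p : ℤ) ∣ ξ i - ξ i' := by
        intro h
        have : i ∈ J' := by rw [eJ']; simp [hi, h]
        exact (Finset.disjoint_left.1 (parts_disjoint hJ' hJ hne)) this hiJ
      have h5 := hB.2 γ hγ ξ c J J' (ξ i) (ξ i')
        (by intro j hj; rw [eJ] at hj; simpa using (Finset.mem_filter.1 hj).2)
        (by intro j hj; rw [eJ'] at hj; simpa using (Finset.mem_filter.1 hj).2) h4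
      refine h5.trans ?_
      apply mul_le_mul_of_nonneg_left _ hB.1
      have e : tri k = tri l + (tri k - tri l) := by omega
      conv_rhs => rw [e, pow_add]
      apply mul_le_mul
      · exact pow_le_pow_left₀ (nn _) (S2_part_le _ _ _ _ _ hdv hJ) _
      · exact pow_le_pow_left₀ (nn _) (S2_part_le _ _ _ _ _ hdv hJ') _
      · exact pow_nonneg (nn _) _
      · exact pow_nonneg (nn _) _
    have hZ0 : 0 ≤ C₂ * S ^ tri k := mul_nonneg hB.1 (pow_nonneg (nn _) _)
    have ca : ((parts p ξ s).card : ℝ) ≤ p := by exact_mod_cast parts_card p hpp ξ s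
    calc _ ≤ ∑ J ∈ parts p ξ s, (p : ℝ) * (C₂ * S ^ tri k) := by
          refine Finset.sum_le_sum fun J hJ₁ => ?_
          rw [Finset.sum_comm]
          refine (Finset.sum_le_sum fun J' hJ' => hJ J hJ₁ J' (Finset.mem_filter.1 hJ').1
            (Finset.mem_filter.1 hJ').2).trans ?_
          rw [Finset.sum_const, nsmul_eq_mul]
          apply mul_le_mul_of_nonneg_right _ hZ0
          refine le_trans ?_ ca
          exact_mod_cast Finset.card_le_card (Finset.filter_subset _ _)
      _ = (parts p ξ s).card * ((p : ℝ) * (C₂ * S ^ tri k)) := by simp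
      _ ≤ p * ((p : ℝ) * (C₂ * S ^ tri k)) := by gcongr
      _ = _ := by ring

theorem Dec_one {p M N : ℕ} [Fact p.Prime] (hM : N ≤ M) : Dec p M 1 N 1 := by
  rcases Nat.eq_zero_or_pos N with rfl | hN
  · exact Dec_zero p M 1 le_rfl
  have hM1 : 1 ≤ M := by omega
  refine ⟨zero_le_one, fun γ hγ ξ a s => ?_⟩
  have t1 : tri 1 = 1 := rfl
  rw [t1, one_mul, pow_one, mul_one, one_mul]
  set π : ZMod (p ^ M) := (p : ZMod (p ^ M)) with hπ
  set P := π ^ (M - N) with hP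
  unfold S2 Nrm
  simp only [Nat.cast_one, div_one, Real.rpow_one, mul_one]
  -- orthogonality
  have orth : ∀ i i' : ℤ, ¬ ((p : ℤ) ^ N ∣ ξ i - ξ i') →
      ∑ x : Fin 1 → ZMod (p ^ M), (ZMod.stdAddChar (P * ∑ j, x j * (γ j).eval ((ξ i : ℤ) : ZMod (p ^ M))) : ℂ) *
        (starRingEnd ℂ) (ZMod.stdAddChar (P * ∑ j, x j * (γ j).eval ((ξ i' : ℤ) : ZMod (p ^ M)))) = 0 := by
    intro i i' hne
    set d : ZMod (p ^ M) := P * ((γ 0).eval ((ξ i : ℤ) : ZMod (p ^ M)) - (γ 0).eval ((ξ i' : ℤ) : ZMod (p ^ M))) with hd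
    have hd0 : d ≠ 0 := by
      obtain ⟨g, hg⟩ := hγ 0
      obtain ⟨h, hh⟩ := Polynomial.sub_dvd_eval_sub ((ξ i : ℤ) : ZMod (p ^ M)) ((ξ i' : ℤ) : ZMod (p ^ M)) g
      have e1 : d = (P * (((ξ i : ℤ) : ZMod (p ^ M)) - ((ξ i' : ℤ) : ZMod (p ^ M)))) * (1 + π * h) := by
        rw [hd, hg]
        simp only [eval_add, eval_mul, eval_C, eval_pow, eval_X]
        simp only [Fin.val_zero, zero_add, pow_one]
        linear_combination (P * π) * hh
      have hu : IsUnit (1 + π * h) := by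
        apply redp_loc hM1
        rw [map_add, map_mul, redp_pi hM1, map_one, zero_mul, add_zero]
        exact one_ne_zero
      intro h0
      rw [e1, hu.mul_left_eq_zero, hP, hπ] at h0
      have h2 : (((p : ℤ) ^ (M - N) * (ξ i - ξ i') : ℤ) : ZMod (p ^ M)) = 0 := by
        push_cast; exact h0
      rw [ZMod.intCast_zmod_eq_zero_iff_dvd] at h2
      apply hne
      have e2 : ((p ^ M : ℕ) : ℤ) = (p : ℤ) ^ (M - N) * (p : ℤ) ^ N := by
        push_cast; rw [← pow_add]; congr 1; omega
      rw [e2] at h2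
      have hp0 : (p : ℤ) ≠ 0 := by exact_mod_cast (Fact.out : p.Prime).ne_zero
      exact (mul_dvd_mul_iff_left (pow_ne_zero _ hp0)).1 h2
    have e3 : ∀ x : Fin 1 → ZMod (p ^ M), (ZMod.stdAddChar (P * ∑ j, x j * (γ j).eval ((ξ i : ℤ) : ZMod (p ^ M))) : ℂ) *
        (starRingEnd ℂ) (ZMod.stdAddChar (P * ∑ j, x j * (γ j).eval ((ξ i' : ℤ) : ZMod (p ^ M)))) =
        ZMod.stdAddChar (d * x 0) := by
      intro x
      rw [← AddChar.map_neg_eq_conj, ← AddChar.map_add_eq_mul]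
      congr 1
      simp only [Fin.sum_univ_one, hd]
      ring
    rw [Finset.sum_congr rfl fun x _ => e3 x]
    rw [← Equiv.sum_comp (Equiv.funUnique (Fin 1) (ZMod (p ^ M))).symm]
    have := AddChar.sum_mulShift (R := ZMod (p ^ M)) d (ZMod.isPrimitive_stdAddChar (p ^ M))
    rw [if_neg hd0] at this
    rw [Nat.cast_zero] at this
    rw [← this]
    refine Finset.sum_congr rfl fun x _ => ?_
    rw [mul_comm]
    rfl
  have cross : ∀ J ∈ parts (p ^ N) ξ s, ∀ J' ∈ parts (p ^ N) ξ s, J ≠ J' →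
      ∑ x, FF P γ ξ a J x * (starRingEnd ℂ) (FF P γ ξ a J' x) = 0 := by
    intro J hJ J' hJ' hne
    have e : ∀ x, FF P γ ξ a J x * (starRingEnd ℂ) (FF P γ ξ a J' x) = ∑ i ∈ J, ∑ i' ∈ J',
        (a i * (starRingEnd ℂ) (a i')) *
        ((ZMod.stdAddChar (P * ∑ j, x j * (γ j).eval ((ξ i : ℤ) : ZMod (p ^ M))) : ℂ) *
        (starRingEnd ℂ) (ZMod.stdAddChar (P * ∑ j, x j * (γ j).eval ((ξ i' : ℤ) : ZMod (p ^ M))))) := by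
      intro x
      unfold FF
      rw [map_sum, Finset.sum_mul_sum]
      refine Finset.sum_congr rfl fun i _ => Finset.sum_congr rfl fun i' _ => ?_
      rw [map_mul (starRingEnd ℂ)]; ring
    rw [Finset.sum_congr rfl fun x _ => e x, Finset.sum_comm]
    refine Finset.sum_eq_zero fun i hi => ?_
    rw [Finset.sum_comm]
    refine Finset.sum_eq_zero fun i' hi' => ?_
    rw [← Finset.mul_sum, orth i i', mul_zero]
    intro hdv
    have h1 : i ∈ J' := by
      rw [parts_eq_of_mem hJ' hi', Finset.mem_filter]
      exact ⟨parts_subset hJ hi, by push_cast; exact hdv⟩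
    exact (Finset.disjoint_left.1 (parts_disjoint hJ hJ' hne)) hi h1
  apply le_of_eq
  apply Complex.ofReal_injective
  push_cast
  simp only [← Complex.mul_conj']
  have e : ∀ x, FF P γ ξ a s x * (starRingEnd ℂ) (FF P γ ξ a s x) =
      ∑ J ∈ parts (p ^ N) ξ s, ∑ J' ∈ parts (p ^ N) ξ s, FF P γ ξ a J x * (starRingEnd ℂ) (FF P γ ξ a J' x) := by
    intro x
    rw [← FF_parts P γ ξ a s x (p ^ N), map_sum, Finset.sum_mul_sum]
  rw [Finset.sum_congr rfl fun x _ => e x, Finset.sum_comm]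
  refine Finset.sum_congr rfl fun J hJ => ?_
  rw [Finset.sum_comm]
  rw [Finset.sum_eq_single J]
  · intro J' hJ' hne
    exact cross J hJ J' hJ' hne.symm
  · intro h; exact absurd hJ h

end PartG

section PartH
open Polynomial
/-- decoupling with epsilon loss -/
def VM (p k : ℕ) [Fact p.Prime] : Prop := ∀ ε : ℝ, 0 < ε → ∃ C : ℝ, 1 ≤ C ∧ ∀ N M : ℕ, k * N ≤ M →
  Dec p M k N (C * (p : ℝ) ^ (ε * N))

/-- decoupling with a power loss -/
def DecL (p k : ℕ) [Fact p.Prime] (lam : ℝ) : Prop := ∃ C : ℝ, 1 ≤ C ∧ ∀ N M : ℕ, k * N ≤ M →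
  Dec p M k N (C * (p : ℝ) ^ (lam * N))

theorem p_ge_one (p : ℕ) [Fact p.Prime] : (1 : ℝ) ≤ p := by
  exact_mod_cast (Fact.out : p.Prime).one_lt.le

theorem DecL.mono {p k : ℕ} [Fact p.Prime] {l l' : ℝ} (h : DecL p k l) (hl : l ≤ l') : DecL p k l' := by
  obtain ⟨C, hC, h⟩ := h
  refine ⟨C, hC, fun N M hM => (h N M hM).mono ?_⟩
  have := p_ge_one p
  gcongr

theorem DecL_init (p k : ℕ) [Fact p.Prime] (hk : 1 ≤ k) : DecL p k (2 * tri k) := by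
  refine ⟨1, le_rfl, fun N M _ => ⟨by positivity, fun γ _ ξ a s => ?_⟩⟩
  have hpp : 0 < p := (Fact.out : p.Prime).pos
  have hm := tri_pos hk
  have e : (p : ℝ) ^ ((2 * tri k : ℝ) * N) = ((p ^ N : ℕ) : ℝ) ^ (2 * tri k) := by
    push_cast
    rw [← pow_mul, ← Real.rpow_natCast]
    congr 1; push_cast; ring
  rw [one_mul, e]
  set P := (p : ZMod (p ^ M)) ^ (M - k * N)
  refine (Finset.sum_le_sum fun x _ => FF_norm_pow_le P γ ξ a s x (p ^ N) (by positivity) (2 * tri k) (by omega)).trans ?_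
  rw [← Finset.mul_sum, Finset.sum_comm]
  apply mul_le_mul_of_nonneg_left _ (by positivity)
  unfold S2
  refine le_trans (le_of_eq ?_) (sum_pow_le' _ _ (fun J _ => Nrm_nonneg P γ ξ a (tri k) J) _ hm)
  refine Finset.sum_congr rfl fun J _ => ?_
  unfold Nrm
  rw [root_pow hm (Finset.sum_nonneg fun _ _ => by positivity)]

/-- state of the iteration -/
def It (p k : ℕ) [Fact p.Prime] (lam : ℝ) (ρ : ℕ) (η : ℕ → ℝ) : Prop :=
  ∀ ε : ℝ, 0 < ε → ∃ C : ℝ, 1 ≤ C ∧ ∀ N M b : ℕ, k * N ≤ M → 1 ≤ b → (k.factorial) ^ (ρ + 1) ∣ b →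
    b * k ^ (ρ + 1) ≤ N → ∀ l n : ℕ, 1 ≤ l → l < k → l * n = (k - l + 1) * b →
    Bil p M k N l n b (C * (p : ℝ) ^ (lam * N - η l * b + ε * N))

/-- iterated exponents -/
noncomputable def etaSeq (k : ℕ) (lam : ℝ) : ℕ → ℕ → ℝ
  | 0, l => if l = 0 then lam else 0
  | ρ + 1, l => if l = 0 then lam else
      (1 - 1 / ((k : ℝ) - l + 1)) * etaSeq k lam ρ (l - 1) + etaSeq k lam ρ (k - l) / l

theorem eta_zero (k : ℕ) (lam : ℝ) (ρ : ℕ) : etaSeq k lam ρ 0 = lam := by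
  cases ρ <;> simp [etaSeq]

theorem eta_sum (k : ℕ) (hk : 1 ≤ k) (lam : ℝ) (ρ : ℕ) :
    ∑ l ∈ range (k - 1), etaSeq k lam ρ (l + 1) = ρ * ((1 - 1 / (k : ℝ)) * lam) := by
  induction ρ with
  | zero => simp [etaSeq]
  | succ ρ ih =>
    obtain ⟨K, rfl⟩ : ∃ K, k = K + 1 := ⟨k - 1, by omega⟩
    simp only [Nat.add_sub_cancel] at ih ⊢
    have e1 : ∀ l ∈ range K, etaSeq (K + 1) lam (ρ + 1) (l + 1) =
        (1 - 1 / ((K : ℝ) + 1 - l)) * etaSeq (K + 1) lam ρ l + etaSeq (K + 1) lam ρ (K - l) / ((l : ℝ) + 1) := by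
      intro l _
      simp only [etaSeq]
      rw [if_neg (by omega)]
      have : K + 1 - (l + 1) = K - l := by omega
      rw [this]
      push_cast
      congr 3
      · ring
    rw [Finset.sum_congr rfl e1, Finset.sum_add_distrib]
    have e2 : ∑ l ∈ range K, (1 - 1 / ((K : ℝ) + 1 - l)) * etaSeq (K + 1) lam ρ l =
        (∑ l ∈ range K, (1 - 1 / ((K : ℝ) - l)) * etaSeq (K + 1) lam ρ (l + 1)) + (1 - 1 / ((K : ℝ) + 1)) * lam := by
      have h := Finset.sum_range_succ (fun l : ℕ => (1 - 1 / ((K : ℝ) + 1 - l)) * etaSeq (K + 1) lam ρ l) K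
      have h' := Finset.sum_range_succ' (fun l : ℕ => (1 - 1 / ((K : ℝ) + 1 - l)) * etaSeq (K + 1) lam ρ l) K
      rw [h] at h'
      simp only [add_sub_cancel_left, div_one, sub_self, zero_mul, add_zero, Nat.cast_zero, sub_zero, eta_zero] at h'
      rw [h']
      congr 1
      refine Finset.sum_congr rfl fun l _ => ?_
      push_cast
      congr 3
      ring
    have e3 : ∑ l ∈ range K, etaSeq (K + 1) lam ρ (K - l) / ((l : ℝ) + 1) =
        ∑ l ∈ range K, (1 / ((K : ℝ) - l)) * etaSeq (K + 1) lam ρ (l + 1) := by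
      rw [← Finset.sum_range_reflect]
      refine Finset.sum_congr rfl fun l hl => ?_
      rw [Finset.mem_range] at hl
      have h1 : K - (K - 1 - l) = l + 1 := by omega
      have h2 : ((K - 1 - l : ℕ) : ℝ) + 1 = (K : ℝ) - l := by
        rw [← Nat.cast_add_one, show K - 1 - l + 1 = K - l by omega]
        push_cast [hl.le]; ring
      rw [h1, h2]; ring
    rw [e2, e3]
    have e4 : ∑ l ∈ range K, (1 - 1 / ((K : ℝ) - l)) * etaSeq (K + 1) lam ρ (l + 1) +
        ∑ l ∈ range K, (1 / ((K : ℝ) - l)) * etaSeq (K + 1) lam ρ (l + 1) = ∑ l ∈ range K, etaSeq (K + 1) lam ρ (l + 1) := by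
      rw [← Finset.sum_add_distrib]
      exact Finset.sum_congr rfl fun l _ => by ring
    push_cast at ih ⊢
    linarith

theorem VM_common {p k : ℕ} [Fact p.Prime] (h : ∀ l, 1 ≤ l → l < k → VM p l) (ε : ℝ) (hε : 0 < ε) :
    ∃ Q : ℝ, 1 ≤ Q ∧ ∀ l, 1 ≤ l → l < k → ∀ N M : ℕ, l * N ≤ M → Dec p M l N (Q * (p : ℝ) ^ (ε * N)) := by
  have h' : ∀ l, ∃ C : ℝ, 1 ≤ C ∧ (1 ≤ l → l < k → ∀ N M : ℕ, l * N ≤ M → Dec p M l N (C * (p : ℝ) ^ (ε * N))) := by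
    intro l
    by_cases hl : 1 ≤ l ∧ l < k
    · obtain ⟨C, hC, h1⟩ := h l hl.1 hl.2 ε hε
      exact ⟨C, hC, fun _ _ => h1⟩
    · exact ⟨1, le_rfl, fun h1 h2 => absurd ⟨h1, h2⟩ hl⟩
  choose f hf1 hf2 using h'
  refine ⟨1 + ∑ l ∈ range k, f l, ?_, fun l h1 h2 N M hM => (hf2 l h1 h2 N M hM).mono ?_⟩
  · have : 0 ≤ ∑ l ∈ range k, f l := Finset.sum_nonneg fun l _ => by linarith [hf1 l]
    linarith
  · apply mul_le_mul_of_nonneg_right _ (by positivity)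
    have := Finset.single_le_sum (f := f) (fun l _ => by linarith [hf1 l]) (Finset.mem_range.2 h2)
    linarith

theorem It_init {p k : ℕ} [Fact p.Prime] (hk : 2 ≤ k) (hkp : k < p) {lam : ℝ} (hlam : 0 ≤ lam) (hL : DecL p k lam) :
    It p k lam 0 (etaSeq k lam 0) := by
  intro ε hε
  obtain ⟨C, hC, hL⟩ := hL
  refine ⟨C, hC, fun N M b hM hb hdiv hbN l n hl hlk hn => ?_⟩
  have hp := p_ge_one p
  simp only [zero_add, pow_one] at hdiv hbN
  have hn1 : 1 ≤ n := by
    rcases Nat.eq_zero_or_pos n with rfl | h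
    · rw [mul_zero] at hn
      have : 0 < (k - l + 1) * b := by positivity
      omega
    · exact h
  have hnN : n ≤ N := by
    have h1 : n ≤ l * n := Nat.le_mul_of_pos_left _ hl
    have h2 : (k - l + 1) * b ≤ k * b := Nat.mul_le_mul_right _ (by omega)
    rw [mul_comm] at hbN
    omega
  have hbN' : b ≤ N := le_trans (Nat.le_mul_of_pos_right _ (by omega)) hbN
  have hD : ∀ a, Dec p M k (N - a) (C * (p : ℝ) ^ (lam * N)) := fun a =>
    (hL (N - a) M (le_trans (Nat.mul_le_mul_left _ (Nat.sub_le _ _)) hM)).mono (by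
      gcongr
      exact_mod_cast Nat.sub_le _ _)
  refine (Bil_trivial (by omega) hlk.le hkp hn1 hnN hb hbN' hM (hD n) (hD b)).mono ?_
  gcongr
  simp only [etaSeq]
  rw [if_neg (by omega)]
  have : 0 ≤ ε * N := by positivity
  linarith

theorem rpow_combine {Q q e₁ e₂ θ : ℝ} (hQ : 0 < Q) (hq : 0 < q) :
    (Q * q ^ e₁) ^ (1 - θ) * (Q * q ^ e₂) ^ θ = Q * q ^ ((1 - θ) * e₁ + θ * e₂) := by
  rw [Real.mul_rpow hQ.le (by positivity), Real.mul_rpow hQ.le (by positivity), ← Real.rpow_mul hq.le,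
    ← Real.rpow_mul hq.le, Real.rpow_add hq, mul_comm e₁, mul_comm e₂]
  have : Q ^ (1 - θ) * Q ^ θ = Q := by
    rw [← Real.rpow_add hQ]; simp
  linear_combination (q ^ ((1 - θ) * e₁) * q ^ (θ * e₂)) * this

theorem It_step {p k : ℕ} [Fact p.Prime] (hk : 2 ≤ k) (hkp : k < p) (hVM : ∀ l, 1 ≤ l → l < k → VM p l)
    {lam : ℝ} (hlam : 0 ≤ lam) (hL : DecL p k lam) (ρ : ℕ) (hI : It p k lam ρ (etaSeq k lam ρ)) :
    It p k lam (ρ + 1) (etaSeq k lam (ρ + 1)) := by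
  intro ε hε
  obtain ⟨C₁, hC₁, hL⟩ := hL
  obtain ⟨C₂, hC₂, hI⟩ := hI (ε / 2) (by linarith)
  obtain ⟨C₃, hC₃, hV⟩ := VM_common hVM (ε / 2) (by linarith)
  set Q := C₁ * (C₂ * C₃) with hQ
  have hQ1 : 1 ≤ Q := one_le_mul_of_one_le_of_one_le hC₁ (one_le_mul_of_one_le_of_one_le hC₂ hC₃)
  have hQa : C₁ ≤ Q := le_mul_of_one_le_right (by linarith) (one_le_mul_of_one_le_of_one_le hC₂ hC₃)
  have hQb : C₃ * C₂ ≤ Q := by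
    rw [mul_comm C₃]; exact le_mul_of_one_le_left (by nlinarith) hC₁
  have hp := p_ge_one p
  have hp0 : (0 : ℝ) < p := by linarith
  refine ⟨Q, hQ1, fun N M b hM hb hdiv hbN l n hl hlk hn => ?_⟩
  have hdiv' : k.factorial ^ (ρ + 1) ∣ b := (pow_dvd_pow _ (by omega)).trans hdiv
  have hkpos : 0 < k := by omega
  have hn1 : 1 ≤ n := by
    rcases Nat.eq_zero_or_pos n with rfl | h
    · rw [mul_zero] at hn
      have : 0 < (k - l + 1) * b := by positivity
      omega
    · exact h
  have hnkb : n ≤ k * b := by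
    have h1 : n ≤ l * n := Nat.le_mul_of_pos_left _ hl
    have h2 : (k - l + 1) * b ≤ k * b := Nat.mul_le_mul_right _ (by omega)
    omega
  have hndiv : k.factorial ^ (ρ + 1) ∣ n := by
    obtain ⟨c, hc⟩ := hdiv
    obtain ⟨d, hd⟩ := Nat.dvd_factorial hl hlk.le
    have : l * n = l * (k.factorial ^ (ρ + 1) * ((k - l + 1) * (d * c))) := by
      rw [hn, hc, pow_succ (k.factorial) (ρ + 1)]
      conv_lhs => rw [show k.factorial ^ (ρ + 1) * k.factorial * c = k.factorial ^ (ρ + 1) * (l * d) * c by rw [← hd]]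
      ring
    exact ⟨_, Nat.eq_of_mul_eq_mul_left hl this⟩
  have hkk : k * b * k ^ (ρ + 1) ≤ N := by
    calc k * b * k ^ (ρ + 1) = b * k ^ (ρ + 1 + 1) := by ring
      _ ≤ N := hbN
  have hnN : n * k ^ (ρ + 1) ≤ N := le_trans (Nat.mul_le_mul_right _ hnkb) hkk
  have hbN' : b * k ^ (ρ + 1) ≤ N := by
    refine le_trans (Nat.mul_le_mul_right _ ?_) hkk
    exact Nat.le_mul_of_pos_left _ hkpos
  have hkpow : k ≤ k ^ (ρ + 1) := Nat.le_self_pow (by omega) k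
  have hnkN : k * n ≤ N := by
    refine le_trans ?_ hnN
    rw [mul_comm]; exact Nat.mul_le_mul_left _ hkpow
  have hkbN : k * b ≤ N := by
    refine le_trans ?_ hbN'
    rw [mul_comm]; exact Nat.mul_le_mul_left _ hkpow
  have hbN2 : b ≤ N := le_trans (Nat.le_mul_of_pos_left _ hkpos) hkbN
  -- general estimate for the Dec factor
  have hDec : ∀ l', 1 ≤ l' → l' < k → ∀ n' ≤ N, Dec p M l' n' (C₃ * (p : ℝ) ^ (ε / 2 * N)) := by
    intro l' h1 h2 n' hn'
    refine (hV l' h1 h2 n' M (le_trans (Nat.mul_le_mul h2.le hn') hM)).mono ?_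
    gcongr
  have hmerge : ∀ e : ℝ, C₃ * (p : ℝ) ^ (ε / 2 * N) * (C₂ * (p : ℝ) ^ (e + ε / 2 * N)) ≤
      Q * (p : ℝ) ^ (e + ε * N) := by
    intro e
    have : (p : ℝ) ^ (e + ε * N) = (p : ℝ) ^ (ε / 2 * N) * (p : ℝ) ^ (e + ε / 2 * N) := by
      rw [← Real.rpow_add hp0]; congr 1; ring
    rw [this]
    calc _ = (C₃ * C₂) * ((p : ℝ) ^ (ε / 2 * N) * (p : ℝ) ^ (e + ε / 2 * N)) := by ring
      _ ≤ _ := by gcongr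
  -- first factor
  have hB1 : Bil p M k N (l - 1) n b (Q * (p : ℝ) ^ (lam * N - etaSeq k lam ρ (l - 1) * b + ε * N)) := by
    rcases Nat.eq_or_lt_of_le hl with h1 | h1
    · rw [← h1, Nat.sub_self, eta_zero]
      refine (Bil_zero (by omega) hkp hb hbN2 hM
        (hL (N - b) M (le_trans (Nat.mul_le_mul_left _ (Nat.sub_le _ _)) hM))).mono ?_
      have : ((N - b : ℕ) : ℝ) = (N : ℝ) - b := by push_cast [hbN2]; ring
      rw [this]
      have : 0 ≤ ε * N := by positivity
      gcongr
      linarith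
    · obtain ⟨d, hd⟩ : (l - 1) ∣ b :=
        ((Nat.dvd_factorial (by omega) (by omega)).trans (dvd_pow_self _ (by omega))).trans hdiv'
      set n' := (k - (l - 1) + 1) * d with hn'
      have hn'' : (l - 1) * n' = (k - (l - 1) + 1) * b := by rw [hn', hd]; ring
      have hle : n ≤ n' := by
        have : l * (l - 1) * n ≤ l * (l - 1) * n' := by
          calc l * (l - 1) * n = (l - 1) * (l * n) := by ring
            _ = ((l - 1) * (k - l + 1)) * b := by rw [hn]; ring
            _ ≤ (l * (k - (l - 1) + 1)) * b := by
                apply Nat.mul_le_mul_right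
                exact Nat.mul_le_mul (by omega) (by omega)
            _ = l * ((l - 1) * n') := by rw [hn'']; ring
            _ = _ := by ring
        exact Nat.le_of_mul_le_mul_left this (Nat.mul_pos (by omega) (by omega))
      have hn'N : n' ≤ N := by
        have h1 : n' ≤ (l - 1) * n' := Nat.le_mul_of_pos_left _ (by omega)
        have h2 : (k - (l - 1) + 1) * b ≤ k * b := Nat.mul_le_mul_right _ (by omega)
        omega
      have hI' := hI N M b hM hb hdiv' hbN' (l - 1) n' (by omega) (by omega) hn''
      exact (Bil_descend (by omega) (by omega) hkp hn1 hb hle hn'N hn''.le hM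
        (hDec (l - 1) (by omega) (by omega) (n' - n) (by omega)) hI').mono (hmerge _)
  have hB2 : Bil p M k N (k - l) b n (Q * (p : ℝ) ^ (lam * N - etaSeq k lam ρ (k - l) * n + ε * N)) := by
    obtain ⟨d, hd⟩ : (k - l) ∣ n :=
      ((Nat.dvd_factorial (by omega) (by omega)).trans (dvd_pow_self _ (by omega))).trans hndiv
    set n' := (l + 1) * d with hn'
    have hn'' : (k - l) * n' = (k - (k - l) + 1) * n := by
      rw [hn', hd, show k - (k - l) = l by omega]; ring
    have hn3 : (k - l) * n' = (l + 1) * n := by rw [hn'', show k - (k - l) = l by omega]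
    have hle : b ≤ n' := by
      have : (l * (k - l)) * b ≤ (l * (k - l)) * n' := by
        calc (l * (k - l)) * b ≤ ((l + 1) * (k - l + 1)) * b :=
              Nat.mul_le_mul_right _ (Nat.mul_le_mul (by omega) (by omega))
          _ = (l + 1) * (l * n) := by rw [hn]; ring
          _ = l * ((k - l) * n') := by rw [hn3]; ring
          _ = _ := by ring
      exact Nat.le_of_mul_le_mul_left this (Nat.mul_pos (by omega) (by omega))
    have hn'N : n' ≤ N := by
      have h1 : n' ≤ (k - l) * n' := Nat.le_mul_of_pos_left _ (by omega)
      have h2 : (l + 1) * n ≤ k * n := Nat.mul_le_mul_right _ (by omega)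
      omega
    have hI' := hI N M n hM hn1 hndiv hnN (k - l) n' (by omega) (by omega) hn''
    exact (Bil_descend (by omega) (by omega) hkp hb hn1 hle hn'N hn''.le hM
      (hDec (k - l) (by omega) (by omega) (n' - b) (by omega)) hI').mono (hmerge _)
  refine (Bil_holder hl hlk hB1 hB2).mono (le_of_eq ?_)
  rw [rpow_combine (by linarith) hp0]
  congr 2
  have hden : (0 : ℝ) < (k : ℝ) - l + 1 := by
    have : (l : ℝ) < k := by exact_mod_cast hlk
    linarith
  have hl0 : (0 : ℝ) < l := by exact_mod_cast hl
  have hnr : (l : ℝ) * n = ((k : ℝ) - l + 1) * b := by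
    have : ((l * n : ℕ) : ℝ) = (((k - l + 1) * b : ℕ) : ℝ) := by rw [hn]
    push_cast [hlk.le] at this
    exact this
  have hne : (n : ℝ) = ((k : ℝ) - l + 1) * b / l := by rw [← hnr]; field_simp
  have he : etaSeq k lam (ρ + 1) l = (1 - 1 / ((k : ℝ) - l + 1)) * etaSeq k lam ρ (l - 1) + etaSeq k lam ρ (k - l) / l := by
    simp only [etaSeq]
    rw [if_neg (by omega)]
  rw [he, hne]
  field_simp
  ring

end PartH

section PartI
open Polynomial
theorem It_all {p k : ℕ} [Fact p.Prime] (hk : 2 ≤ k) (hkp : k < p) (hVM : ∀ l, 1 ≤ l → l < k → VM p l)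
    {lam : ℝ} (hlam : 0 ≤ lam) (hL : DecL p k lam) (ρ : ℕ) : It p k lam ρ (etaSeq k lam ρ) := by
  induction ρ with
  | zero => exact It_init hk hkp hlam hL
  | succ ρ ih => exact It_step hk hkp hVM hlam hL ρ ih

theorem small_eta (A : ℝ) (hA : 1 < A) (P : ℝ) (hP : 0 < P) (m : ℕ) (hm : 1 ≤ m) :
    ∃ η : ℝ, 0 < η ∧ η ≤ 1 ∧ (1 + P * η) ^ m ≤ A := by
  set t := A ^ (1 / (m : ℝ)) with ht
  have hm0 : (0 : ℝ) < m := by exact_mod_cast hm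
  have ht1 : 1 < t := Real.one_lt_rpow hA (by positivity)
  refine ⟨min 1 ((t - 1) / P), lt_min one_pos (div_pos (by linarith) hP), min_le_left _ _, ?_⟩
  have h1 : P * min 1 ((t - 1) / P) ≤ t - 1 := by
    have := mul_le_mul_of_nonneg_left (min_le_right 1 ((t - 1) / P)) hP.le
    rwa [mul_div_cancel₀ _ hP.ne'] at this
  have h0 : 0 ≤ P * min 1 ((t - 1) / P) := by
    have : 0 < min 1 ((t - 1) / P) := lt_min one_pos (div_pos (by linarith) hP)
    positivity
  calc _ ≤ t ^ m := by
        apply pow_le_pow_left₀ (by linarith)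
        linarith
    _ = A := by
        rw [ht, ← Real.rpow_natCast, ← Real.rpow_mul (by linarith)]
        rw [one_div_mul_cancel hm0.ne', Real.rpow_one]

theorem DecL_of_Bil {p k : ℕ} [Fact p.Prime] (hk : 1 ≤ k) (hkp : k < p) {μ : ℝ} (hμ : 0 < μ) (l : ℕ)
    (hlk : l ≤ k) {K : ℝ} (hK : 0 ≤ K)
    (hB : ∀ N M : ℕ, 1 ≤ N → k * N ≤ M → Bil p M k N l 1 1 (K * (p : ℝ) ^ (μ * N))) : DecL p k μ := by
  have hp1 : (1 : ℝ) < p := by exact_mod_cast (Fact.out : p.Prime).one_lt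
  have hp0 : (0 : ℝ) < p := by linarith
  have hm := tri_pos hk
  obtain ⟨η, h0, h1, hη⟩ := small_eta ((p : ℝ) ^ (μ / 2)) (Real.one_lt_rpow hp1 (by linarith)) p hp0
    (2 * tri k) (by omega)
  set K' := ((p : ℝ) / η) ^ (2 * tri k) * p ^ 2 * K with hK'
  have hK'0 : 0 ≤ K' := by positivity
  set u := (p : ℝ) ^ (-(μ / 2)) with hu
  have hu1 : u < 1 := Real.rpow_lt_one_of_one_lt_of_neg hp1 (by linarith)
  have hu0 : 0 < u := by positivity
  set L := 1 + K' / (1 - u) with hL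
  have hL1 : 1 ≤ L := by
    have : 0 ≤ K' / (1 - u) := div_nonneg hK'0 (by linarith)
    linarith
  have hLK : L * u + K' ≤ L := by
    have : K' ≤ L * (1 - u) := by
      rw [hL, add_mul, div_mul_cancel₀ _ (by linarith : (1 - u) ≠ 0)]
      linarith
    linarith
  refine ⟨L, hL1, fun N => ?_⟩
  induction N with
  | zero =>
    intro M _
    refine (Dec_zero p M k hk).mono ?_
    simpa using hL1
  | succ N ih =>
    intro M hM
    have hD := ih M (le_trans (Nat.mul_le_mul_left _ (Nat.le_succ N)) hM)
    refine (Dec_reduce hk hkp hlk (Nat.succ_le_succ (Nat.zero_le N)) hM h0 h1 (by simpa using hD)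
      (hB (N + 1) M (by omega) hM)).mono ?_
    have e : (p : ℝ) ^ (μ * ((N + 1 : ℕ) : ℝ)) = (p : ℝ) ^ (μ / 2) * ((p : ℝ) ^ (μ / 2) * (p : ℝ) ^ (μ * N)) := by
      rw [← Real.rpow_add hp0, ← Real.rpow_add hp0]; congr 1; push_cast; ring
    have e2 : (p : ℝ) ^ (μ / 2) * u = 1 := by
      rw [hu, ← Real.rpow_add hp0]; simp
    set W := (p : ℝ) ^ (μ * ((N + 1 : ℕ) : ℝ))
    calc _ = (1 + p * η) ^ (2 * tri k) * (L * (p : ℝ) ^ (μ * N)) + K' * W := by rw [hK']; ring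
      _ ≤ (p : ℝ) ^ (μ / 2) * (L * (p : ℝ) ^ (μ * N)) + K' * W := by gcongr
      _ = (L * u + K') * W := by
        rw [e]
        linear_combination (-(L * (p : ℝ) ^ (μ / 2) * (p : ℝ) ^ (μ * N))) * e2
      _ ≤ L * W := by
        apply mul_le_mul_of_nonneg_right hLK
        positivity

theorem DecL_improve {p k : ℕ} [Fact p.Prime] (hk : 2 ≤ k) (hkp : k < p) (hVM : ∀ l, 1 ≤ l → l < k → VM p l)
    {ls : ℝ} (hls : 0 < ls) : ∃ c : ℝ, 0 < c ∧ ∀ lam, ls ≤ lam → DecL p k lam → ∀ μ, 0 < μ → lam - c ≤ μ →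
      DecL p k μ := by
  have hp := p_ge_one p
  have hp0 : (0 : ℝ) < p := by linarith
  set D : ℕ := (2 * tri k + 1) * (k + 1) with hDdef
  have hk0 : (0 : ℝ) < k := by exact_mod_cast (by omega : 0 < k)
  obtain ⟨R, hR⟩ := exists_nat_ge ((D + 1) * k / ls)
  have hR' : (D + 1 : ℝ) ≤ R * ls / k := by
    rw [div_le_iff₀ hls] at hR
    rw [le_div_iff₀ hk0]; exact hR
  set F := k.factorial ^ (R + 1) with hF
  set T := F * k ^ (R + 1) with hT
  have hF0 : 0 < F := by positivity
  have hT0 : 0 < T := Nat.mul_pos hF0 (pow_pos (by omega) _)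
  set c' : ℝ := 1 / (k : ℝ) ^ (R + 1) with hc'
  have hc'0 : 0 < c' := by positivity
  have hc'1 : c' ≤ 1 := by
    rw [hc', div_le_one (by positivity)]
    exact one_le_pow₀ (by exact_mod_cast (by omega : 1 ≤ k))
  refine ⟨c' / 2, by linarith, fun lam hlam hDec μ hμ hμl => ?_⟩
  have hlam0 : 0 ≤ lam := by linarith
  obtain ⟨C, hC, hI⟩ := It_all hk hkp hVM hlam0 hDec R (c' / 2) (by linarith)
  obtain ⟨C₁, hC₁, hDec'⟩ := hDec
  -- choose l
  obtain ⟨l₀, hl₀, hl₁⟩ : ∃ l₀ ∈ range (k - 1), R * lam / k ≤ etaSeq k lam R (l₀ + 1) := by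
    apply Finset.exists_le_of_sum_le (f := fun _ => R * lam / k)
    · exact ⟨0, by simp; omega⟩
    · rw [eta_sum k (by omega)]
      simp only [sum_const, card_range, nsmul_eq_mul]
      have : ((k - 1 : ℕ) : ℝ) = (k : ℝ) - 1 := by push_cast [(by omega : 1 ≤ k)]; ring
      rw [this]
      apply le_of_eq
      field_simp
  rw [Finset.mem_range] at hl₀
  set l := l₀ + 1 with hl
  have hl1 : 1 ≤ l := by omega
  have hlk : l < k := by omega
  have hη : (D + 1 : ℝ) ≤ etaSeq k lam R l := by
    refine hR'.trans (le_trans ?_ hl₁)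
    gcongr
  refine DecL_of_Bil (by omega) hkp hμ l hlk.le (K := (C + C₁) * (p : ℝ) ^ (T : ℝ)) (by positivity) ?_
  intro N M hN hM
  have hTF : F ≤ T := Nat.le_mul_of_pos_right _ (pow_pos (by omega) _)
  have key : ∀ e : ℝ, e ≤ T + (lam - c' / 2) * N → ∀ C₀ : ℝ, 0 ≤ C₀ → C₀ ≤ C + C₁ →
      C₀ * (p : ℝ) ^ e ≤ (C + C₁) * (p : ℝ) ^ (T : ℝ) * (p : ℝ) ^ (μ * N) := by
    intro e he C₀ h0 hC0
    rw [mul_assoc, ← Real.rpow_add hp0]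
    have : (lam - c' / 2) * N ≤ μ * N := by gcongr
    have : e ≤ T + μ * N := by linarith
    gcongr
  rcases Nat.lt_or_ge N T with hNT | hNT
  · have hD1 : Dec p M k (N - 1) (C₁ * (p : ℝ) ^ (lam * N)) :=
      (hDec' (N - 1) M (le_trans (Nat.mul_le_mul_left _ (Nat.sub_le _ _)) hM)).mono (by
        gcongr
        exact_mod_cast Nat.sub_le _ _)
    refine (Bil_trivial (by omega) hlk.le hkp le_rfl hN le_rfl hN hM hD1 hD1).mono (key _ ?_ _ (by linarith) (by linarith))
    have h1 : (N : ℝ) ≤ T := by exact_mod_cast hNT.le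
    have h2 : c' / 2 * N ≤ 1 * N := by gcongr; linarith
    linarith
  · set q := N / T with hq
    have hq1 : 1 ≤ q := (Nat.one_le_div_iff hT0).2 hNT
    set b := F * q with hb
    have hb1 : 1 ≤ b := Nat.mul_pos hF0 hq1
    have hbN : b * k ^ (R + 1) ≤ N := by
      calc b * k ^ (R + 1) = q * T := by rw [hb, hT]; ring
        _ ≤ N := Nat.div_mul_le_self _ _
    obtain ⟨d, hd⟩ : l ∣ b := ((Nat.dvd_factorial hl1 hlk.le).trans (dvd_pow_self _ (by omega))).trans ⟨q, rfl⟩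
    set n := (k - l + 1) * d with hn
    have hln : l * n = (k - l + 1) * b := by rw [hn, hd]; ring
    have hn1 : 1 ≤ n := by
      rcases Nat.eq_zero_or_pos n with h | h
      · rw [h, mul_zero] at hln
        have : 0 < (k - l + 1) * b := by positivity
        omega
      · exact h
    have hnkb : n ≤ k * b := by
      have h1 : n ≤ l * n := Nat.le_mul_of_pos_left _ hl1
      have h2 : (k - l + 1) * b ≤ k * b := Nat.mul_le_mul_right _ (by omega)
      omega
    have hkbN : k * b ≤ N := by
      refine le_trans ?_ hbN
      rw [mul_comm]; exact Nat.mul_le_mul_left _ (Nat.le_self_pow (by omega) k)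
    have hbN2 : b ≤ N := le_trans (Nat.le_mul_of_pos_left _ (by omega)) hkbN
    have hB := hI N M b hM hb1 ⟨q, rfl⟩ hbN l n hl1 hlk hln
    refine (Bil_crude hl1 hlk hn1 hb1 (by omega) hbN2 hB).mono ?_
    have e1 : ((p ^ n : ℕ) : ℝ) ^ (2 * tri l + 1) * ((p ^ b : ℕ) : ℝ) ^ (2 * (tri k - tri l) + 1) ≤
        (p : ℝ) ^ ((D : ℝ) * b) := by
      push_cast
      rw [← pow_mul, ← pow_mul, ← pow_add]
      have : (p : ℝ) ^ ((D : ℝ) * b) = (p : ℝ) ^ (D * b) := by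
        rw [← Real.rpow_natCast]; push_cast; rfl
      rw [this]
      apply pow_le_pow_right₀ hp
      have ht := tri_mono hlk.le
      calc n * (2 * tri l + 1) + b * (2 * (tri k - tri l) + 1)
          ≤ (k * b) * (2 * tri k + 1) + b * (2 * tri k + 1) :=
            Nat.add_le_add (Nat.mul_le_mul hnkb (by omega)) (Nat.mul_le_mul_left _ (by omega))
        _ = D * b := by rw [hDdef]; ring
    calc _ ≤ (p : ℝ) ^ ((D : ℝ) * b) * (C * (p : ℝ) ^ (lam * N - etaSeq k lam R l * b + c' / 2 * N)) := by gcongr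
      _ = C * (p : ℝ) ^ ((D : ℝ) * b + (lam * N - etaSeq k lam R l * b + c' / 2 * N)) := by
        rw [Real.rpow_add hp0 ((D : ℝ) * b)]; ring
      _ ≤ _ := key _ ?_ _ (by linarith) (by linarith)
    have hNb : c' * N ≤ b + T := by
      have h1 : N ≤ T * (q + 1) := (Nat.lt_mul_div_succ N hT0).le
      have h2 : (N : ℝ) ≤ T * (q + 1) := by exact_mod_cast h1
      have h3 : c' * T = F := by
        rw [hT, hc']; push_cast; field_simp
      have h4 : (F : ℝ) ≤ T := by exact_mod_cast hTF
      have h5 : (b : ℝ) = F * q := by rw [hb]; push_cast; ring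
      calc c' * N ≤ c' * (T * (q + 1)) := by gcongr
        _ = F * q + F := by rw [← h3]; ring
        _ ≤ b + T := by rw [h5]; linarith
    have hbb : (D + 1 : ℝ) * b ≤ etaSeq k lam R l * b := by gcongr
    nlinarith

theorem VM_of_DecL {p k : ℕ} [Fact p.Prime] (h : ∀ μ : ℝ, 0 < μ → DecL p k μ) : VM p k :=
  fun ε hε => h ε hε

theorem VM_step {p k : ℕ} [Fact p.Prime] (hk : 2 ≤ k) (hkp : k < p) (hVM : ∀ l, 1 ≤ l → l < k → VM p l) :
    VM p k := by
  set S : Set ℝ := {l | 0 < l ∧ DecL p k l} with hS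
  have hne : S.Nonempty := ⟨2 * tri k, by
    have := tri_pos (show 1 ≤ k by omega)
    exact ⟨by positivity, DecL_init p k (by omega)⟩⟩
  have hbd : BddBelow S := ⟨0, fun x hx => hx.1.le⟩
  have hinf : sInf S ≤ 0 := by
    by_contra hpos
    push Not at hpos
    obtain ⟨c, hc, h⟩ := DecL_improve hk hkp hVM hpos
    obtain ⟨lam, hl, hlt⟩ := exists_lt_of_csInf_lt hne (show sInf S < sInf S + c / 2 by linarith)
    have hge := csInf_le hbd hl
    have hμ : max (lam - c) (sInf S / 2) ∈ S :=
      ⟨lt_max_of_lt_right (by linarith), h lam hge hl.2 _ (lt_max_of_lt_right (by linarith)) (le_max_left _ _)⟩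
    have := csInf_le hbd hμ
    have h2 : max (lam - c) (sInf S / 2) < sInf S := max_lt (by linarith) (by linarith)
    linarith
  apply VM_of_DecL
  intro μ hμ
  obtain ⟨lam, hl, hlt⟩ := exists_lt_of_csInf_lt hne (show sInf S < μ by linarith)
  exact hl.2.mono hlt.le

theorem VM_all (p : ℕ) [Fact p.Prime] (k : ℕ) (hk : 1 ≤ k) (hkp : k < p) : VM p k := by
  induction k using Nat.strong_induction_on with
  | _ k ih =>
    rcases Nat.eq_or_lt_of_le hk with h | h
    · subst h
      intro ε hε
      refine ⟨1, le_rfl, fun N M hM => (Dec_one (by simpa using hM)).mono ?_⟩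
      rw [one_mul]
      exact Real.one_le_rpow (p_ge_one p) (by positivity)
    · exact VM_step h hkp fun l h1 h2 => ih l h2 h1 (by omega)

end PartI

section PartJ
open Polynomial
/-- scaled mean value with coefficients -/
theorem mean_scaled {p M k N : ℕ} [Fact p.Prime] (hk : 1 ≤ k) {C : ℝ} (hD : Dec p M k N C)
    (a : ℤ → ℂ) (ha : ∀ i, ‖a i‖ ≤ 1) :
    ∑ x : Fin k → ZMod (p ^ M), ‖∑ i ∈ Finset.Icc (1 : ℤ) ((p ^ N : ℕ) : ℤ), a i *
      ZMod.stdAddChar ((p : ZMod (p ^ M)) ^ (M - k * N) * ∑ j, x j * ((i : ℤ) : ZMod (p ^ M)) ^ (j.1 + 1))‖ ^ (2 * tri k) ≤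
      C * (((p ^ M : ℕ) : ℝ) ^ k * ((p ^ N : ℕ) : ℝ) ^ (tri k)) := by
  set s := Finset.Icc (1 : ℤ) ((p ^ N : ℕ) : ℤ) with hs
  have hm := tri_pos hk
  have hpp : 0 < p := (Fact.out : p.Prime).pos
  obtain ⟨hC, hD⟩ := hD
  have h := hD (fun j => X ^ (j.1 + 1)) (fun j => ⟨0, by simp⟩) id a s
  have e : ∀ x : Fin k → ZMod (p ^ M), FF ((p : ZMod (p ^ M)) ^ (M - k * N)) (fun j : Fin k => X ^ (j.1 + 1)) id a s x =
     ∑ i ∈ s, a i *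
      ZMod.stdAddChar ((p : ZMod (p ^ M)) ^ (M - k * N) * ∑ j, x j * ((i : ℤ) : ZMod (p ^ M)) ^ (j.1 + 1)) := by
    intro x
    simp [FF]
  simp only [e] at h
  refine h.trans (mul_le_mul_of_nonneg_left ?_ hC)
  set P := (p : ZMod (p ^ M)) ^ (M - k * N)
  set V : ℝ := ((p ^ M : ℕ) : ℝ) ^ k with hV
  have hV0 : 0 ≤ V := by positivity
  have hN : ∀ J ∈ parts (p ^ N) id s, Nrm P (fun j : Fin k => X ^ (j.1 + 1)) id a (tri k) J ≤ V ^ (1 / (tri k : ℝ)) := by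
    intro J hJ
    obtain ⟨i, hi, hiJ, hJe⟩ := parts_rep hJ
    have hJ1 : J = {i} := by
      rw [hJe]
      ext i'
      simp only [Finset.mem_filter, Finset.mem_singleton, id]
      constructor
      · rintro ⟨h1, h2⟩
        rw [hs, Finset.mem_Icc] at h1 hi
        have : i' - i = 0 := Int.eq_zero_of_abs_lt_dvd h2 (by rw [abs_lt]; constructor <;> omega)
        omega
      · rintro rfl; exact ⟨hi, by simp⟩
    rw [hJ1]
    unfold Nrm
    apply Real.rpow_le_rpow (Finset.sum_nonneg fun _ _ => by positivity) _ (by positivity)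
    calc _ ≤ ∑ x : Fin k → ZMod (p ^ M), (1 : ℝ) := by
          refine Finset.sum_le_sum fun x _ => ?_
          apply pow_le_one₀ (norm_nonneg _)
          simp only [FF, Finset.sum_singleton, norm_mul, norm_std, mul_one]
          exact ha i
      _ = V := by
          simp [hV, ZMod.card]
  have hS : S2 P (fun j : Fin k => X ^ (j.1 + 1)) id a (tri k) (p ^ N) s ≤ ((p ^ N : ℕ) : ℝ) * V ^ (1 / (tri k : ℝ)) := by
    unfold S2
    refine (Finset.sum_le_card_nsmul _ _ _ hN).trans ?_
    rw [nsmul_eq_mul]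
    gcongr
    exact_mod_cast parts_card (p ^ N) (by positivity) id s
  calc _ ≤ (((p ^ N : ℕ) : ℝ) * V ^ (1 / (tri k : ℝ))) ^ (tri k) :=
        pow_le_pow_left₀ (S2_nonneg _ _ _ _ _ _ _) hS _
    _ = _ := by rw [mul_pow, root_pow hm hV0, mul_comm]

/-- unscaled mean value with coefficients -/
theorem mean_unscaled (p : ℕ) [Fact p.Prime] (k : ℕ) (hkp : k < p) (ε : ℝ) (hε : 0 < ε) :
    ∃ C : ℝ, 1 ≤ C ∧ ∀ N M : ℕ, k * N ≤ M → ∀ a : ℤ → ℂ, (∀ i, ‖a i‖ ≤ 1) →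
    ∑ x : Fin k → ZMod (p ^ M), ‖∑ i ∈ Finset.Icc (1 : ℤ) ((p ^ N : ℕ) : ℤ), a i *
      ZMod.stdAddChar (∑ j, x j * ((i : ℤ) : ZMod (p ^ M)) ^ (j.1 + 1))‖ ^ (2 * tri k) ≤
      (C * ((p ^ N : ℕ) : ℝ) ^ ε) * (((p ^ M : ℕ) : ℝ) ^ k * ((p ^ N : ℕ) : ℝ) ^ (tri k)) := by
  have hpp : 0 < p := (Fact.out : p.Prime).pos
  have hp0 : (0 : ℝ) < p := by exact_mod_cast hpp
  rcases Nat.eq_zero_or_pos k with rfl | hk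
  · refine ⟨1, le_rfl, fun N M _ a ha => ?_⟩
    have : tri 0 = 0 := rfl
    simp only [this, mul_zero, pow_zero, Finset.sum_const, one_mul, mul_one]
    simp only [Finset.card_univ, Fintype.card_unique, one_smul]
    apply Real.one_le_rpow _ hε.le
    exact_mod_cast Nat.one_le_pow _ _ hpp
  obtain ⟨C, hC, h⟩ := VM_all p k hk hkp ε hε
  refine ⟨C, hC, fun N M hM a ha => ?_⟩
  have e1 : C * ((p ^ N : ℕ) : ℝ) ^ ε = C * (p : ℝ) ^ (ε * N) := by
    congr 1
    push_cast
    rw [← Real.rpow_natCast, ← Real.rpow_mul hp0.le, mul_comm]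
  rw [e1]
  set s := Finset.Icc (1 : ℤ) ((p ^ N : ℕ) : ℤ) with hs
  set P := (p : ZMod (p ^ M)) ^ (M - k * N) with hP
  set V : ℝ := ((p ^ M : ℕ) : ℝ) ^ k with hV
  have hV0 : 0 < V := by positivity
  have hcard : ∑ x : Fin k → ZMod (p ^ M), (1 : ℝ) = V := by simp [hV, ZMod.card]
  set G : (Fin k → ZMod (p ^ M)) → ℝ := fun x => ‖∑ i ∈ s, a i *
      ZMod.stdAddChar (∑ j, x j * ((i : ℤ) : ZMod (p ^ M)) ^ (j.1 + 1))‖ ^ (2 * tri k) with hG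
  set B := C * (p : ℝ) ^ (ε * N) * (V * ((p ^ N : ℕ) : ℝ) ^ (tri k)) with hB
  have hshift : ∀ y : Fin k → ZMod (p ^ M), ∑ x, G x = ∑ x, G (x + P • y) := fun y =>
    (Equiv.sum_comp (Equiv.addRight (P • y)) G).symm
  have hx : ∀ x : Fin k → ZMod (p ^ M), ∑ y, G (x + P • y) ≤ B := by
    intro x
    have := mean_scaled hk (h N M hM) (fun i => a i * ZMod.stdAddChar (∑ j, x j * ((i : ℤ) : ZMod (p ^ M)) ^ (j.1 + 1)))
      (fun i => by simp only [norm_mul, norm_std, mul_one]; exact ha i)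
    refine le_trans (le_of_eq ?_) this
    refine Finset.sum_congr rfl fun y _ => ?_
    simp only [hG]
    congr 2
    refine Finset.sum_congr rfl fun i _ => ?_
    rw [mul_assoc, ← AddChar.map_add_eq_mul]
    congr 2
    rw [Finset.mul_sum, ← Finset.sum_add_distrib]
    refine Finset.sum_congr rfl fun j _ => ?_
    simp only [Pi.add_apply, Pi.smul_apply, smul_eq_mul, hP]
    ring
  have : V * ∑ x, G x ≤ V * B := by
    calc V * ∑ x, G x = ∑ y : Fin k → ZMod (p ^ M), ∑ x, G x := by
          rw [← hcard, Finset.sum_mul]; simp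
      _ = ∑ y, ∑ x, G (x + P • y) := Finset.sum_congr rfl fun y _ => hshift y
      _ = ∑ x, ∑ y, G (x + P • y) := Finset.sum_comm
      _ ≤ ∑ x : Fin k → ZMod (p ^ M), B := Finset.sum_le_sum fun x _ => hx x
      _ = V * B := by rw [← hcard, Finset.sum_mul]; simp
  exact le_of_mul_le_mul_left this hV0

end PartJ

section PartK
open Polynomial
theorem divisor_bound (ε : ℝ) (hε : 0 < ε) : ∃ C : ℝ, 1 ≤ C ∧ ∀ n : ℕ, n ≠ 0 →
    (n.divisors.card : ℝ) ≤ C * (n : ℝ) ^ ε := by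
  set K : ℝ := 1 + 1 / (ε * Real.log 2) with hK
  have hl2 : 0 < Real.log 2 := Real.log_pos (by norm_num)
  have hK1 : 1 ≤ K := by
    have : 0 ≤ 1 / (ε * Real.log 2) := by positivity
    linarith
  set B : ℕ := ⌈(2 : ℝ) ^ (1 / ε)⌉₊ with hB
  refine ⟨K ^ B, one_le_pow₀ hK1, fun n hn => ?_⟩
  rw [Nat.card_divisors hn]
  have hn' : (n : ℝ) ^ ε = ∏ p ∈ n.primeFactors, ((p : ℝ) ^ ε) ^ (n.factorization p) := by
    conv_lhs => rw [← Nat.prod_factorization_pow_eq_self hn]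
    rw [Nat.prod_factorization_eq_prod_primeFactors]
    push_cast
    rw [← Real.finsetProd_rpow _ _ (fun i _ => by positivity)]
    refine Finset.prod_congr rfl fun p _ => ?_
    rw [← Real.rpow_natCast, ← Real.rpow_natCast, ← Real.rpow_mul (by positivity), ← Real.rpow_mul (by positivity), mul_comm]
  have hstep : ∀ p ∈ n.primeFactors, ((n.factorization p + 1 : ℕ) : ℝ) ≤
      (if p < B then K else 1) * ((p : ℝ) ^ ε) ^ (n.factorization p) := by
    intro p hp
    have hp2 : (2 : ℝ) ≤ p := by exact_mod_cast (Nat.prime_of_mem_primeFactors hp).two_le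
    set a := n.factorization p
    split_ifs with h
    · have h1 : (2 : ℝ) ^ ε ≤ (p : ℝ) ^ ε := by gcongr
      have h2 : 1 + ε * Real.log 2 ≤ (2 : ℝ) ^ ε := by
        rw [Real.rpow_def_of_pos (by norm_num)]
        have := Real.add_one_le_exp (Real.log 2 * ε)
        linarith
      have h3 : 1 + (a : ℝ) * (ε * Real.log 2) ≤ ((p : ℝ) ^ ε) ^ a := by
        have hpos : 0 < ε * Real.log 2 := by positivity
        calc _ ≤ (1 + ε * Real.log 2) ^ a := one_add_mul_le_pow (by linarith) a
          _ ≤ _ := pow_le_pow_left₀ (by linarith) (h2.trans h1) a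
      calc ((a + 1 : ℕ) : ℝ) ≤ K * (1 + a * (ε * Real.log 2)) := by
            rw [hK]; push_cast
            have : (1 + 1 / (ε * Real.log 2)) * (1 + a * (ε * Real.log 2)) =
              1 + a * (ε * Real.log 2) + 1 / (ε * Real.log 2) + a := by field_simp; ring
            rw [this]
            have h4 : 0 ≤ a * (ε * Real.log 2) := by positivity
            have h5 : 0 ≤ 1 / (ε * Real.log 2) := by positivity
            linarith
        _ ≤ _ := by gcongr
    · push Not at h
      have h1 : (2 : ℝ) ≤ (p : ℝ) ^ ε := by
        have : (2 : ℝ) ^ (1 / ε) ≤ p := (Nat.le_ceil _).trans (by exact_mod_cast h)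
        calc (2 : ℝ) = ((2 : ℝ) ^ (1 / ε)) ^ ε := by
              rw [← Real.rpow_mul (by norm_num), one_div_mul_cancel hε.ne', Real.rpow_one]
          _ ≤ _ := by gcongr
      rw [one_mul]
      calc ((a + 1 : ℕ) : ℝ) ≤ (2 : ℝ) ^ a := by exact_mod_cast Nat.lt_two_pow_self
        _ ≤ _ := pow_le_pow_left₀ (by norm_num) h1 a
  push_cast at hstep ⊢
  calc _ ≤ ∏ p ∈ n.primeFactors, ((if p < B then K else 1) * ((p : ℝ) ^ ε) ^ (n.factorization p)) :=
        Finset.prod_le_prod (fun _ _ => by positivity) hstep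
    _ = (∏ p ∈ n.primeFactors, if p < B then K else 1) * (n : ℝ) ^ ε := by rw [Finset.prod_mul_distrib, hn']
    _ ≤ K ^ B * (n : ℝ) ^ ε := by
        gcongr
        rw [← Finset.prod_filter, Finset.prod_const]
        apply pow_le_pow_right₀ hK1
        calc _ ≤ (Finset.range B).card := Finset.card_le_card fun p hp => by
              simp only [Finset.mem_filter] at hp; simpa using hp.2
          _ = B := by simp

theorem poly_test {n D : ℕ} (t : Fin n → ℤ × ℤ) (h : ∀ d ≤ D, ∑ i, (t i).2 * (t i).1 ^ d = 0) (q : ℤ[X])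
    (hq : q.natDegree ≤ D) : ∑ i, (t i).2 * q.eval (t i).1 = 0 := by
  have : ∀ i, (t i).2 * q.eval (t i).1 = ∑ d ∈ range (D + 1), q.coeff d * ((t i).2 * (t i).1 ^ d) := by
    intro i
    rw [Polynomial.eval_eq_sum_range' (Nat.lt_succ_of_le hq), Finset.mul_sum]
    exact Finset.sum_congr rfl fun d _ => by ring
  rw [Finset.sum_congr rfl fun i _ => this i, Finset.sum_comm]
  refine Finset.sum_eq_zero fun d hd => ?_
  rw [← Finset.mul_sum, h d (by simpa [Nat.lt_succ_iff] using hd), mul_zero]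

/-- all group sums vanish -/
def GrpZero {n : ℕ} (t : Fin n → ℤ × ℤ) : Prop := ∀ v : ℤ, ∑ i with (t i).1 = v, (t i).2 = 0

theorem grp_of_card {n D : ℕ} (t : Fin n → ℤ × ℤ) (h : ∀ d ≤ D, ∑ i, (t i).2 * (t i).1 ^ d = 0)
    (hc : (univ.image fun i => (t i).1).card ≤ D + 1) : GrpZero t := by
  intro v
  by_cases hv : v ∈ univ.image fun i => (t i).1
  · set S := (univ.image fun i => (t i).1).erase v with hS
    have hScard : S.card ≤ D := by rw [hS, Finset.card_erase_of_mem hv]; omega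
    have h1 := poly_test t h (∏ w ∈ S, (X - C w)) (by
      rw [Polynomial.natDegree_finsetProd_X_sub_C_eq_card]; exact hScard)
    have h2 : ∑ i, (t i).2 * (∏ w ∈ S, (X - C w)).eval (t i).1 =
        (∑ i with (t i).1 = v, (t i).2) * (∏ w ∈ S, (X - C w)).eval v := by
      rw [Finset.sum_mul, Finset.sum_filter]
      refine Finset.sum_congr rfl fun i _ => ?_
      split_ifs with hi
      · rw [hi]
      · rw [Polynomial.eval_prod, Finset.prod_eq_zero (i := (t i).1)]
        · simp
        · rw [hS, Finset.mem_erase]; exact ⟨hi, by simp⟩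
        · simp
    rw [h2] at h1
    rcases mul_eq_zero.1 h1 with h3 | h3
    · exact h3
    · exfalso
      rw [Polynomial.eval_prod, Finset.prod_eq_zero_iff] at h3
      obtain ⟨w, hw, hw0⟩ := h3
      simp only [eval_sub, eval_X, eval_C] at hw0
      rw [hS, Finset.mem_erase] at hw
      exact hw.1 (by omega)
  · apply Finset.sum_eq_zero
    intro i hi
    exact absurd (by simp at hi; simp [← hi]) hv

theorem pair_rel {n D : ℕ} (hn : n ≤ D + 2) (t : Fin n → ℤ × ℤ) (h : ∀ d ≤ D, ∑ i, (t i).2 * (t i).1 ^ d = 0)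
    {a b : Fin n} (hab : a ≠ b) :
    (t a).2 * ∏ j ∈ (univ.erase a).erase b, ((t a).1 - (t j).1) +
      (t b).2 * ∏ j ∈ (univ.erase a).erase b, ((t b).1 - (t j).1) = 0 := by
  set S := ((univ : Finset (Fin n)).erase a).erase b with hS
  have hcard : S.card ≤ D := by
    rw [hS, Finset.card_erase_of_mem (by simp [hab.symm]), Finset.card_erase_of_mem (by simp)]
    simp; omega
  have h1 := poly_test t h (∏ j ∈ S, (X - C (t j).1)) (by
    refine (Polynomial.natDegree_prod_le _ _).trans ?_
    simp only [natDegree_X_sub_C]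
    simpa using hcard)
  have hSa : a ∉ S := by simp [hS]
  have hSb : b ∉ S := by simp [hS]
  have huniv : (univ : Finset (Fin n)) = insert a (insert b S) := by
    ext i; simp [hS]; tauto
  rw [huniv, Finset.sum_insert (by simp [hab, hSa]), Finset.sum_insert hSb] at h1
  have h0 : ∑ i ∈ S, (t i).2 * (∏ j ∈ S, (X - C (t j).1)).eval (t i).1 = 0 := by
    refine Finset.sum_eq_zero fun i hi => ?_
    rw [Polynomial.eval_prod, Finset.prod_eq_zero hi (by simp), mul_zero]
  rw [h0, add_zero, Polynomial.eval_prod, Polynomial.eval_prod] at h1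
  simpa using h1

theorem dichotomy {n D : ℕ} (hn : n ≤ D + 2) (t : Fin n → ℤ × ℤ) (h : ∀ d ≤ D, ∑ i, (t i).2 * (t i).1 ^ d = 0) :
    GrpZero t ∨ (n = D + 2 ∧ (Function.Injective fun i => (t i).1) ∧ ∀ i, (t i).2 ≠ 0) := by
  by_cases hc : (univ.image fun i => (t i).1).card ≤ D + 1
  · exact Or.inl (grp_of_card t h hc)
  push Not at hc
  have h1 : (univ.image fun i => (t i).1).card ≤ n := by
    simpa using (Finset.card_image_le (s := (univ : Finset (Fin n))) (f := fun i => (t i).1))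
  have hinj : Function.Injective fun i => (t i).1 := by
    rw [← Set.injOn_univ, ← Finset.coe_univ, ← Finset.card_image_iff]
    simp; omega
  by_cases h0 : ∀ i, (t i).2 ≠ 0
  · exact Or.inr ⟨by omega, hinj, h0⟩
  · left
    push Not at h0
    obtain ⟨a, ha⟩ := h0
    have hall : ∀ b, (t b).2 = 0 := by
      intro b
      by_cases hab : a = b
      · rw [← hab, ha]
      · have := pair_rel hn t h hab
        rw [ha, zero_mul, zero_add] at this
        rcases mul_eq_zero.1 this with h2 | h2
        · exact h2
        · exfalso
          obtain ⟨j, hj, hj0⟩ := Finset.prod_eq_zero_iff.1 h2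
          have : b = j := hinj (by simpa using sub_eq_zero.1 hj0)
          subst this
          simp at hj
    intro v
    exact Finset.sum_eq_zero fun i _ => hall i

end PartK

section PartL
open Polynomial
/-- canonical representative index of a fibre -/
noncomputable def crep {n : ℕ} (h : Fin n → ℤ) (i : Fin n) : Fin n :=
  (univ.filter fun j => h j = h i).min' ⟨i, by simp⟩

theorem crep_val {n : ℕ} (h : Fin n → ℤ) (i : Fin n) : h (crep h i) = h i := by
  have := Finset.min'_mem (univ.filter fun j => h j = h i) ⟨i, by simp⟩
  exact (Finset.mem_filter.1 this).2

theorem crep_congr {n : ℕ} (h : Fin n → ℤ) {i j : Fin n} (e : h i = h j) : crep h i = crep h j := by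
  unfold crep
  simp only [e]

theorem crep_eq_iff {n : ℕ} (h : Fin n → ℤ) {i j : Fin n} : crep h i = crep h j ↔ h i = h j :=
  ⟨fun e => by rw [← crep_val h i, e, crep_val h j], crep_congr h⟩

theorem crep_idem {n : ℕ} (h : Fin n → ℤ) (i : Fin n) : crep h (crep h i) = crep h i :=
  crep_congr h (crep_val h i)

theorem crep_zero {m : ℕ} (h : Fin (m + 1) → ℤ) : crep h 0 = 0 := by
  have : crep h 0 ≤ 0 := Finset.min'_le _ _ (by simp)
  exact le_antisymm this (Fin.zero_le _)

/-- code of a solution -/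
noncomputable def code {n : ℕ} (t : Fin n → ℤ × ℤ) : (Fin n → Fin n) × (Fin n → ℤ) :=
  (crep fun i => (t i).1, fun i => if crep (fun i => (t i).1) i = i then (t i).1 else (t i).2)

theorem code_inj {n : ℕ} {t t' : Fin n → ℤ × ℤ} (ht : GrpZero t) (ht' : GrpZero t') (h : code t = code t') :
    t = t' := by
  have h1 : (crep fun i => (t i).1) = crep fun i => (t' i).1 := congrArg Prod.fst h
  have h2 : ∀ i, (if crep (fun i => (t i).1) i = i then (t i).1 else (t i).2) =
      if crep (fun i => (t' i).1) i = i then (t' i).1 else (t' i).2 := fun i => congrFun (congrArg Prod.snd h) i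
  have hA : ∀ i, (t i).1 = (t' i).1 := by
    intro i
    have h3 := h2 (crep (fun i => (t i).1) i)
    rw [if_pos (crep_idem _ i)] at h3
    have h4 : crep (fun i => (t' i).1) (crep (fun i => (t i).1) i) = crep (fun i => (t i).1) i := by
      rw [h1]; exact crep_idem _ i
    rw [if_pos h4] at h3
    have h5 := crep_val (fun i => (t i).1) i
    have h6 := crep_val (fun i => (t' i).1) i
    rw [← h1] at h6
    exact h5.symm.trans (h3.trans h6)
  have hB : ∀ i, crep (fun i => (t i).1) i ≠ i → (t i).2 = (t' i).2 := by
    intro i hi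
    have h3 := h2 i
    rw [if_neg hi, if_neg (by rw [← h1]; exact hi)] at h3
    exact h3
  funext i
  refine Prod.ext (hA i) ?_
  by_cases hi : crep (fun i => (t i).1) i = i
  · have e1 := ht (t i).1
    have e2 := ht' (t' i).1
    have hfil : (univ.filter fun j => (t' j).1 = (t' i).1) = univ.filter fun j => (t j).1 = (t i).1 :=
      Finset.filter_congr fun j _ => by rw [hA j, hA i]
    rw [hfil] at e2
    have hmem : i ∈ univ.filter fun j => (t j).1 = (t i).1 := by simp
    rw [← Finset.add_sum_erase _ _ hmem] at e1 e2
    have e3 : ∑ j ∈ (univ.filter fun j => (t j).1 = (t i).1).erase i, (t j).2 =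
        ∑ j ∈ (univ.filter fun j => (t j).1 = (t i).1).erase i, (t' j).2 := by
      refine Finset.sum_congr rfl fun j hj => hB j ?_
      simp only [Finset.mem_erase, Finset.mem_filter, Finset.mem_univ, true_and] at hj
      intro hj'
      apply hj.1
      have : crep (fun i => (t i).1) j = crep (fun i => (t i).1) i := crep_congr _ hj.2
      rw [← hj', this, hi]
    linarith
  · exact hB i hi

/-- box of variables -/
noncomputable def vbox (n : ℕ) (Y Z : ℕ) : Finset (Fin n → ℤ × ℤ) :=
  Fintype.piFinset fun _ => Finset.Icc (1 : ℤ) Y ×ˢ Finset.Icc (-(Z : ℤ)) Z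

theorem mem_box {n Y Z : ℕ} {t : Fin n → ℤ × ℤ} : t ∈ vbox n Y Z ↔
    ∀ i, (1 ≤ (t i).1 ∧ (t i).1 ≤ Y) ∧ (-(Z : ℤ) ≤ (t i).2 ∧ (t i).2 ≤ Z) := by
  simp [vbox]

theorem countA (m Y Z : ℕ) (hYZ : Y ≤ Z) (S : Finset (Fin (m + 1) → ℤ × ℤ)) (hS : S ⊆ vbox (m + 1) Y Z)
    (hG : ∀ t ∈ S, GrpZero t) : S.card ≤ (m + 1) ^ (m + 1) * (Y * (2 * Z + 1) ^ m) := by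
  set T : Finset ((Fin (m + 1) → Fin (m + 1)) × (Fin (m + 1) → ℤ)) :=
    univ ×ˢ Fintype.piFinset (Fin.cons (Finset.Icc (1 : ℤ) Y) fun _ => Finset.Icc (-(Z : ℤ)) Z) with hT
  have hcard : T.card = (m + 1) ^ (m + 1) * (Y * (2 * Z + 1) ^ m) := by
    rw [hT, Finset.card_product, Fintype.card_piFinset, Fin.prod_univ_succ]
    have e : ((Z : ℤ) + 1 + Z).toNat = 2 * Z + 1 := by omega
    simp [e]
  rw [← hcard]
  apply Finset.card_le_card_of_injOn code
  · intro t ht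
    have ht := mem_box.1 (hS ht)
    rw [hT]
    simp only [Finset.coe_product, Set.mem_prod, Finset.mem_coe, Finset.mem_univ, Fintype.mem_piFinset, true_and]
    intro i
    simp only [code]
    refine Fin.cases ?_ (fun i => ?_) i
    · rw [crep_zero]; simpa using (ht 0).1
    · have h1 := ht i.succ
      have : (Y : ℤ) ≤ Z := by exact_mod_cast hYZ
      simp only [Fin.cons_succ, Finset.mem_Icc]
      split_ifs
      · constructor <;> omega
      · exact h1.2
  · intro t ht t' ht' h
    exact code_inj (hG t ht) (hG t' ht') h

theorem countB (m D Y Z Q : ℕ) (hn : m + 3 ≤ D + 2) (S : Finset (Fin (m + 3) → ℤ × ℤ)) (hS : S ⊆ vbox (m + 3) Y Z)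
    (hsys : ∀ t ∈ S, ∀ d ≤ D, ∑ i, (t i).2 * (t i).1 ^ d = 0)
    (hinj : ∀ t ∈ S, Function.Injective fun i => (t i).1) (hne : ∀ t ∈ S, ∀ i, (t i).2 ≠ 0)
    (hQ : ∀ K : ℤ, K ≠ 0 → K.natAbs ≤ Z * Y ^ (m + 1) → K.natAbs.divisors.card ≤ Q) :
    S.card ≤ (2 * Q) * ((2 * Z + 1) * Y ^ (m + 2)) := by
  set T : Finset (ℤ × (Fin (m + 3) → ℤ)) := Finset.Icc (-(Z : ℤ)) Z ×ˢ
    Fintype.piFinset (Function.update (fun _ => Finset.Icc (1 : ℤ) Y) 1 {1}) with hT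
  have hcard : T.card = (2 * Z + 1) * Y ^ (m + 2) := by
    rw [hT, Finset.card_product, Fintype.card_piFinset,
      ← Finset.mul_prod_erase _ _ (Finset.mem_univ (1 : Fin (m + 3))), Function.update_self]
    have : ∏ x ∈ univ.erase (1 : Fin (m + 3)), #(Function.update (fun _ => Finset.Icc (1 : ℤ) Y) 1 {1} x) =
        ∏ x ∈ univ.erase (1 : Fin (m + 3)), Y := by
      refine Finset.prod_congr rfl fun x hx => ?_
      rw [Function.update_of_ne (Finset.ne_of_mem_erase hx)]
      simp
    rw [this, Finset.prod_const, Finset.card_erase_of_mem (Finset.mem_univ _)]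
    simp
    left; omega
  rw [← hcard]
  set f : (Fin (m + 3) → ℤ × ℤ) → ℤ × (Fin (m + 3) → ℤ) := fun t =>
    ((t 0).2, Function.update (fun i => (t i).1) 1 1) with hf
  apply Finset.card_le_mul_card_image_of_maps_to (f := f)
  · intro t ht
    have ht := mem_box.1 (hS ht)
    rw [hT, Finset.mem_product]
    refine ⟨by simpa [hf] using (ht 0).2, ?_⟩
    rw [Fintype.mem_piFinset]
    intro i
    by_cases hi : i = 1
    · subst hi; simp [hf]
    · simp only [hf, Function.update_of_ne hi]
      simpa using (ht i).1
  · intro b _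
    set K : ℤ := b.1 * ∏ j ∈ (univ.erase (0 : Fin (m + 3))).erase 1, (b.2 0 - b.2 j) with hK
    rcases (S.filter fun t => f t = b).eq_empty_or_nonempty with he | ⟨t₀, ht₀⟩
    · rw [he]; simp
    have hfb : ∀ t ∈ S.filter (fun t => f t = b), (t 0).2 = b.1 ∧ ∀ i, i ≠ 1 → (t i).1 = b.2 i := by
      intro t ht
      rw [Finset.mem_filter] at ht
      rw [← ht.2]
      exact ⟨rfl, fun i hi => by simp [hf, Function.update_of_ne hi]⟩
    have h01 : (0 : Fin (m + 3)) ≠ 1 := by simp [Fin.ext_iff]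
    have h21 : (2 : Fin (m + 3)) ≠ 1 := by
      simp only [ne_eq, Fin.ext_iff, Fin.val_two, Fin.val_one]; omega
    have h20 : (2 : Fin (m + 3)) ≠ 0 := by
      simp only [ne_eq, Fin.ext_iff, Fin.val_two, Fin.val_zero]; omega
    have hKt : ∀ t ∈ S.filter (fun t => f t = b), K =
        (t 0).2 * ∏ j ∈ (univ.erase (0 : Fin (m + 3))).erase 1, ((t 0).1 - (t j).1) := by
      intro t ht
      obtain ⟨h1, h2⟩ := hfb t ht
      rw [hK, h1, h2 0 h01]
      congr 1
      refine Finset.prod_congr rfl fun j hj => ?_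
      rw [h2 j (Finset.ne_of_mem_erase hj)]
    have hK0 : K ≠ 0 := by
      rw [hKt t₀ ht₀]
      have ht := (Finset.mem_filter.1 ht₀).1
      refine mul_ne_zero (hne t₀ ht 0) (Finset.prod_ne_zero_iff.2 fun j hj h => ?_)
      have : (0 : Fin (m + 3)) = j := hinj t₀ ht (by simpa using sub_eq_zero.1 h)
      subst this
      simp at hj
    have hKle : K.natAbs ≤ Z * Y ^ (m + 1) := by
      rw [hKt t₀ ht₀]
      have ht := mem_box.1 (hS (Finset.mem_filter.1 ht₀).1)
      rw [Int.natAbs_mul]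
      apply Nat.mul_le_mul
      · have := (ht 0).2; omega
      · rw [show ∀ x : ℤ, x.natAbs = Int.natAbsHom x from fun _ => rfl, map_prod]
        simp only [Int.natAbsHom_apply]
        calc _ ≤ ∏ j ∈ (univ.erase (0 : Fin (m + 3))).erase 1, Y := by
              refine Finset.prod_le_prod' fun j _ => ?_
              have h1 := (ht 0).1
              have h2 := (ht j).1
              omega
          _ = Y ^ (m + 1) := by
              rw [Finset.prod_const, Finset.card_erase_of_mem (by simp), Finset.card_erase_of_mem (by simp)]
              simp
    have hdv := hQ K hK0 hKle
    set U : Finset ℤ := (K.natAbs.divisors.image fun d : ℕ => (d : ℤ)) ∪ (K.natAbs.divisors.image fun d : ℕ => -(d : ℤ)) with hU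
    have hUc : U.card ≤ 2 * Q := by
      refine (Finset.card_union_le _ _).trans ?_
      have h1 := Finset.card_image_le (s := K.natAbs.divisors) (f := fun d : ℕ => (d : ℤ))
      have h2 := Finset.card_image_le (s := K.natAbs.divisors) (f := fun d : ℕ => -(d : ℤ))
      omega
    refine le_trans ?_ hUc
    apply Finset.card_le_card_of_injOn (fun t => (t 1).1 - (t 2).1)
    · intro t ht
      rw [Finset.mem_coe] at ht
      have htS := (Finset.mem_filter.1 ht).1
      have hrel := pair_rel hn t (hsys t htS) h01
      rw [← hKt t ht] at hrel
      have hdvd : (t 1).1 - (t 2).1 ∣ K := by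
        have h3 : (t 1).1 - (t 2).1 ∣ ∏ j ∈ (univ.erase (0 : Fin (m + 3))).erase 1, ((t 1).1 - (t j).1) :=
          Finset.dvd_prod_of_mem (fun j => (t 1).1 - (t j).1) (by simp [h21, h20])
        have h4 : K = -((t 1).2 * ∏ j ∈ (univ.erase (0 : Fin (m + 3))).erase 1, ((t 1).1 - (t j).1)) := by linarith
        rw [h4]
        exact (dvd_neg.2 (h3.mul_left _))
      have hmem : ((t 1).1 - (t 2).1).natAbs ∈ K.natAbs.divisors := by
        rw [Nat.mem_divisors]
        exact ⟨Int.natAbs_dvd_natAbs.2 hdvd, by simpa using hK0⟩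
      rw [Finset.mem_coe, hU, Finset.mem_union, Finset.mem_image, Finset.mem_image]
      rcases Int.natAbs_eq ((t 1).1 - (t 2).1) with h | h
      · exact Or.inl ⟨_, hmem, h.symm⟩
      · exact Or.inr ⟨_, hmem, h.symm⟩
    · intro t ht t' ht' he
      rw [Finset.mem_coe] at ht ht'
      have htS := (Finset.mem_filter.1 ht).1
      have htS' := (Finset.mem_filter.1 ht').1
      obtain ⟨a1, a2⟩ := hfb t ht
      obtain ⟨b1, b2⟩ := hfb t' ht'
      simp only at he
      have hA : ∀ i, (t i).1 = (t' i).1 := by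
        intro i
        by_cases hi : i = 1
        · subst hi
          rw [a2 2 h21, b2 2 h21] at he
          linarith
        · rw [a2 i hi, b2 i hi]
      funext i
      refine Prod.ext (hA i) ?_
      by_cases hi : 0 = i
      · rw [← hi, a1, b1]
      · have r1 := pair_rel hn t (hsys t htS) hi
        have r2 := pair_rel hn t' (hsys t' htS') hi
        simp only [← hA] at r2
        rw [a1] at r1
        rw [b1] at r2
        have h0 : ∏ j ∈ (univ.erase (0 : Fin (m + 3))).erase i, ((t i).1 - (t j).1) ≠ 0 := by
          refine Finset.prod_ne_zero_iff.2 fun j hj h => ?_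
          have : i = j := hinj t htS (by simpa using sub_eq_zero.1 h)
          subst this
          simp at hj
        exact mul_right_cancel₀ h0 (by linarith)

end PartL

section PartN
open Polynomial
theorem count_bound (n D s r : ℕ) (hn2 : 2 ≤ n) (hn : n ≤ D + 2) (hD : 1 ≤ D) (hr : 1 ≤ r) (hs : 1 ≤ s)
    (ε : ℝ) (hε : 0 < ε) : ∃ C : ℝ, 1 ≤ C ∧ ∀ Y : ℕ, 1 ≤ Y → ∀ S : Finset (Fin n → ℤ × ℤ),
      S ⊆ vbox n Y (s * Y ^ r) → (∀ t ∈ S, ∀ d ≤ D, ∑ i, (t i).2 * (t i).1 ^ d = 0) →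
      (S.card : ℝ) ≤ C * (Y : ℝ) ^ (1 + (r : ℝ) * ((n : ℝ) - 1) + ε) := by
  classical
  have hZY : ∀ Y : ℕ, 1 ≤ Y → Y ≤ s * Y ^ r := fun Y hY =>
    (Nat.le_self_pow (by omega) Y).trans (Nat.le_mul_of_pos_left _ hs)
  have hs0 : (1 : ℝ) ≤ s := by exact_mod_cast hs
  have hr0 : (1 : ℝ) ≤ r := by exact_mod_cast hr
  -- part A
  have partA : ∀ Y : ℕ, 1 ≤ Y → ∀ S : Finset (Fin n → ℤ × ℤ),
      S ⊆ vbox n Y (s * Y ^ r) → (∀ t ∈ S, GrpZero t) →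
      (S.card : ℝ) ≤ ((n : ℝ) ^ n * (3 * s) ^ (n - 1)) * (Y : ℝ) ^ (1 + (r : ℝ) * ((n : ℝ) - 1) + ε) := by
    intro Y hY S hS hG
    obtain ⟨m, rfl⟩ : ∃ m, n = m + 1 := ⟨n - 1, by omega⟩
    have hY1 : (1 : ℝ) ≤ Y := by exact_mod_cast hY
    have h := countA m Y (s * Y ^ r) (hZY Y hY) S hS hG
    have h' : (S.card : ℝ) ≤ ((m : ℝ) + 1) ^ (m + 1) * (Y * (2 * (s * (Y : ℝ) ^ r) + 1) ^ m) := by exact_mod_cast h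
    have hz : (1 : ℝ) ≤ s * (Y : ℝ) ^ r := one_le_mul_of_one_le_of_one_le hs0 (one_le_pow₀ hY1)
    refine h'.trans ?_
    calc _ ≤ ((m : ℝ) + 1) ^ (m + 1) * (Y * (3 * s * (Y : ℝ) ^ r) ^ m) := by
          gcongr; linarith
      _ = ((m : ℝ) + 1) ^ (m + 1) * (3 * s) ^ m * ((Y : ℝ) ^ (1 + r * m)) := by
          rw [mul_pow, pow_add (Y : ℝ), pow_one, pow_mul]; ring
      _ ≤ _ := by
          push_cast
          rw [← Real.rpow_natCast (Y : ℝ) (1 + r * m)]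
          gcongr
          push_cast; linarith
  -- part B
  have partB : ∃ C : ℝ, 0 ≤ C ∧ ∀ Y : ℕ, 1 ≤ Y → ∀ S : Finset (Fin n → ℤ × ℤ),
      S ⊆ vbox n Y (s * Y ^ r) → (∀ t ∈ S, ∀ d ≤ D, ∑ i, (t i).2 * (t i).1 ^ d = 0) →
      (∀ t ∈ S, (n = D + 2 ∧ (Function.Injective fun i => (t i).1) ∧ ∀ i, (t i).2 ≠ 0)) →
      (S.card : ℝ) ≤ C * (Y : ℝ) ^ (1 + (r : ℝ) * ((n : ℝ) - 1) + ε) := by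
    by_cases hnD : n = D + 2
    · obtain ⟨m, rfl⟩ : ∃ m, n = m + 3 := ⟨n - 3, by omega⟩
      set δ : ℝ := ε / ((r : ℝ) + m + 1) with hδ
      have hδ0 : 0 < δ := by positivity
      obtain ⟨C, hC, hdiv⟩ := divisor_bound δ hδ0
      refine ⟨2 * (C * (s : ℝ) ^ δ) * (3 * s), by positivity, fun Y hY S hS hsys hS' => ?_⟩
      have hY1 : (1 : ℝ) ≤ Y := by exact_mod_cast hY
      have hY0 : (0 : ℝ) < Y := by linarith
      set q : ℝ := C * (((s * Y ^ r) * Y ^ (m + 1) : ℕ) : ℝ) ^ δ with hq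
      have hq0 : 0 ≤ q := by positivity
      have h := countB m D Y (s * Y ^ r) ⌊q⌋₊ hn S hS hsys (fun t ht => (hS' t ht).2.1) (fun t ht => (hS' t ht).2.2)
        (fun K hK hKle => Nat.le_floor ((hdiv K.natAbs (by simpa using hK)).trans (by
          rw [hq]; gcongr)))
      have h' : (S.card : ℝ) ≤ 2 * (⌊q⌋₊ : ℝ) * ((2 * (s * (Y : ℝ) ^ r) + 1) * (Y : ℝ) ^ (m + 2)) := by exact_mod_cast h
      have hqe : q = C * (s : ℝ) ^ δ * (Y : ℝ) ^ ε := by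
        rw [hq]
        push_cast
        rw [mul_assoc (s : ℝ), ← pow_add, Real.mul_rpow (by positivity) (by positivity), ← Real.rpow_natCast (Y : ℝ),
          ← Real.rpow_mul hY0.le, mul_assoc]
        congr 3
        push_cast
        rw [hδ, mul_div_assoc', mul_comm, mul_div_assoc]
        have : ((r : ℝ) + (m + 1)) = r + m + 1 := by ring
        rw [this, div_self (by positivity), mul_one]
      have hz : (1 : ℝ) ≤ s * (Y : ℝ) ^ r := one_le_mul_of_one_le_of_one_le hs0 (one_le_pow₀ hY1)
      refine h'.trans ?_
      calc _ ≤ 2 * q * ((3 * s * (Y : ℝ) ^ r) * (Y : ℝ) ^ (m + 2)) := by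
            gcongr
            · exact Nat.floor_le hq0
            · linarith
        _ = 2 * (C * (s : ℝ) ^ δ) * (3 * s) * ((Y : ℝ) ^ (r + (m + 2)) * (Y : ℝ) ^ ε) := by
            rw [hqe, pow_add]; ring
        _ ≤ _ := by
            rw [← Real.rpow_natCast (Y : ℝ), ← Real.rpow_add hY0]
            gcongr
            · push_cast
              have : 0 ≤ ((r : ℝ) - 1) * (m + 1) := mul_nonneg (by linarith) (by positivity)
              linarith
    · refine ⟨0, le_rfl, fun Y hY S hS hsys hS' => ?_⟩
      have : S = ∅ := Finset.eq_empty_of_forall_notMem fun t ht => hnD (hS' t ht).1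
      simp [this]
  obtain ⟨C, hC, hB⟩ := partB
  refine ⟨((n : ℝ) ^ n * (3 * s) ^ (n - 1)) + C, ?_, fun Y hY S hS hsys => ?_⟩
  · have h1 : (1 : ℝ) ≤ (n : ℝ) ^ n := one_le_pow₀ (by exact_mod_cast (by omega : 1 ≤ n))
    have h2 : (1 : ℝ) ≤ (3 * s) ^ (n - 1) := one_le_pow₀ (by linarith)
    have := one_le_mul_of_one_le_of_one_le h1 h2
    linarith
  · have hA := partA Y hY (S.filter GrpZero) ((Finset.filter_subset _ _).trans hS)
      (fun t ht => (Finset.mem_filter.1 ht).2)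
    have hB' := hB Y hY (S.filter fun t => ¬ GrpZero t) ((Finset.filter_subset _ _).trans hS)
      (fun t ht => hsys t (Finset.mem_filter.1 ht).1)
      (fun t ht => (dichotomy hn t (hsys t (Finset.mem_filter.1 ht).1)).resolve_left (Finset.mem_filter.1 ht).2)
    have hc := Finset.card_filter_add_card_filter_not (s := S) GrpZero
    have hc' : (S.card : ℝ) = ((S.filter GrpZero).card : ℝ) + ((S.filter fun t => ¬ GrpZero t).card : ℝ) := by
      exact_mod_cast hc.symm
    rw [hc', add_mul]
    linarith

end PartN

section PartO
open Polynomial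
section EE
variable {p M k : ℕ} [Fact p.Prime]

/-- characters of the dual group -/
noncomputable def ee (α w : Fin k → ZMod (p ^ M)) : ℂ := ZMod.stdAddChar (∑ j, α j * w j)

theorem ee_add (α w w' : Fin k → ZMod (p ^ M)) : ee α (w + w') = ee α w * ee α w' := by
  unfold ee
  rw [← AddChar.map_add_eq_mul, ← Finset.sum_add_distrib]
  congr 1
  exact Finset.sum_congr rfl fun j _ => by simp [mul_add]

theorem ee_zero (α : Fin k → ZMod (p ^ M)) : ee α 0 = 1 := by
  simp [ee]

theorem ee_norm (α w : Fin k → ZMod (p ^ M)) : ‖ee α w‖ = 1 := norm_std _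

theorem ee_neg (α w : Fin k → ZMod (p ^ M)) : ee α (-w) = (starRingEnd ℂ) (ee α w) := by
  have h1 : ee α w * ee α (-w) = 1 := by rw [← ee_add]; simp [ee_zero]
  have h2 : ee α w * (starRingEnd ℂ) (ee α w) = 1 := by
    rw [Complex.mul_conj, Complex.normSq_eq_norm_sq, ee_norm]; simp
  have h0 : ee α w ≠ 0 := by
    intro h; rw [h, zero_mul] at h1; exact zero_ne_one h1
  exact mul_left_cancel₀ h0 (h1.trans h2.symm)

theorem ee_sum {ι : Type*} (α : Fin k → ZMod (p ^ M)) (S : Finset ι) (w : ι → Fin k → ZMod (p ^ M)) :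
    ee α (∑ i ∈ S, w i) = ∏ i ∈ S, ee α (w i) := by
  classical
  induction S using Finset.induction_on with
  | empty => simp [ee_zero]
  | insert a S ha ih => rw [Finset.sum_insert ha, Finset.prod_insert ha, ee_add, ih]

theorem std_sum {ι : Type*} (S : Finset ι) (f : ι → ZMod (p ^ M)) :
    (ZMod.stdAddChar (∑ i ∈ S, f i) : ℂ) = ∏ i ∈ S, ZMod.stdAddChar (f i) := by
  classical
  induction S using Finset.induction_on with
  | empty => simp
  | insert a S ha ih => rw [Finset.sum_insert ha, Finset.prod_insert ha, AddChar.map_add_eq_mul, ih]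

theorem ee_orth (w : Fin k → ZMod (p ^ M)) :
    ∑ α : Fin k → ZMod (p ^ M), ee α w = if w = 0 then (((p ^ M : ℕ) : ℂ)) ^ k else 0 := by
  have h1 : ∀ α : Fin k → ZMod (p ^ M), ee α w = ∏ j, ZMod.stdAddChar (α j * w j) := by
    intro α
    unfold ee
    exact std_sum _ _
  have h2 := Finset.prod_univ_sum (fun _ : Fin k => (univ : Finset (ZMod (p ^ M))))
    (fun j a => (ZMod.stdAddChar (a * w j) : ℂ))
  rw [Fintype.piFinset_univ] at h2
  rw [Finset.sum_congr rfl fun α _ => h1 α, ← h2]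
  simp only [AddChar.sum_mulShift _ (ZMod.isPrimitive_stdAddChar _)]
  split_ifs with hw
  · subst hw
    simp [ZMod.card]
  · obtain ⟨j, hj⟩ : ∃ j, w j ≠ 0 := by
      by_contra h
      push Not at h
      exact hw (funext h)
    apply Finset.prod_eq_zero (Finset.mem_univ j)
    simp [hj]

theorem ee_count {ι : Type*} (S : Finset ι) (w : ι → Fin k → ZMod (p ^ M)) :
    ∑ α : Fin k → ZMod (p ^ M), ∑ i ∈ S, ee α (w i) =
      (((p ^ M : ℕ) : ℂ)) ^ k * ((S.filter fun i => w i = 0).card : ℂ) := by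
  rw [Finset.sum_comm]
  simp only [ee_orth]
  rw [← Finset.sum_filter, Finset.sum_const, nsmul_eq_mul, mul_comm]

/-- power vector -/
def nu (p M k : ℕ) (i : ℤ) : Fin k → ZMod (p ^ M) := fun j => ((i : ℤ) : ZMod (p ^ M)) ^ (j.1 + 1)

/-- shifted vector -/
def be (p M k r : ℕ) (t : ℤ × ℤ) : Fin k → ZMod (p ^ M) := fun j =>
  (((j.1 + 1).choose r * (t.2 * t.1 ^ (j.1 + 1 - r)) : ℤ) : ZMod (p ^ M))

/-- generating function -/
noncomputable def fsum (Y : ℕ) (α : Fin k → ZMod (p ^ M)) : ℂ := ∑ i ∈ Finset.Icc (1 : ℤ) Y, ee α (nu p M k i)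

/-- generating function of shifts -/
noncomputable def gsum (r Y Z : ℕ) (α : Fin k → ZMod (p ^ M)) : ℂ :=
  ∑ t ∈ Finset.Icc (1 : ℤ) Y ×ˢ Finset.Icc (-(Z : ℤ)) Z, ee α (be p M k r t)

theorem gsum_conj (r Y Z : ℕ) (α : Fin k → ZMod (p ^ M)) : (starRingEnd ℂ) (gsum r Y Z α) = gsum r Y Z α := by
  unfold gsum
  rw [map_sum]
  refine Finset.sum_nbij' (fun t => (t.1, -t.2)) (fun t => (t.1, -t.2)) ?_ ?_ ?_ ?_ ?_
  · intro t ht; simp only [Finset.mem_product, Finset.mem_Icc] at ht ⊢; omega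
  · intro t ht; simp only [Finset.mem_product, Finset.mem_Icc] at ht ⊢; omega
  · intro t _; simp
  · intro t _; simp
  · intro t _
    rw [← ee_neg]
    congr 1
    funext j
    simp [be]

theorem sum_pow_pi {ι : Type*} [DecidableEq ι] (n : ℕ) (S : Finset ι) (w : ι → Fin k → ZMod (p ^ M))
    (α : Fin k → ZMod (p ^ M)) : (∑ i ∈ S, ee α (w i)) ^ n =
      ∑ t ∈ Fintype.piFinset (fun _ : Fin n => S), ee α (∑ i, w (t i)) := by
  have := Finset.prod_univ_sum (fun _ : Fin n => S) (fun _ i => ee α (w i))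
  rw [Finset.prod_const, Finset.card_univ, Fintype.card_fin] at this
  rw [this]
  exact Finset.sum_congr rfl fun t _ => (ee_sum α univ fun i => w (t i)).symm

theorem gsum_moment (r Y Z κ : ℕ) :
    ∑ α : Fin k → ZMod (p ^ M), ‖gsum r Y Z α‖ ^ (2 * κ) = ((p ^ M : ℕ) : ℝ) ^ k *
      (((vbox (2 * κ) Y Z).filter fun t => ∑ i, be p M k r (t i) = 0).card : ℝ) := by
  have h1 : ∀ α : Fin k → ZMod (p ^ M), ((‖gsum r Y Z α‖ ^ (2 * κ) : ℝ) : ℂ) =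
      ∑ t ∈ vbox (2 * κ) Y Z, ee α (∑ i, be p M k r (t i)) := by
    intro α
    have h2 : ((‖gsum r Y Z α‖ ^ 2 : ℝ) : ℂ) = gsum r Y Z α ^ 2 := by
      have := Complex.mul_conj (gsum r Y Z α)
      rw [gsum_conj, Complex.normSq_eq_norm_sq] at this
      rw [← this]; ring
    rw [pow_mul, Complex.ofReal_pow, h2, ← pow_mul]
    exact sum_pow_pi (2 * κ) _ (be p M k r) α
  have h3 := ee_count (p := p) (M := M) (k := k) (vbox (2 * κ) Y Z) fun t => ∑ i, be p M k r (t i)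
  rw [← Finset.sum_congr rfl fun α _ => h1 α] at h3
  have h4 : ((∑ α : Fin k → ZMod (p ^ M), ‖gsum r Y Z α‖ ^ (2 * κ) : ℝ) : ℂ) = ((((p ^ M : ℕ) : ℝ) ^ k *
      (((vbox (2 * κ) Y Z).filter fun t => ∑ i, be p M k r (t i) = 0).card : ℝ) : ℝ) : ℂ) := by
    push_cast at h3 ⊢
    exact h3
  exact_mod_cast h4

theorem main_lower (r Y Z s : ℕ) (T : Finset (((Fin s → ℤ) × (Fin s → ℤ)) × (ℤ × ℤ)))
    (hT : ∀ q ∈ T, (∀ i, q.1.1 i ∈ Finset.Icc (1 : ℤ) Y) ∧ (∀ i, q.1.2 i ∈ Finset.Icc (1 : ℤ) Y) ∧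
      q.2 ∈ Finset.Icc (1 : ℤ) Y ×ˢ Finset.Icc (-(Z : ℤ)) Z ∧
      ∑ i, nu p M k (q.1.1 i) - ∑ i, nu p M k (q.1.2 i) + be p M k r q.2 = 0) :
    ((p ^ M : ℕ) : ℝ) ^ k * (T.card : ℝ) ≤ ∑ α : Fin k → ZMod (p ^ M), ‖fsum Y α‖ ^ (2 * s) * ‖gsum r Y Z α‖ := by
  set I := Finset.Icc (1 : ℤ) Y with hI
  set U : Finset (((Fin s → ℤ) × (Fin s → ℤ)) × (ℤ × ℤ)) :=
    (Fintype.piFinset (fun _ => I) ×ˢ Fintype.piFinset (fun _ => I)) ×ˢ (I ×ˢ Finset.Icc (-(Z : ℤ)) Z) with hU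
  set w : ((Fin s → ℤ) × (Fin s → ℤ)) × (ℤ × ℤ) → Fin k → ZMod (p ^ M) := fun q =>
    ∑ i, nu p M k (q.1.1 i) - ∑ i, nu p M k (q.1.2 i) + be p M k r q.2 with hw
  have h1 : ∀ α : Fin k → ZMod (p ^ M), fsum Y α ^ s * (starRingEnd ℂ) (fsum Y α) ^ s * gsum r Y Z α =
      ∑ q ∈ U, ee α (w q) := by
    intro α
    have e1 : fsum Y α ^ s = ∑ t ∈ Fintype.piFinset (fun _ : Fin s => I), ee α (∑ i, nu p M k (t i)) :=
      sum_pow_pi s I (nu p M k) α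
    rw [← map_pow, e1, map_sum, hU, Finset.sum_product, Finset.sum_product, Finset.sum_mul_sum, Finset.sum_mul]
    refine Finset.sum_congr rfl fun u _ => ?_
    rw [Finset.sum_mul]
    refine Finset.sum_congr rfl fun v _ => ?_
    unfold gsum
    rw [Finset.mul_sum]
    refine Finset.sum_congr rfl fun t _ => ?_
    rw [← ee_neg, ← ee_add, ← ee_add, ← sub_eq_add_neg]
  have h2 := ee_count (p := p) (M := M) (k := k) U w
  rw [← Finset.sum_congr rfl fun α _ => h1 α] at h2
  have hsub : T ⊆ U.filter fun q => w q = 0 := by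
    intro q hq
    obtain ⟨a1, a2, a3, a4⟩ := hT q hq
    rw [Finset.mem_filter, hU, Finset.mem_product, Finset.mem_product, Fintype.mem_piFinset, Fintype.mem_piFinset]
    exact ⟨⟨⟨a1, a2⟩, a3⟩, a4⟩
  have h3 : ‖(((p ^ M : ℕ) : ℂ)) ^ k * ((U.filter fun q => w q = 0).card : ℂ)‖ =
      ((p ^ M : ℕ) : ℝ) ^ k * ((U.filter fun q => w q = 0).card : ℝ) := by
    rw [norm_mul, norm_pow, Complex.norm_natCast, Complex.norm_natCast]
  calc _ ≤ ((p ^ M : ℕ) : ℝ) ^ k * ((U.filter fun q => w q = 0).card : ℝ) := by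
        have := Finset.card_le_card hsub
        gcongr
    _ = ‖∑ α : Fin k → ZMod (p ^ M), fsum Y α ^ s * (starRingEnd ℂ) (fsum Y α) ^ s * gsum r Y Z α‖ := by rw [h2, h3]
    _ ≤ ∑ α : Fin k → ZMod (p ^ M), ‖fsum Y α ^ s * (starRingEnd ℂ) (fsum Y α) ^ s * gsum r Y Z α‖ := norm_sum_le _ _
    _ = _ := by
        refine Finset.sum_congr rfl fun α _ => ?_
        rw [norm_mul, norm_mul, norm_pow, norm_pow, RCLike.norm_conj, ← pow_add, two_mul]

/-- mixed moment -/
theorem mixed (r Y Z m κ : ℕ) (hr1 : 1 ≤ r) (hr : r ≤ k) {B : ℝ}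
    (hB : ∀ a : ℤ → ℂ, (∀ i, ‖a i‖ ≤ 1) → ∑ x : Fin (r - 1) → ZMod (p ^ M), ‖∑ i ∈ Finset.Icc (1 : ℤ) Y, a i *
      ZMod.stdAddChar (∑ j, x j * ((i : ℤ) : ZMod (p ^ M)) ^ (j.1 + 1))‖ ^ m ≤ B * ((p ^ M : ℕ) : ℝ) ^ (r - 1)) :
    ∑ α : Fin k → ZMod (p ^ M), ‖fsum Y α‖ ^ m * ‖gsum r Y Z α‖ ^ κ ≤
      B * ∑ α : Fin k → ZMod (p ^ M), ‖gsum r Y Z α‖ ^ κ := by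
  set V : ℝ := ((p ^ M : ℕ) : ℝ) ^ (r - 1) with hV
  have hpp : 0 < p := (Fact.out : p.Prime).pos
  have hV0 : 0 < V := by positivity
  have hcard : ∑ x : Fin (r - 1) → ZMod (p ^ M), (1 : ℝ) = V := by simp [hV, ZMod.card]
  set io : (Fin (r - 1) → ZMod (p ^ M)) → Fin k → ZMod (p ^ M) := fun y j =>
    if h : j.1 < r - 1 then y ⟨j.1, h⟩ else 0 with hio
  set F : (Fin k → ZMod (p ^ M)) → ℝ := fun α => ‖fsum Y α‖ ^ m * ‖gsum r Y Z α‖ ^ κ with hF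
  have hg : ∀ α y, gsum r Y Z (α + io y) = gsum r Y Z α := by
    intro α y
    unfold gsum
    refine Finset.sum_congr rfl fun t _ => ?_
    unfold ee
    congr 1
    refine Finset.sum_congr rfl fun j _ => ?_
    simp only [Pi.add_apply, hio, be]
    split_ifs with h
    · rw [Nat.choose_eq_zero_of_lt (by omega)]; simp
    · simp
  have hsum : ∀ (y : Fin (r - 1) → ZMod (p ^ M)) (w : Fin k → ZMod (p ^ M)),
      ∑ j, io y j * w j = ∑ j : Fin (r - 1), y j * w ⟨j.1, by omega⟩ := by
    intro y w
    have : ∀ j : Fin (r - 1), y j * w ⟨j.1, by omega⟩ = io y (Fin.castLE (by omega) j) * w (Fin.castLE (by omega) j) := by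
      intro j
      simp only [hio, Fin.val_castLE, j.2, dif_pos]
      rfl
    rw [Finset.sum_congr rfl fun j _ => this j]
    symm
    have hinj : Function.Injective (Fin.castLE (show r - 1 ≤ k by omega)) := Fin.castLE_injective _
    have e := Finset.sum_map univ ⟨_, hinj⟩ (fun j => io y j * w j)
    refine (e.symm).trans ?_
    apply Finset.sum_subset (Finset.subset_univ _)
    intro j _ hj
    have : ¬ j.1 < r - 1 := fun h => hj (Finset.mem_map.2 ⟨⟨j.1, h⟩, Finset.mem_univ _, rfl⟩)
    simp [hio, this]
  have hf : ∀ α, ∑ y, ‖fsum Y (α + io y)‖ ^ m ≤ B * V := by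
    intro α
    refine le_trans (le_of_eq ?_) (hB (fun i => ee α (nu p M k i)) (fun i => (ee_norm _ _).le))
    refine Finset.sum_congr rfl fun y _ => ?_
    congr 2
    unfold fsum
    refine Finset.sum_congr rfl fun i _ => ?_
    unfold ee
    rw [← AddChar.map_add_eq_mul]
    congr 1
    have : ∑ j, (α + io y) j * nu p M k i j = ∑ j, α j * nu p M k i j + ∑ j, io y j * nu p M k i j := by
      rw [← Finset.sum_add_distrib]
      exact Finset.sum_congr rfl fun j _ => by simp [add_mul]
    rw [this, hsum]
    rfl
  have key : V * ∑ α, F α ≤ V * (B * ∑ α : Fin k → ZMod (p ^ M), ‖gsum r Y Z α‖ ^ κ) := by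
    calc V * ∑ α, F α = ∑ y : Fin (r - 1) → ZMod (p ^ M), ∑ α, F α := by
          rw [← hcard, Finset.sum_mul]; simp
      _ = ∑ y, ∑ α, F (α + io y) := Finset.sum_congr rfl fun y _ =>
          (Equiv.sum_comp (Equiv.addRight (io y)) F).symm
      _ = ∑ α, ∑ y, F (α + io y) := Finset.sum_comm
      _ = ∑ α, (∑ y, ‖fsum Y (α + io y)‖ ^ m) * ‖gsum r Y Z α‖ ^ κ := by
          refine Finset.sum_congr rfl fun α _ => ?_
          rw [Finset.sum_mul]
          refine Finset.sum_congr rfl fun y _ => ?_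
          simp only [hF, hg]
      _ ≤ ∑ α : Fin k → ZMod (p ^ M), (B * V) * ‖gsum r Y Z α‖ ^ κ := by
          refine Finset.sum_le_sum fun α _ => ?_
          exact mul_le_mul_of_nonneg_right (hf α) (by positivity)
      _ = _ := by rw [← Finset.mul_sum]; ring
  exact le_of_mul_le_mul_left key hV0

end EE

end PartO

section PartQ
open Polynomial
section QQ
variable {p M k : ℕ} [Fact p.Prime]

theorem be_zero_int (r Y Z n : ℕ) (hr1 : 1 ≤ r) (hY : 1 ≤ Y)
    (hM : n * (2 ^ k * (Z * Y ^ k)) < p ^ M) (t : Fin n → ℤ × ℤ) (ht : t ∈ vbox n Y Z)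
    (h0 : ∑ i, be p M k r (t i) = 0) (d : ℕ) (hd : d + r ≤ k) :
    ∑ i, (t i).2 * (t i).1 ^ d = 0 := by
  have hb : ∀ i, (1 ≤ (t i).1 ∧ (t i).1 ≤ Y) ∧ (-(Z : ℤ) ≤ (t i).2 ∧ (t i).2 ≤ Z) := by
    intro i
    unfold vbox at ht
    have := (Fintype.mem_piFinset.1 ht) i
    simpa only [Finset.mem_product, Finset.mem_Icc] using this
  have hj : d + r - 1 < k := by omega
  have h1 := congrFun h0 ⟨d + r - 1, hj⟩
  rw [Finset.sum_apply] at h1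
  simp only [be, Pi.zero_apply] at h1
  have e1 : d + r - 1 + 1 = d + r := by omega
  have e2 : d + r - r = d := by omega
  simp only [e1, e2] at h1
  rw [← Int.cast_sum, ← Finset.mul_sum, ZMod.intCast_zmod_eq_zero_iff_dvd] at h1
  have hY' : (1 : ℤ) ≤ Y := by exact_mod_cast hY
  have h2 : |∑ i, (t i).2 * (t i).1 ^ d| ≤ n * (Z * Y ^ k : ℤ) := by
    refine (Finset.abs_sum_le_sum_abs _ _).trans ?_
    have : ∀ i ∈ (univ : Finset (Fin n)), |(t i).2 * (t i).1 ^ d| ≤ (Z * Y ^ k : ℤ) := by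
      intro i _
      obtain ⟨⟨a1, a2⟩, a3⟩ := hb i
      rw [abs_mul, abs_pow, abs_of_nonneg (by omega : 0 ≤ (t i).1)]
      have b1 : |(t i).2| ≤ Z := abs_le.2 a3
      have b2 : (t i).1 ^ d ≤ (Y : ℤ) ^ k :=
        (pow_le_pow_left₀ (by omega) a2 d).trans (pow_le_pow_right₀ hY' (by omega))
      exact mul_le_mul b1 b2 (pow_nonneg (by omega) _) (by positivity)
    refine (Finset.sum_le_sum this).trans ?_
    simp
  have hc : ((d + r).choose r : ℤ) ≤ 2 ^ k := by
    have : (d + r).choose r ≤ 2 ^ k := (Nat.choose_le_two_pow _ _).trans (Nat.pow_le_pow_right (by norm_num) hd)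
    exact_mod_cast this
  have hc0 : (0 : ℤ) < ((d + r).choose r : ℤ) := by
    exact_mod_cast Nat.choose_pos (by omega)
  have h3 : |((d + r).choose r : ℤ) * ∑ i, (t i).2 * (t i).1 ^ d| < ((p ^ M : ℕ) : ℤ) := by
    rw [abs_mul, abs_of_pos hc0]
    calc _ ≤ (2 : ℤ) ^ k * (n * (Z * Y ^ k : ℤ)) := mul_le_mul hc h2 (abs_nonneg _) (by positivity)
      _ = ((n * (2 ^ k * (Z * Y ^ k)) : ℕ) : ℤ) := by push_cast; ring
      _ < _ := by exact_mod_cast hM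
  have h4 := Int.eq_zero_of_abs_lt_dvd h1 h3
  rcases mul_eq_zero.1 h4 with h | h
  · omega
  · exact h

theorem g_bound (k r κ s : ℕ) (hr1 : 1 ≤ r) (hrk : r < k) (hκ : 1 ≤ κ) (hκ2 : 2 * κ ≤ k - r + 2) (hs : 1 ≤ s)
    (ε : ℝ) (hε : 0 < ε) : ∃ C : ℝ, 1 ≤ C ∧ ∀ (p M : ℕ) [Fact p.Prime] (Y : ℕ), 1 ≤ Y →
      2 * κ * (2 ^ k * ((s * Y ^ r) * Y ^ k)) < p ^ M →
      ∑ α : Fin k → ZMod (p ^ M), ‖gsum r Y (s * Y ^ r) α‖ ^ (2 * κ) ≤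
        ((p ^ M : ℕ) : ℝ) ^ k * (C * (Y : ℝ) ^ (1 + (r : ℝ) * (2 * (κ : ℝ) - 1) + ε)) := by
  obtain ⟨C, hC, h⟩ := count_bound (2 * κ) (k - r) s r (by omega) (by omega) (by omega) hr1 hs ε hε
  refine ⟨C, hC, ?_⟩
  intro p M _ Y hY hM
  rw [gsum_moment]
  refine mul_le_mul_of_nonneg_left ?_ (by positivity)
  have := h Y hY ((vbox (2 * κ) Y (s * Y ^ r)).filter fun t => ∑ i, be p M k r (t i) = 0)
    (Finset.filter_subset _ _) (by
      intro t ht d hd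
      rw [Finset.mem_filter] at ht
      exact be_zero_int r Y (s * Y ^ r) (2 * κ) hr1 hY hM t ht.1 ht.2 d (by omega))
  push_cast at this
  exact this

theorem shift_id (s k r : ℕ) (x y : Fin s → ℤ) (h : ℤ) (hs : ∀ j ∈ Finset.Icc 1 k, j ≠ r → ∑ i, x i ^ j = ∑ i, y i ^ j)
    (J : ℕ) (hJ : J ≤ k) :
    ∑ i, (x i + h) ^ J - ∑ i, (y i + h) ^ J = (J.choose r : ℤ) * ((∑ i, x i ^ r - ∑ i, y i ^ r) * h ^ (J - r)) := by
  have e : ∀ z : Fin s → ℤ, ∑ i, (z i + h) ^ J = ∑ m ∈ Finset.range (J + 1), (∑ i, z i ^ m) * (h ^ (J - m) * (J.choose m : ℤ)) := by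
    intro z
    simp only [add_pow]
    rw [Finset.sum_comm]
    refine Finset.sum_congr rfl fun m _ => ?_
    rw [Finset.sum_mul]
    exact Finset.sum_congr rfl fun i _ => by ring
  rw [e, e, ← Finset.sum_sub_distrib]
  by_cases hr : r ∈ Finset.range (J + 1)
  · rw [Finset.sum_eq_single r]
    · ring
    · intro m hm hmr
      rw [Finset.mem_range] at hm
      have : ∑ i, x i ^ m = ∑ i, y i ^ m := by
        rcases Nat.eq_zero_or_pos m with h0 | h0
        · subst h0; simp
        · exact hs m (Finset.mem_Icc.2 ⟨h0, by omega⟩) hmr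
      rw [this, sub_self]
    · intro hh; exact absurd hr hh
  · rw [Finset.mem_range] at hr
    rw [Nat.choose_eq_zero_of_lt (by omega), Nat.cast_zero, zero_mul]
    refine Finset.sum_eq_zero fun m hm => ?_
    rw [Finset.mem_range] at hm
    have : ∑ i, x i ^ m = ∑ i, y i ^ m := by
      rcases Nat.eq_zero_or_pos m with h0 | h0
      · subst h0; simp
      · exact hs m (Finset.mem_Icc.2 ⟨h0, by omega⟩) (by omega)
    rw [this, sub_self]

theorem lower (s r n Y : ℕ) (hY : 2 * n ≤ Y)
    (Sol : Finset ((Fin s → ℤ) × (Fin s → ℤ)))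
    (hSol : ∀ q ∈ Sol, (∀ i, 1 ≤ q.1 i ∧ q.1 i ≤ n) ∧ (∀ i, 1 ≤ q.2 i ∧ q.2 i ≤ n) ∧
      ∀ j ∈ Finset.Icc 1 k, j ≠ r → ∑ i, (q.1 i) ^ j = ∑ i, (q.2 i) ^ j) :
    ((p ^ M : ℕ) : ℝ) ^ k * ((n : ℝ) * (Sol.card : ℝ)) ≤
      ∑ α : Fin k → ZMod (p ^ M), ‖fsum Y α‖ ^ (2 * s) * ‖gsum r Y (s * Y ^ r) α‖ := by
  classical
  set φ : ((Fin s → ℤ) × (Fin s → ℤ)) × ℤ → ((Fin s → ℤ) × (Fin s → ℤ)) × (ℤ × ℤ) := fun q =>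
    ((fun i => q.1.1 i + q.2, fun i => q.1.2 i + q.2), (q.2, -(∑ i, q.1.1 i ^ r - ∑ i, q.1.2 i ^ r))) with hφ
  have hinj : Function.Injective φ := by
    rintro ⟨⟨x, y⟩, h⟩ ⟨⟨x', y'⟩, h'⟩ e
    simp only [hφ, Prod.mk.injEq] at e
    obtain ⟨⟨e1, e2⟩, e3, -⟩ := e
    subst e3
    have a1 : x = x' := funext fun i => by simpa using congrFun e1 i
    have a2 : y = y' := funext fun i => by simpa using congrFun e2 i
    rw [a1, a2]
  set T := (Sol ×ˢ Finset.Icc (1 : ℤ) n).image φ with hT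
  have hc : T.card = Sol.card * n := by
    rw [hT, Finset.card_image_of_injective _ hinj, Finset.card_product]; simp
  have := main_lower (p := p) (M := M) (k := k) r Y (s * Y ^ r) s T (by
    intro q hq
    obtain ⟨⟨⟨x, y⟩, h⟩, hm, rfl⟩ := Finset.mem_image.1 hq
    rw [Finset.mem_product] at hm
    obtain ⟨m1, m2⟩ := hm
    obtain ⟨b1, b2, b3⟩ := hSol _ m1
    rw [Finset.mem_Icc] at m2
    simp only at b1 b2 b3 m1 m2
    simp only [hφ]
    have hY' : 2 * (n : ℤ) ≤ Y := by exact_mod_cast hY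
    have hpow : ∀ z : Fin s → ℤ, (∀ i, 1 ≤ z i ∧ z i ≤ n) → 0 ≤ ∑ i, z i ^ r ∧ ∑ i, z i ^ r ≤ s * (Y : ℤ) ^ r := by
      intro z hz
      refine ⟨Finset.sum_nonneg fun i _ => pow_nonneg (by have := hz i; omega) _, ?_⟩
      have : ∀ i ∈ (univ : Finset (Fin s)), z i ^ r ≤ (Y : ℤ) ^ r := fun i _ =>
        pow_le_pow_left₀ (by have := hz i; omega) (by have := hz i; omega) _
      refine (Finset.sum_le_sum this).trans ?_
      simp
    refine ⟨fun i => ?_, fun i => ?_, ?_, ?_⟩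
    · rw [Finset.mem_Icc]; have := b1 i; omega
    · rw [Finset.mem_Icc]; have := b2 i; omega
    · rw [Finset.mem_product, Finset.mem_Icc, Finset.mem_Icc]
      have c1 := hpow x b1
      have c2 := hpow y b2
      push_cast
      refine ⟨by omega, ?_, ?_⟩
      · linarith [c1.2, c2.1]
      · linarith [c1.1, c2.2]
    · funext j
      have e := shift_id s k r x y h b3 (j.1 + 1) (by omega)
      have e' := congrArg (Int.cast : ℤ → ZMod (p ^ M)) e
      simp only [Pi.add_apply, Pi.sub_apply, Finset.sum_apply, nu, be, Pi.zero_apply]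
      push_cast at e' ⊢
      rw [e']; ring)
  rw [hc] at this
  push_cast at this ⊢
  rw [mul_comm (n : ℝ)]
  exact this

end QQ

theorem holder_final {α : Type*} (S : Finset α) (f g : α → ℝ) (hf : ∀ x, 0 ≤ f x) (hg : ∀ x, 0 ≤ g x)
    (K L s κ : ℕ) (hκ : 1 ≤ κ) (hs : 1 ≤ s)
    (hsm : (s : ℝ) ≤ K * (1 - 1 / (2 * κ)) + L * (1 / (2 * κ)))
    (Q Y γ : ℝ) (hQ : 0 ≤ Q) (hY : 0 < Y)
    (hA : ∑ x ∈ S, f x ^ (2 * K) ≤ Q * Y ^ (K : ℝ))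
    (hB : ∑ x ∈ S, f x ^ (2 * L) * g x ^ (2 * κ) ≤ Q * Y ^ ((L : ℝ) + γ))
    (hG : ∑ x ∈ S, g x ^ (2 * κ) ≤ Q * Y ^ γ)
    (hP : (S.card : ℝ) ≤ Q) :
    ∑ x ∈ S, f x ^ (2 * s) * g x ≤ Q * Y ^ ((s : ℝ) + γ * (1 / (2 * κ))) := by
  have hκ0 : (1 : ℝ) ≤ κ := by exact_mod_cast hκ
  have hs0 : (1 : ℝ) ≤ s := by exact_mod_cast hs
  set l : ℝ := 1 / (2 * κ) with hl
  have hl0 : 0 ≤ l := by positivity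
  have hl1 : l ≤ 1 := by rw [hl, div_le_one (by positivity)]; linarith
  have hlk : 2 * (κ : ℝ) * l = 1 := by rw [hl]; field_simp
  set m : ℝ := K * (1 - l) + L * l with hm
  have hm0 : 0 < m := by linarith
  set θ : ℝ := s / m with hθ
  have hθ0 : 0 ≤ θ := by positivity
  have hθ1 : θ ≤ 1 := by rw [hθ, div_le_one hm0]; exact hsm
  have hθm : θ * m = s := by rw [hθ]; field_simp
  set w : Fin 4 → ℝ := ![θ * (1 - l), θ * l, (1 - θ) * l, (1 - θ) * (1 - l)] with hw
  set u : Fin 4 → α → ℝ := ![fun x => f x ^ (2 * K), fun x => f x ^ (2 * L) * g x ^ (2 * κ), fun x => g x ^ (2 * κ),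
    fun _ => 1] with hu
  set e : Fin 4 → ℝ := ![(K : ℝ), (L : ℝ) + γ, γ, 0] with he
  have w0 : 0 ≤ θ * (1 - l) := mul_nonneg hθ0 (by linarith)
  have w1 : 0 ≤ θ * l := mul_nonneg hθ0 hl0
  have w2 : 0 ≤ (1 - θ) * l := mul_nonneg (by linarith) hl0
  have w3 : 0 ≤ (1 - θ) * (1 - l) := mul_nonneg (by linarith) (by linarith)
  have hwn : ∀ i, 0 ≤ w i := by
    intro i; fin_cases i <;> simp [hw] <;> assumption
  have hun : ∀ i x, 0 ≤ u i x := by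
    intro i x
    fin_cases i
    · exact pow_nonneg (hf x) _
    · exact mul_nonneg (pow_nonneg (hf x) _) (pow_nonneg (hg x) _)
    · exact pow_nonneg (hg x) _
    · exact zero_le_one
  have hw1 : ∑ i, w i = 1 := by
    simp [hw, Fin.sum_univ_four]; ring
  have hH := holder_gen S univ w u (fun i _ => hwn i) hw1 (fun i _ x _ => hun i x)
  have hl' : ∀ x ∈ S, f x ^ (2 * s) * g x = ∏ i, u i x ^ w i := by
    intro x _
    have fx := hf x
    have gx := hg x
    rw [Fin.prod_univ_four]
    simp only [hu, hw, Matrix.cons_val]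
    rw [Real.one_rpow, mul_one, Real.mul_rpow (pow_nonneg fx _) (pow_nonneg gx _)]
    simp only [← Real.rpow_natCast, ← Real.rpow_mul fx, ← Real.rpow_mul gx]
    have a1 : f x ^ (((2 * s : ℕ) : ℝ)) = f x ^ (((2 * K : ℕ) : ℝ) * (θ * (1 - l))) * f x ^ (((2 * L : ℕ) : ℝ) * (θ * l)) := by
      rw [← Real.rpow_add_of_nonneg fx (by positivity) (by positivity)]
      congr 1
      push_cast
      rw [← hθm, hm]; ring
    have a2 : g x = g x ^ (((2 * κ : ℕ) : ℝ) * (θ * l)) * g x ^ (((2 * κ : ℕ) : ℝ) * ((1 - θ) * l)) := by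
      rw [← Real.rpow_add_of_nonneg gx (by positivity) (by positivity)]
      have : ((2 * κ : ℕ) : ℝ) * (θ * l) + ((2 * κ : ℕ) : ℝ) * ((1 - θ) * l) = 1 := by
        push_cast
        linear_combination hlk
      rw [this, Real.rpow_one]
    rw [a1]
    nth_rewrite 1 [a2]
    ring
  rw [Finset.sum_congr rfl hl']
  refine hH.trans ?_
  have hb : ∀ i, ∑ x ∈ S, u i x ≤ Q * Y ^ e i := by
    intro i
    fin_cases i
    · exact hA
    · exact hB
    · exact hG
    · simpa [hu, he] using hP
  calc ∏ i, (∑ x ∈ S, u i x) ^ w i ≤ ∏ i, (Q * Y ^ e i) ^ w i :=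
        Finset.prod_le_prod (fun i _ => Real.rpow_nonneg (Finset.sum_nonneg fun x _ => hun i x) _)
          (fun i _ => Real.rpow_le_rpow (Finset.sum_nonneg fun x _ => hun i x) (hb i) (hwn i))
    _ = ∏ i, (Q ^ w i * Y ^ (e i * w i)) := by
        refine Finset.prod_congr rfl fun i _ => ?_
        rw [Real.mul_rpow hQ (by positivity), ← Real.rpow_mul hY.le]
    _ = Q ^ (∑ i, w i) * Y ^ (∑ i, e i * w i) := by
        rw [Finset.prod_mul_distrib, ← Real.rpow_sum_of_nonneg hQ (fun i _ => hwn i), ← Real.rpow_sum_of_pos hY]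
    _ = _ := by
        rw [hw1, Real.rpow_one]
        congr 2
        rw [Fin.sum_univ_four]
        simp only [he, hw, Matrix.cons_val]
        rw [← hθm, hm]; ring

end PartQ

section PartR
open Polynomial
theorem final_count (r s k κ : ℕ) (hr : 1 ≤ r) (hrk : r < k) (hκ1 : 1 ≤ κ) (hκ2 : 2 * κ ≤ k - r + 2)
    (hs1 : 1 ≤ s) (hsm : (s : ℝ) ≤ (tri k : ℝ) * (1 - 1 / (2 * κ)) + (tri (r - 1) : ℝ) * (1 / (2 * κ)))
    (ε : ℝ) (hε : 0 < ε) : ∃ C : ℝ, 0 ≤ C ∧ ∀ n : ℕ, 1 ≤ n →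
      ∀ Sol : Finset ((Fin s → ℤ) × (Fin s → ℤ)),
      (∀ q ∈ Sol, (∀ i, 1 ≤ q.1 i ∧ q.1 i ≤ n) ∧ (∀ i, 1 ≤ q.2 i ∧ q.2 i ≤ n) ∧
        ∀ j ∈ Finset.Icc 1 k, j ≠ r → ∑ i, (q.1 i) ^ j = ∑ i, (q.2 i) ^ j) →
      (Sol.card : ℝ) ≤ C * (n : ℝ) ^ ((s : ℝ) + ((r : ℝ) - 1) * (1 - 1 / (2 * (κ : ℝ))) + ε) := by
  obtain ⟨p, hpk, hp⟩ := Nat.exists_infinite_primes (k + 1)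
  have : Fact p.Prime := ⟨hp⟩
  obtain ⟨C1, hC1, h1⟩ := mean_unscaled p k (by omega) (ε / 2) (by positivity)
  obtain ⟨C2, hC2, h2⟩ := mean_unscaled p (r - 1) (by omega) (ε / 2) (by positivity)
  obtain ⟨C3, hC3, h3⟩ := g_bound k r κ s hr hrk hκ1 hκ2 hs1 (ε / 2) (by positivity)
  -- one common constant
  set C : ℝ := C1 * C2 * C3 with hC
  set E : ℝ := (s : ℝ) + ((r : ℝ) - 1) * (1 - 1 / (2 * (κ : ℝ))) + ε with hE
  have hκ0 : (1 : ℝ) ≤ κ := by exact_mod_cast hκ1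
  have hr0 : (1 : ℝ) ≤ r := by exact_mod_cast hr
  have hl1 : 1 / (2 * (κ : ℝ)) ≤ 1 := by rw [div_le_one (by positivity)]; linarith
  have hE0 : 0 ≤ E := by
    have : 0 ≤ ((r : ℝ) - 1) * (1 - 1 / (2 * (κ : ℝ))) := mul_nonneg (by linarith) (by linarith)
    have : (0 : ℝ) ≤ s := by positivity
    linarith
  have hp0 : (0 : ℝ) < p := by exact_mod_cast hp.pos
  refine ⟨2 * p * C * (2 * p) ^ E, by positivity, ?_⟩
  intro n hn Sol hSol
  -- choice of N and M
  obtain ⟨N, hN1, hN2⟩ : ∃ N, 2 * n ≤ p ^ N ∧ p ^ N ≤ 2 * n * p := by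
    refine ⟨Nat.log p (2 * n) + 1, (Nat.lt_pow_succ_log_self hp.one_lt _).le, ?_⟩
    rw [pow_succ]
    exact Nat.mul_le_mul_right _ (Nat.pow_log_le_self p (by omega))
  set Y : ℕ := p ^ N with hY
  have hY1 : 1 ≤ Y := Nat.one_le_pow _ _ hp.pos
  have hYr : (1 : ℝ) ≤ Y := by exact_mod_cast hY1
  have hYpos : (0 : ℝ) < Y := by linarith
  set W := 2 * κ * (2 ^ k * ((s * Y ^ r) * Y ^ k)) with hW
  set M := k * N + W with hM
  have hWM : W < p ^ M := lt_of_lt_of_le (Nat.lt_pow_self hp.one_lt) (Nat.pow_le_pow_right hp.pos (by omega))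
  set P : ℝ := ((p ^ M : ℕ) : ℝ) ^ k with hP
  have hPpos : 0 < P := by
    have : 0 < p ^ M := Nat.pow_pos hp.pos
    positivity
  have hPM : (0 : ℝ) < ((p ^ M : ℕ) : ℝ) := by
    have : 0 < p ^ M := Nat.pow_pos hp.pos
    positivity
  set c : ℝ := (Y : ℝ) ^ (ε / 2) with hc
  have hc1 : 1 ≤ c := Real.one_le_rpow hYr (by positivity)
  set γ : ℝ := 1 + (r : ℝ) * (2 * (κ : ℝ) - 1) with hγ
  have hC1C : C1 ≤ C := by
    rw [hC, mul_assoc]; exact le_mul_of_one_le_right (by linarith) (one_le_mul_of_one_le_of_one_le hC2 hC3)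
  have hC3C : C3 ≤ C := by
    rw [hC]; exact le_mul_of_one_le_left (by linarith) (one_le_mul_of_one_le_of_one_le hC1 hC2)
  have hC23 : C2 * C3 ≤ C := by
    rw [hC, mul_assoc]; exact le_mul_of_one_le_left (by positivity) hC1
  have hCC : 1 ≤ C := hC1.trans hC1C
  have hcc : c ≤ c ^ 2 := by nlinarith
  set Q : ℝ := P * (C * c ^ 2) with hQ
  have hQ0 : 0 ≤ Q := by positivity
  have hA : ∑ α : Fin k → ZMod (p ^ M), ‖fsum Y α‖ ^ (2 * tri k) ≤ Q * (Y : ℝ) ^ ((tri k : ℕ) : ℝ) := by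
    have := h1 N M (by omega) (fun _ => 1) (by simp)
    simp only [one_mul] at this
    refine le_trans this ?_
    rw [Real.rpow_natCast, hQ, ← hP, ← hY, ← hc]
    have : C1 * c ≤ C * c ^ 2 := mul_le_mul hC1C hcc (by positivity) (by positivity)
    calc (C1 * c) * (P * (Y : ℝ) ^ tri k) ≤ (C * c ^ 2) * (P * (Y : ℝ) ^ tri k) := by gcongr
      _ = _ := by ring
  have hG0 : ∑ α : Fin k → ZMod (p ^ M), ‖gsum r Y (s * Y ^ r) α‖ ^ (2 * κ) ≤ P * (C3 * (c * (Y : ℝ) ^ γ)) := by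
    have := h3 p M Y hY1 hWM
    rw [Real.rpow_add hYpos, ← hc, ← hP] at this
    rw [mul_comm c]; exact this
  have hG : ∑ α : Fin k → ZMod (p ^ M), ‖gsum r Y (s * Y ^ r) α‖ ^ (2 * κ) ≤ Q * (Y : ℝ) ^ γ := by
    refine hG0.trans ?_
    have : C3 * c ≤ C * c ^ 2 := mul_le_mul hC3C hcc (by positivity) (by positivity)
    calc P * (C3 * (c * (Y : ℝ) ^ γ)) = (C3 * c) * (P * (Y : ℝ) ^ γ) := by ring
      _ ≤ (C * c ^ 2) * (P * (Y : ℝ) ^ γ) := by gcongr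
      _ = _ := by rw [hQ]; ring
  have hB : ∑ α : Fin k → ZMod (p ^ M), ‖fsum Y α‖ ^ (2 * tri (r - 1)) * ‖gsum r Y (s * Y ^ r) α‖ ^ (2 * κ) ≤
      Q * (Y : ℝ) ^ (((tri (r - 1) : ℕ) : ℝ) + γ) := by
    have hmix := mixed (p := p) (M := M) (k := k) r Y (s * Y ^ r) (2 * tri (r - 1)) (2 * κ) hr hrk.le
      (B := C2 * c * (Y : ℝ) ^ tri (r - 1)) (by
        intro a ha
        refine (h2 N M ?_ a ha).trans (le_of_eq ?_)
        · calc (r - 1) * N ≤ k * N := Nat.mul_le_mul_right _ (by omega)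
            _ ≤ M := by omega
        · rw [← hY, ← hc]; ring)
    refine hmix.trans ?_
    rw [Real.rpow_add hYpos, Real.rpow_natCast]
    calc _ ≤ C2 * c * (Y : ℝ) ^ tri (r - 1) * (P * (C3 * (c * (Y : ℝ) ^ γ))) := by gcongr
      _ = (C2 * C3) * (P * c ^ 2 * ((Y : ℝ) ^ tri (r - 1) * (Y : ℝ) ^ γ)) := by ring
      _ ≤ C * (P * c ^ 2 * ((Y : ℝ) ^ tri (r - 1) * (Y : ℝ) ^ γ)) := by gcongr
      _ = _ := by rw [hQ]; ring
  have hcard : (((univ : Finset (Fin k → ZMod (p ^ M))).card : ℕ) : ℝ) ≤ Q := by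
    have : (((univ : Finset (Fin k → ZMod (p ^ M))).card : ℕ) : ℝ) = P := by
      rw [Finset.card_univ, Fintype.card_fun, ZMod.card, Fintype.card_fin, hP]; push_cast; rfl
    rw [this, hQ]
    exact le_mul_of_one_le_right hPpos.le (one_le_mul_of_one_le_of_one_le hCC (hc1.trans hcc))
  have hfin := holder_final univ (fun α : Fin k → ZMod (p ^ M) => ‖fsum Y α‖) (fun α => ‖gsum r Y (s * Y ^ r) α‖)
    (fun _ => norm_nonneg _) (fun _ => norm_nonneg _) (tri k) (tri (r - 1)) s κ hκ1 hs1 hsm Q Y γ hQ0 hYpos hA hB hG hcard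
  have hlow := lower (p := p) (M := M) (k := k) s r n Y hN1 Sol hSol
  have hz := hlow.trans hfin
  rw [← hP, hQ, mul_assoc] at hz
  have hz2 := le_of_mul_le_mul_left hz hPpos
  have hexp : C * c ^ 2 * (Y : ℝ) ^ ((s : ℝ) + γ * (1 / (2 * κ))) = C * (Y * (Y : ℝ) ^ E) := by
    rw [mul_assoc, hc, ← Real.rpow_natCast, ← Real.rpow_mul hYpos.le, ← Real.rpow_add hYpos,
      ← Real.rpow_one_add' hYpos.le (by linarith)]
    congr 2
    rw [hE, hγ]
    field_simp
    push_cast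
    ring
  rw [hexp] at hz2
  have hn0 : (0 : ℝ) < n := by exact_mod_cast hn
  have hYn : (Y : ℝ) ≤ 2 * p * n := by
    have : (Y : ℝ) ≤ 2 * n * p := by exact_mod_cast hN2
    linarith
  have hYE : (Y : ℝ) ^ E ≤ (2 * p) ^ E * (n : ℝ) ^ E := by
    rw [← Real.mul_rpow (by positivity) (by positivity)]
    exact Real.rpow_le_rpow hYpos.le hYn hE0
  refine le_of_mul_le_mul_left ?_ hn0
  calc (n : ℝ) * (Sol.card : ℝ) ≤ C * (Y * (Y : ℝ) ^ E) := hz2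
    _ ≤ C * ((2 * p * n) * ((2 * p) ^ E * (n : ℝ) ^ E)) := by gcongr
    _ = _ := by ring

end PartR

theorem bound_missing_slice_degree_r
    (r s k κ : ℕ) (hr : 1 ≤ r) (hrk : r < k)
    (hκ1 : 1 ≤ κ) (hκ2 : (κ : ℝ) ≤ ((k : ℝ) - (r : ℝ) + 2) / 2)
    (hs1 : 1 ≤ s)
    (hs2 : (s : ℝ) ≤ (k : ℝ) * ((k : ℝ) + 1) / 2 -
      ((k : ℝ) * ((k : ℝ) + 1) - (r : ℝ) * ((r : ℝ) - 1)) / (4 * (κ : ℝ)))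
    (ε : ℝ) (hε : 0 < ε) :
    ∃ C X₀ : ℝ, ∀ X : ℝ, X₀ ≤ X →
      (vinogradovSliceCount s k r X : ℝ) ≤
        C * X ^ ((s : ℝ) + ((r : ℝ) - 1) * (1 - 1 / (2 * (κ : ℝ))) + ε) := by
  have hκ0 : (1 : ℝ) ≤ κ := by exact_mod_cast hκ1
  have hκ3 : 2 * κ ≤ k - r + 2 := by
    have : 2 * (κ : ℝ) + r ≤ k + 2 := by linarith
    have : 2 * κ + r ≤ k + 2 := by exact_mod_cast this
    omega
  have hsm : (s : ℝ) ≤ (tri k : ℝ) * (1 - 1 / (2 * κ)) + (tri (r - 1) : ℝ) * (1 / (2 * κ)) := by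
    have t1 : 2 * (tri k : ℝ) = k * (k + 1) := by exact_mod_cast two_tri k
    have t2 : 2 * (tri (r - 1) : ℝ) = ((r : ℝ) - 1) * r := by
      have h := two_tri (r - 1)
      have e : r - 1 + 1 = r := by omega
      rw [e] at h
      have h' : 2 * (tri (r - 1) : ℝ) = ((r - 1 : ℕ) : ℝ) * r := by exact_mod_cast h
      rw [h', Nat.cast_sub hr, Nat.cast_one]
    have t1' : (tri k : ℝ) = k * (k + 1) / 2 := by linarith
    have t2' : (tri (r - 1) : ℝ) = ((r : ℝ) - 1) * r / 2 := by linarith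
    refine hs2.trans (le_of_eq ?_)
    rw [t1', t2']
    field_simp
    ring
  obtain ⟨C, hC, h⟩ := final_count r s k κ hr hrk hκ1 hκ3 hs1 hsm ε hε
  refine ⟨C, 1, fun X hX => ?_⟩
  have hn : 1 ≤ ⌊X⌋₊ := Nat.le_floor (by simpa using hX)
  have hnX : ((⌊X⌋₊ : ℕ) : ℝ) ≤ X := Nat.floor_le (by linarith)
  have hle : ∀ z : ℤ, 1 ≤ z → (z : ℝ) ≤ X → z ≤ ((⌊X⌋₊ : ℕ) : ℤ) := by
    intro z hz hzX
    lift z to ℕ using by omega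
    exact_mod_cast Nat.le_floor (by exact_mod_cast hzX)
  unfold vinogradovSliceCount
  set A : Set ((Fin s → ℤ) × (Fin s → ℤ)) := {p : (Fin s → ℤ) × (Fin s → ℤ) |
      (∀ i, 1 ≤ p.1 i ∧ (p.1 i : ℝ) ≤ X) ∧
      (∀ i, 1 ≤ p.2 i ∧ (p.2 i : ℝ) ≤ X) ∧
      ∀ j ∈ Finset.Icc 1 k, j ≠ r →
        ∑ i, (p.1 i) ^ j = ∑ i, (p.2 i) ^ j} with hA
  have hfin : A.Finite := by
    refine Set.Finite.subset (Finset.finite_toSet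
      (Fintype.piFinset (fun _ : Fin s => Finset.Icc (1 : ℤ) ⌊X⌋₊) ×ˢ
        Fintype.piFinset (fun _ : Fin s => Finset.Icc (1 : ℤ) ⌊X⌋₊))) ?_
    rintro q ⟨h1, h2, -⟩
    rw [Finset.mem_coe, Finset.mem_product, Fintype.mem_piFinset, Fintype.mem_piFinset]
    exact ⟨fun i => Finset.mem_Icc.2 ⟨(h1 i).1, hle _ (h1 i).1 (h1 i).2⟩,
      fun i => Finset.mem_Icc.2 ⟨(h2 i).1, hle _ (h2 i).1 (h2 i).2⟩⟩
  rw [Set.ncard_eq_toFinset_card A hfin]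
  refine (h ⌊X⌋₊ hn hfin.toFinset ?_).trans ?_
  · intro q hq
    rw [Set.Finite.mem_toFinset] at hq
    obtain ⟨h1, h2, h3⟩ := hq
    exact ⟨fun i => ⟨(h1 i).1, hle _ (h1 i).1 (h1 i).2⟩, fun i => ⟨(h2 i).1, hle _ (h2 i).1 (h2 i).2⟩, h3⟩
  · refine mul_le_mul_of_nonneg_left (Real.rpow_le_rpow (by positivity) hnX ?_) hC
    have hr0 : (1 : ℝ) ≤ r := by exact_mod_cast hr
    have hl1 : 1 / (2 * (κ : ℝ)) ≤ 1 := by rw [div_le_one (by positivity)]; linarith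
    have : 0 ≤ ((r : ℝ) - 1) * (1 - 1 / (2 * (κ : ℝ))) := mul_nonneg (by linarith) (by linarith)
    have : (0 : ℝ) ≤ s := by positivity
    linarith
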